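/- (Theorem 5.1: forward, backward and elliptic Harnack inequalities at initial times.) Let d ≥ 3 and 0 < m < 1, and let p satisfy p = 1 if m > m_c and p > p_c if m ≤ m_c, where m_c = (d−2)/d, p_c = d(1−m)/2 and ϑ_p = 1/(2p − d(1−m)). There exist positive constants c₀′ and C₆ depending only on m, d and p such that the following holds. Let u be a classical solution of the FDE ∂ₜu = Δ(u^m) on (0,T) × Ω taking nonnegative initial data u₀ ∈ L^p_loc(Ω) and having finite extinction time T, and let x₀ ∈ Ω, R > 0 with dist(x₀, ∂Ω) ≥ 6R and ∫_{B_R(x₀)} u₀ > 0. Set t_* = c₀′ R^{2−d(1−m)} ‖u₀‖_{L¹(B_R(x₀))}^{1−m}. Then for every t₀ ∈ (0, t_*] and every 0 ≤ θ ≤ min{t_* − t₀, t₀/2}, both inf over x ∈ B_R(x₀) of u(t₀+θ, x) and inf over x ∈ B_R(x₀) of u(t₀−θ, x) are at least H · u(t₀, x₀), where H = C₆ R^{(2−d)/m} ( ‖u₀‖_{L¹(B_R(x₀))} T^{−1/(1−m)} )^{1/m} ( ‖u₀‖_{L^p(B_R(x₀))}^{2pϑ_p} t₀^{−2pϑ_p/(1−m)}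 + R^{−2/(1−m)} )^{−1}. -/

import Mathlib

open MeasureTheory Metric Set Real

/-- The spatial Laplacian of `f : ℝ^d → ℝ` at a point, as the sum of second
coordinate derivatives. -/
noncomputable def spaceLap {d : ℕ} (f : EuclideanSpace ℝ (Fin d) → ℝ)
    (x : EuclideanSpace ℝ (Fin d)) : ℝ :=
  ∑ i : Fin d, fderiv ℝ (fun y => fderiv ℝ f y (EuclideanSpace.single i 1)) x
    (EuclideanSpace.single i 1)

/-- `u` is a classical solution of the fast diffusion equation `∂ₜ u = Δ(u^m)`
on the space-time set `Q`: it is positive and smooth on `Q` and satisfies the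
equation pointwise on `Q`. -/
def IsFDESol {d : ℕ} (m : ℝ) (Q : Set (ℝ × EuclideanSpace ℝ (Fin d)))
    (u : ℝ → EuclideanSpace ℝ (Fin d) → ℝ) : Prop :=
  (∀ p ∈ Q, 0 < u p.1 p.2) ∧
  ContDiffOn ℝ (⊤ : ℕ∞) (fun p : ℝ × EuclideanSpace ℝ (Fin d) => u p.1 p.2) Q ∧
  ∀ p ∈ Q, deriv (fun s => u s p.2) p.1 = spaceLap (fun y => u p.1 y ^ m) p.2

/-- `u` (defined for `0 < t < T` on `Ω`) takes the initial data `u₀`: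
it extends continuously to `{0} × Ω` with value `u₀` there. -/
def TakesInit {d : ℕ} (T : ℝ) (Ω : Set (EuclideanSpace ℝ (Fin d)))
    (u : ℝ → EuclideanSpace ℝ (Fin d) → ℝ) (u₀ : EuclideanSpace ℝ (Fin d) → ℝ) : Prop :=
  ContinuousOn (fun p : ℝ × EuclideanSpace ℝ (Fin d) => u p.1 p.2) (Ico 0 T ×ˢ Ω) ∧
  ∀ x ∈ Ω, u 0 x = u₀ x

/-- `u` has finite extinction time `T` on `Ω`: it extends continuously to
`{T} × Ω` with value `0` there, while `u(t,·)` is not identically zero for `0 < t < T`. -/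
def ExtinctAt {d : ℕ} (T : ℝ) (Ω : Set (EuclideanSpace ℝ (Fin d)))
    (u : ℝ → EuclideanSpace ℝ (Fin d) → ℝ) : Prop :=
  ContinuousOn (fun p : ℝ × EuclideanSpace ℝ (Fin d) => u p.1 p.2) (Ioc 0 T ×ˢ Ω) ∧
  (∀ x ∈ Ω, u T x = 0) ∧
  ∀ t ∈ Ioo 0 T, ∃ x ∈ Ω, u t x ≠ 0

/-!
The equation `∂ₜ u = Δ(u ^ m)` is invariant under `u ↦ a ^ (-κ) u(a t, x)` with `κ = 1 / (1 - m)`,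
and by scaling in space everything may be normalised to the unit ball. The Harnack inequalities
follow by dividing a lower bound on a ball at time `t` by an upper bound at its centre at time `t₀`.

Lower bound. The infimum `w` of the rescaled solutions over `a ≤ 1` is a supersolution with
`w ≤ u`, and its mass in a ball persists up to a time comparable with `t_*`. The potential
`∫ w ^ m` over `(t, T)` satisfies `-Δ ∫ w ^ m ≥ w(t)`, because `w` vanishes at the extinction time
`T`, so the mean value inequality bounds it from below by the mass. Taking `a = t / s` gives
`w(s) ≤ (s / t) ^ κ u(t)` for `s ≥ t`, which bounds it from above by a multiple of `u(t, x) ^ m`.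

Upper bound. The local `L^p` norms of `u` are controlled by those of the initial data. Where `u` is
at most twice its value at a point, a maximum principle for `u` localised in space minus a multiple
of `∫ u ^ m` bounds that value by a time integral of `u ^ m`. The Laplacian of this integral is
bounded below, so the integral is bounded by its average, that is, by the `L^p` norm. The doubling
hypothesis holds at a maximum point of `u` weighted by powers of the time and of the distance to the
boundary.

Differential inequalities are expressed by finite differences throughout, since these pass to the
infimum of a family of solutions.
-/

open Filter Topology

/-- The Euclidean space `ℝ^d`. -/
abbrev Space (d : ℕ) : Type := EuclideanSpace ℝ (Fin d)

/-- The `i`-th standard basis vector of `ℝ^d`. -/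
noncomputable abbrev unitVec {d : ℕ} (i : Fin d) : Space d := EuclideanSpace.single i 1

/-- The centred second difference of `f` at `x` with step `h`, summed over the coordinate
directions. It is not divided by `h ^ 2`, so that it approximates `h ^ 2 * spaceLap f x`. -/
noncomputable def discreteLap {d : ℕ} (h : ℝ) (f : Space d → ℝ) (x : Space d) : ℝ :=
  ∑ i : Fin d, (f (x + h • unitVec i) + f (x - h • unitVec i) - 2 * f x)

/-! ### Finite differences -/

section FiniteDifferences

variable {E : Type*} [NormedAddCommGroup E] [NormedSpace ℝ E] {f : E → ℝ} {Q C : Set E}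

lemma eventually_forall_isCompact_add_smul_mem (hC : IsCompact C) (hQ : IsOpen Q) (hCQ : C ⊆ Q)
    (v : E) : ∀ᶠ h : ℝ in 𝓝 0, ∀ p ∈ C, p + h • v ∈ Q := by
  obtain ⟨δ, hδ, hδQ⟩ := hC.exists_thickening_subset_open hQ hCQ
  have hsmall : ∀ᶠ h : ℝ in 𝓝 0, ‖h • v‖ < δ :=
    (continuous_id.smul continuous_const).norm.tendsto' 0 0 (by simp) |>.eventually_lt_const hδ
  filter_upwards [hsmall] with h hh p hp
  exact hδQ (mem_thickening_iff.2 ⟨p, hp, by simpa⟩)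

lemma eventually_forall_isCompact_abs_sub_le (hC : IsCompact C) (hQ : IsOpen Q) (hCQ : C ⊆ Q)
    (hf : ContinuousOn f Q) (v : E) {ε : ℝ} (hε : 0 < ε) :
    ∀ᶠ h : ℝ in 𝓝 0, ∀ p ∈ C, |f (p + h • v) - f p| ≤ ε := by
  have huniform := hC.uniformContinuousAt_of_continuousAt f
    (fun a ha => hf.continuousAt (hQ.mem_nhds (hCQ ha))) (dist_mem_uniformity hε)
  obtain ⟨δ, hδ, hδf⟩ := mem_uniformity_dist.1 huniform
  have hsmall : ∀ᶠ h : ℝ in 𝓝 0, ‖h • v‖ < δ :=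
    (continuous_id.smul continuous_const).norm.tendsto' 0 0 (by simp) |>.eventually_lt_const hδ
  filter_upwards [hsmall] with h hh p hp
  have hdist : dist (f p) (f (p + h • v)) < ε := hδf (by simpa) hp
  rw [dist_comm, Real.dist_eq] at hdist
  exact hdist.le

lemma hasDerivAt_add_smul {p v : E} {θ : ℝ} (hf : DifferentiableAt ℝ f (p + θ • v)) :
    HasDerivAt (fun s : ℝ => f (p + s • v)) (fderiv ℝ f (p + θ • v) v) θ := by
  have hline : HasDerivAt (fun s : ℝ => p + s • v) v θ := by
    simpa using ((hasDerivAt_id θ).smul_const v).const_add p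
  exact hf.hasFDerivAt.comp_hasDerivAt θ hline

lemma hasDerivAt_secondDifference {p v : E} {θ : ℝ} (hf : DifferentiableAt ℝ f (p + θ • v))
    (hf' : DifferentiableAt ℝ f (p + θ • -v)) (A : ℝ) :
    HasDerivAt (fun s : ℝ => f (p + s • v) + f (p + s • -v) - 2 * f p - s ^ 2 * A)
      (fderiv ℝ f (p + θ • v) v - fderiv ℝ f (p + θ • -v) v - 2 * θ * A) θ := by
  have hsum := (hasDerivAt_add_smul hf).add (hasDerivAt_add_smul hf')
  refine ((hsum.sub_const (2 * f p)).sub ((hasDerivAt_pow 2 θ).mul_const A)).congr_deriv ?_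
  simp [sub_eq_add_neg]

lemma abs_image_sub_le_of_abs_deriv_le {g g' : ℝ → ℝ} {h B : ℝ} (hh : 0 ≤ h)
    (hg : ∀ s ∈ Icc 0 h, HasDerivAt g (g' s) s) (hB : ∀ s ∈ Icc 0 h, |g' s| ≤ B) :
    |g h - g 0| ≤ B * h := by
  simpa using norm_image_sub_le_of_norm_deriv_le_segment'
    (fun s hs => (hg s hs).hasDerivWithinAt) (fun s hs => hB s (Ico_subset_Icc_self hs))
    h (right_mem_Icc.2 hh)

lemma eventually_forall_Icc_of_eventually {P : ℝ → Prop} (hP : ∀ᶠ h in 𝓝 0, P h) :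
    ∀ᶠ h in 𝓝[>] (0 : ℝ), ∀ s ∈ Icc 0 h, P s := by
  obtain ⟨δ, hδ, hball⟩ := Metric.eventually_nhds_iff_ball.1 hP
  filter_upwards [Ioo_mem_nhdsGT hδ] with h hh s hs
  exact hball s (by simpa [abs_of_nonneg hs.1] using hs.2.trans_lt hh.2)

lemma differentiableAt_of_contDiffOn {n : WithTop ℕ∞} (hn : n ≠ 0) (hQ : IsOpen Q)
    (hf : ContDiffOn ℝ n f Q) {p : E} (hp : p ∈ Q) : DifferentiableAt ℝ f p :=
  (hf.contDiffAt (hQ.mem_nhds hp)).differentiableAt hn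

lemma contDiffOn_fderiv_apply {n k : WithTop ℕ∞} (hk : k + 1 ≤ n) (hQ : IsOpen Q)
    (hf : ContDiffOn ℝ n f Q) (v : E) : ContDiffOn ℝ k (fun q => fderiv ℝ f q v) Q :=
  (hf.fderiv_of_isOpen hQ hk).clm_apply contDiffOn_const

lemma eventually_forall_isCompact_abs_difference_sub_le (hC : IsCompact C) (hQ : IsOpen Q)
    (hCQ : C ⊆ Q) (hf : ContDiffOn ℝ 1 f Q) (v : E) {ε : ℝ} (hε : 0 < ε) :
    ∀ᶠ h in 𝓝[>] (0 : ℝ), ∀ p ∈ C, |f (p + h • v) - f p - h * fderiv ℝ f p v| ≤ ε * h := by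
  have hderiv : ContinuousOn (fun q => fderiv ℝ f q v) Q :=
    (contDiffOn_fderiv_apply (k := 0) (by simp) hQ hf v).continuousOn
  filter_upwards [self_mem_nhdsWithin,
    eventually_forall_Icc_of_eventually (eventually_forall_isCompact_add_smul_mem hC hQ hCQ v),
    eventually_forall_Icc_of_eventually
      (eventually_forall_isCompact_abs_sub_le hC hQ hCQ hderiv v hε)]
    with h hh hmem hclose p hp
  have hg : ∀ s ∈ Icc 0 h, HasDerivAt (fun s : ℝ => f (p + s • v) - f p - s * fderiv ℝ f p v)
      (fderiv ℝ f (p + s • v) v - fderiv ℝ f p v) s := fun s hs => by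
    have hline := hasDerivAt_add_smul
      (differentiableAt_of_contDiffOn one_ne_zero hQ hf (hmem s hs p hp))
    exact ((hline.sub_const (f p)).sub ((hasDerivAt_id s).mul_const (fderiv ℝ f p v))).congr_deriv
      (by simp)
  simpa using abs_image_sub_le_of_abs_deriv_le (le_of_lt hh) hg (fun s hs => hclose s hs p hp)

lemma eventually_forall_isCompact_abs_secondDifference_sub_le (hC : IsCompact C) (hQ : IsOpen Q)
    (hCQ : C ⊆ Q) (hf : ContDiffOn ℝ 2 f Q) (v : E) {ε : ℝ} (hε : 0 < ε) :
    ∀ᶠ h in 𝓝[>] (0 : ℝ), ∀ p ∈ C,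
      |f (p + h • v) + f (p - h • v) - 2 * f p
        - h ^ 2 * fderiv ℝ (fun q => fderiv ℝ f q v) p v| ≤ ε * h ^ 2 := by
  have hDf : ContDiffOn ℝ 1 (fun q => fderiv ℝ f q v) Q :=
    contDiffOn_fderiv_apply (by norm_num) hQ hf v
  have hstep : ∀ w : E, ∀ᶠ h in 𝓝 (0 : ℝ), 0 < h → ∀ p ∈ C,
      |fderiv ℝ f (p + h • w) v - fderiv ℝ f p v
        - h * fderiv ℝ (fun q => fderiv ℝ f q v) p w| ≤ ε / 2 * h := fun w =>
    eventually_nhdsWithin_iff.1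
      (eventually_forall_isCompact_abs_difference_sub_le hC hQ hCQ hDf w (half_pos hε))
  filter_upwards [self_mem_nhdsWithin,
    eventually_forall_Icc_of_eventually (eventually_forall_isCompact_add_smul_mem hC hQ hCQ v),
    eventually_forall_Icc_of_eventually (eventually_forall_isCompact_add_smul_mem hC hQ hCQ (-v)),
    eventually_forall_Icc_of_eventually (hstep v),
    eventually_forall_Icc_of_eventually (hstep (-v))] with h hh hmem hmem' hpos hneg p hp
  have hdiff := fun q (hq : q ∈ Q) => differentiableAt_of_contDiffOn two_ne_zero hQ hf hq
  set A := fderiv ℝ (fun q => fderiv ℝ f q v) p v with hA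
  have hg : ∀ s ∈ Icc 0 h, HasDerivAt
      (fun s : ℝ => f (p + s • v) + f (p + s • -v) - 2 * f p - s ^ 2 * A)
      (fderiv ℝ f (p + s • v) v - fderiv ℝ f (p + s • -v) v - 2 * s * A) s := fun s hs =>
    hasDerivAt_secondDifference (hdiff _ (hmem s hs p hp)) (hdiff _ (hmem' s hs p hp)) A
  have hbound : ∀ s ∈ Icc 0 h,
      |fderiv ℝ f (p + s • v) v - fderiv ℝ f (p + s • -v) v - 2 * s * A| ≤ ε * h := by
    intro s hs
    rcases hs.1.eq_or_lt with rfl | hs0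
    · simpa using mul_nonneg hε.le (le_of_lt hh)
    · have h₁ := abs_le.1 (hpos s hs hs0 p hp)
      have h₂ := abs_le.1 (hneg s hs hs0 p hp)
      rw [map_neg, ← hA] at h₂
      have hsε := mul_le_mul_of_nonneg_left hs.2 hε.le
      exact abs_le.2 ⟨by linarith [h₁.1, h₂.2], by linarith [h₁.2, h₂.1]⟩
  have := abs_image_sub_le_of_abs_deriv_le (le_of_lt hh) hg hbound
  simp only [zero_smul, add_zero, sub_zero, smul_neg, ← sub_eq_add_neg] at this
  convert this using 1
  · congr 1; ring
  · ring

end FiniteDifferences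

section SpaceTime

variable {d : ℕ} {F : ℝ → Space d → ℝ} {Q C : Set (ℝ × Space d)}

lemma hasFDerivAt_spaceSlice {G : ℝ × Space d → ℝ} {t : ℝ} {x : Space d}
    (hG : DifferentiableAt ℝ G (t, x)) :
    HasFDerivAt (fun y => G (t, y))
      ((fderiv ℝ G (t, x)).comp (ContinuousLinearMap.inr ℝ ℝ (Space d))) x :=
  hG.hasFDerivAt.comp x (hasFDerivAt_prodMk_right t x)

lemma hasDerivAt_timeSlice {G : ℝ × Space d → ℝ} {t : ℝ} {x : Space d}
    (hG : DifferentiableAt ℝ G (t, x)) :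
    HasDerivAt (fun s => G (s, x)) (fderiv ℝ G (t, x) (1, 0)) t :=
  hG.hasFDerivAt.comp_hasDerivAt t ((hasDerivAt_id t).prodMk (hasDerivAt_const t x))

lemma spaceLap_eq_sum_fderiv (hQ : IsOpen Q)
    (hF : ContDiffOn ℝ 2 (fun p : ℝ × Space d => F p.1 p.2) Q) {p : ℝ × Space d} (hp : p ∈ Q) :
    spaceLap (F p.1) p.2 = ∑ i : Fin d,
      fderiv ℝ (fun q => fderiv ℝ (fun p : ℝ × Space d => F p.1 p.2) q (0, unitVec i)) p
        (0, unitVec i) := by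
  refine Finset.sum_congr rfl fun i _ => ?_
  have hslice : ∀ᶠ y in 𝓝 p.2, (p.1, y) ∈ Q :=
    (Continuous.prodMk_right p.1).continuousAt.eventually (hQ.mem_nhds hp)
  have hfirst : (fun y => fderiv ℝ (F p.1) y (unitVec i)) =ᶠ[𝓝 p.2]
      fun y => fderiv ℝ (fun p : ℝ × Space d => F p.1 p.2) (p.1, y) (0, unitVec i) := by
    filter_upwards [hslice] with y hy
    have := (hasFDerivAt_spaceSlice (differentiableAt_of_contDiffOn two_ne_zero hQ hF hy)).fderiv
    simpa using congrArg (fun L : Space d →L[ℝ] ℝ => L (unitVec i)) this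
  have hsecond := hasFDerivAt_spaceSlice (t := p.1) (x := p.2) (differentiableAt_of_contDiffOn
    one_ne_zero hQ (contDiffOn_fderiv_apply (k := 1) (by norm_num) hQ hF (0, unitVec i)) hp)
  rw [hfirst.fderiv_eq, hsecond.fderiv]
  simp

lemma eventually_forall_isCompact_abs_discreteLap_sub_le (hC : IsCompact C) (hQ : IsOpen Q)
    (hCQ : C ⊆ Q) (hF : ContDiffOn ℝ 2 (fun p : ℝ × Space d => F p.1 p.2) Q) {ε : ℝ}
    (hε : 0 < ε) :
    ∀ᶠ h in 𝓝[>] (0 : ℝ), ∀ p ∈ C,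
      |discreteLap h (F p.1) p.2 - h ^ 2 * spaceLap (F p.1) p.2| ≤ ε * h ^ 2 := by
  have hcoord := eventually_all.2 fun i : Fin d =>
    eventually_forall_isCompact_abs_secondDifference_sub_le hC hQ hCQ hF (0, unitVec i)
      (ε := ε / (d + 1)) (by positivity)
  filter_upwards [hcoord] with h hh p hp
  rw [spaceLap_eq_sum_fderiv hQ hF (hCQ hp), discreteLap, Finset.mul_sum,
    ← Finset.sum_sub_distrib]
  calc _ ≤ ∑ _i : Fin d, ε / (d + 1) * h ^ 2 :=
        (Finset.abs_sum_le_sum_abs _ _).trans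
          (Finset.sum_le_sum fun i _ => by simpa using hh i p hp)
    _ = d / (d + 1) * (ε * h ^ 2) := by
        rw [Finset.sum_const, Finset.card_univ, Fintype.card_fin, nsmul_eq_mul]; ring
    _ ≤ ε * h ^ 2 := mul_le_of_le_one_left (by positivity)
        ((div_le_one (by positivity)).2 (by linarith))

lemma eventually_forall_isCompact_abs_timeDifference_sub_le (hC : IsCompact C) (hQ : IsOpen Q)
    (hCQ : C ⊆ Q) (hF : ContDiffOn ℝ 1 (fun p : ℝ × Space d => F p.1 p.2) Q) {ε : ℝ}
    (hε : 0 < ε) :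
    ∀ᶠ h in 𝓝[>] (0 : ℝ), ∀ p ∈ C,
      |F p.1 p.2 - F (p.1 - h) p.2 - h * deriv (fun s => F s p.2) p.1| ≤ ε * h := by
  filter_upwards [eventually_forall_isCompact_abs_difference_sub_le hC hQ hCQ hF (-1, 0) hε]
    with h hh p hp
  have hdt := (hasDerivAt_timeSlice (t := p.1) (x := p.2)
    (differentiableAt_of_contDiffOn one_ne_zero hQ hF (hCQ hp))).deriv
  have hneg : ((-1, 0) : ℝ × Space d) = -(1, 0) := by simp
  have := hh p hp
  rw [hneg, map_neg] at this
  rw [hdt, ← abs_neg]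
  convert this using 2
  simp [sub_eq_add_neg]
  ring

end SpaceTime

/-! ### Radial cutoffs -/

lemma hasDerivAt_max_zero_pow (n : ℕ) (x : ℝ) :
    HasDerivAt (fun x : ℝ => max 0 x ^ (n + 2)) ((n + 2 : ℝ) * max 0 x ^ (n + 1)) x := by
  have hne : ∀ y : ℝ, y ≠ 0 →
      HasDerivAt (fun x : ℝ => max 0 x ^ (n + 2)) ((n + 2 : ℝ) * max 0 y ^ (n + 1)) y := by
    intro y hy
    rcases lt_or_gt_of_ne hy with hneg | hpos
    · have heq : (fun x : ℝ => max 0 x ^ (n + 2)) =ᶠ[𝓝 y] fun _ => 0 := by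
        filter_upwards [Iio_mem_nhds hneg] with z hz
        simp [max_eq_left (le_of_lt (mem_Iio.1 hz))]
      simpa [max_eq_left hneg.le] using (hasDerivAt_const y (0 : ℝ)).congr_of_eventuallyEq heq
    · have heq : (fun x : ℝ => max 0 x ^ (n + 2)) =ᶠ[𝓝 y] fun x => x ^ (n + 2) := by
        filter_upwards [Ioi_mem_nhds hpos] with z hz
        simp [max_eq_right (le_of_lt (mem_Ioi.1 hz))]
      simpa [max_eq_right hpos.le] using (hasDerivAt_pow (n + 2) y).congr_of_eventuallyEq heq
  rcases eq_or_ne x 0 with rfl | hx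
  · exact hasDerivAt_of_hasDerivAt_of_ne (g := fun x => (n + 2 : ℝ) * max 0 x ^ (n + 1))
      hne (by fun_prop) (by fun_prop)
  · exact hne x hx

lemma contDiff_max_zero_pow (k n : ℕ) : ContDiff ℝ n (fun x : ℝ => max 0 x ^ (k + n + 1)) := by
  induction n with
  | zero => exact contDiff_zero.2 (by fun_prop)
  | succ n ih =>
    have hderiv : deriv (fun x : ℝ => max 0 x ^ (k + (n + 1) + 1)) =
        fun x => ((k + n : ℕ) + 2 : ℝ) * max 0 x ^ (k + n + 1) :=
      funext fun x => (hasDerivAt_max_zero_pow (k + n) x).deriv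
    push_cast
    refine contDiff_succ_iff_deriv.2
      ⟨fun x => (hasDerivAt_max_zero_pow (k + n) x).differentiableAt, by simp, ?_⟩
    rw [hderiv]
    exact contDiff_const.mul ih

section Radial

variable {d : ℕ} {g g' : ℝ → ℝ} {c x : Space d}

lemma fderiv_comp_norm_sub_sq (hg : HasDerivAt g (g' (‖x - c‖ ^ 2)) (‖x - c‖ ^ 2)) (i : Fin d) :
    fderiv ℝ (fun y => g (‖y - c‖ ^ 2)) x (unitVec i) =
      g' (‖x - c‖ ^ 2) * (2 * (x i - c i)) := by
  have hnorm : HasFDerivAt (fun y : Space d => ‖y - c‖ ^ 2) _ x :=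
    ((hasFDerivAt_id x).sub_const c).norm_sq
  have hcomp : HasFDerivAt (fun y => g (‖y - c‖ ^ 2)) _ x := hg.comp_hasFDerivAt x hnorm
  rw [hcomp.fderiv]
  simp [EuclideanSpace.inner_single_right]

lemma spaceLap_comp_norm_sub_sq {g'' : ℝ} (hg : ∀ᶠ s in 𝓝 (‖x - c‖ ^ 2), HasDerivAt g (g' s) s)
    (hg' : HasDerivAt g' g'' (‖x - c‖ ^ 2)) :
    spaceLap (fun y => g (‖y - c‖ ^ 2)) x =
      4 * g'' * ‖x - c‖ ^ 2 + 2 * d * g' (‖x - c‖ ^ 2) := by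
  have hcont : Tendsto (fun y : Space d => ‖y - c‖ ^ 2) (𝓝 x) (𝓝 (‖x - c‖ ^ 2)) :=
    Continuous.tendsto (by fun_prop) x
  have hcoord : ∀ i : Fin d,
      fderiv ℝ (fun y => fderiv ℝ (fun y => g (‖y - c‖ ^ 2)) y (unitVec i)) x (unitVec i) =
        4 * g'' * (x i - c i) ^ 2 + 2 * g' (‖x - c‖ ^ 2) := by
    intro i
    have hfirst : (fun y => fderiv ℝ (fun y => g (‖y - c‖ ^ 2)) y (unitVec i)) =ᶠ[𝓝 x]
        fun y => g' (‖y - c‖ ^ 2) * (2 * (y i - c i)) := by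
      filter_upwards [hcont.eventually hg] with y hy using fderiv_comp_norm_sub_sq hy i
    have hlin : HasFDerivAt (fun y : Space d => 2 * (y i - c i)) _ x :=
      (((EuclideanSpace.proj i : Space d →L[ℝ] ℝ).hasFDerivAt (x := x)).sub_const (c i)).const_mul 2
    have hrad : HasFDerivAt (fun y : Space d => g' (‖y - c‖ ^ 2)) _ x :=
      hg'.comp_hasFDerivAt x ((hasFDerivAt_id x).sub_const c).norm_sq
    have hmul : HasFDerivAt (fun y => g' (‖y - c‖ ^ 2) * (2 * (y i - c i))) _ x := hrad.mul hlin
    rw [hfirst.fderiv_eq, hmul.fderiv]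
    simp [EuclideanSpace.inner_single_right]
    ring
  have hnorm : ∑ i : Fin d, (x i - c i) ^ 2 = ‖x - c‖ ^ 2 := by
    simp [EuclideanSpace.norm_sq_eq]
  rw [spaceLap, Finset.sum_congr rfl fun i _ => hcoord i, Finset.sum_add_distrib,
    ← Finset.mul_sum, hnorm]
  simp
  ring

end Radial

/-- The truncated paraboloid `(1 - |y - c|² / ρ²)₊`; its powers are the cutoff functions used
throughout. -/
noncomputable def cutoff {d : ℕ} (c : Space d) (ρ : ℝ) (y : Space d) : ℝ :=
  max 0 (1 - ‖y - c‖ ^ 2 / ρ ^ 2)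

section Cutoff

variable {d : ℕ} (c : Space d) (ρ : ℝ)

lemma cutoff_nonneg (y : Space d) : 0 ≤ cutoff c ρ y := le_max_left _ _

lemma cutoff_le_one (y : Space d) : cutoff c ρ y ≤ 1 :=
  max_le zero_le_one (sub_le_self _ (by positivity))

@[fun_prop]
lemma continuous_cutoff : Continuous (cutoff c ρ) := by
  unfold cutoff; fun_prop

variable {c ρ}

lemma cutoff_eq_zero (hρ : 0 < ρ) {y : Space d} (hy : y ∉ ball c ρ) : cutoff c ρ y = 0 := by
  rw [mem_ball, dist_eq_norm, not_lt] at hy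
  exact max_eq_left (sub_nonpos.2 ((one_le_div (by positivity)).2 (by gcongr)))

lemma cutoff_pow_eq_zero (hρ : 0 < ρ) (n : ℕ) {y : Space d} (hy : y ∉ ball c ρ) :
    cutoff c ρ y ^ (n + 1) = 0 := by
  simp [cutoff_eq_zero hρ hy]

lemma hasCompactSupport_cutoff_pow (hρ : 0 < ρ) (n : ℕ) :
    HasCompactSupport (cutoff c ρ ^ (n + 1)) :=
  HasCompactSupport.intro (isCompact_closedBall c ρ) fun _ hy =>
    cutoff_pow_eq_zero hρ n fun h => hy (ball_subset_closedBall h)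

lemma tsupport_cutoff_pow_subset (hρ : 0 < ρ) (n : ℕ) :
    tsupport (cutoff c ρ ^ (n + 1)) ⊆ closedBall c ρ :=
  closure_minimal (fun _ hy => by_contra fun h => hy <|
    cutoff_pow_eq_zero hρ n fun h' => h (ball_subset_closedBall h')) isClosed_closedBall

lemma contDiff_cutoff_pow (k n : ℕ) : ContDiff ℝ n (cutoff c ρ ^ (k + n + 1)) :=
  (contDiff_max_zero_pow k n).comp
    (contDiff_const.sub (((contDiff_id.sub contDiff_const).norm_sq ℝ).div_const _))

lemma spaceLap_cutoff_pow (k : ℕ) (y : Space d) :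
    spaceLap (cutoff c ρ ^ (k + 3)) y =
      4 * (k + 3) * (k + 2) * cutoff c ρ y ^ (k + 1) * ‖y - c‖ ^ 2 / ρ ^ 4
        - 2 * (k + 3) * d * cutoff c ρ y ^ (k + 2) / ρ ^ 2 := by
  have hprofile : ∀ (n : ℕ) (s : ℝ), HasDerivAt (fun s : ℝ => max 0 (1 - s / ρ ^ 2) ^ (n + 2))
      ((n + 2 : ℝ) * max 0 (1 - s / ρ ^ 2) ^ (n + 1) * (-1 / ρ ^ 2)) s := fun n s =>
    (hasDerivAt_max_zero_pow n _).comp s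
      ((((hasDerivAt_id s).div_const (ρ ^ 2)).const_sub 1).congr_deriv (by ring))
  have hlap := spaceLap_comp_norm_sub_sq (x := y) (c := c)
    (Eventually.of_forall fun s => hprofile (k + 1) s)
    (((hprofile k _).const_mul _).mul_const (-1 / ρ ^ 2))
  refine hlap.trans ?_
  simp only [cutoff]
  push_cast
  ring

lemma abs_spaceLap_cutoff_pow_le (hρ : 0 < ρ) (k : ℕ) (y : Space d) :
    |spaceLap (cutoff c ρ ^ (k + 3)) y| ≤
      (4 * (k + 3) * (k + 2) + 2 * (k + 3) * d) / ρ ^ 2 * cutoff c ρ y ^ (k + 1) := by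
  rw [spaceLap_cutoff_pow]
  by_cases hy : y ∈ ball c ρ
  · have h0 := cutoff_nonneg c ρ y
    rw [mem_ball, dist_eq_norm] at hy
    have hpow : cutoff c ρ y ^ (k + 2) ≤ cutoff c ρ y ^ (k + 1) :=
      pow_le_pow_of_le_one h0 (cutoff_le_one c ρ y) (by lia)
    have hfirst : 4 * (k + 3) * (k + 2) * cutoff c ρ y ^ (k + 1) * ‖y - c‖ ^ 2 / ρ ^ 4
        ≤ 4 * (k + 3) * (k + 2) / ρ ^ 2 * cutoff c ρ y ^ (k + 1) := by
      calc _ ≤ 4 * (k + 3) * (k + 2) * cutoff c ρ y ^ (k + 1) * ρ ^ 2 / ρ ^ 4 := by gcongr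
        _ = _ := by field_simp
    have hsecond : 2 * (k + 3) * d * cutoff c ρ y ^ (k + 2) / ρ ^ 2
        ≤ 2 * (k + 3) * d / ρ ^ 2 * cutoff c ρ y ^ (k + 1) := by
      calc _ ≤ 2 * (k + 3) * d * cutoff c ρ y ^ (k + 1) / ρ ^ 2 := by gcongr
        _ = _ := by ring
    rw [add_div, add_mul]
    refine (abs_sub _ _).trans (add_le_add ?_ ?_)
    · rwa [abs_of_nonneg (by positivity)]
    · rwa [abs_of_nonneg (by positivity)]
  · simp [cutoff_eq_zero hρ hy]

lemma cutoff_add_smul (hρ : 0 < ρ) (y : Space d) : cutoff c ρ (c + ρ • y) = cutoff 0 1 y := by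
  simp only [cutoff, add_sub_cancel_left, norm_smul, norm_eq_abs, abs_of_pos hρ, sub_zero]
  congr 2
  field_simp

lemma cutoff_le_cutoff {r : ℝ} (hρ : 0 < ρ) (hρr : ρ ≤ r) (y : Space d) :
    cutoff c ρ y ≤ cutoff c r y := by
  unfold cutoff
  gcongr

lemma integrable_cutoff_pow (hρ : 0 < ρ) (n : ℕ) :
    Integrable (fun y => cutoff c ρ y ^ (n + 1)) :=
  ((continuous_cutoff c ρ).pow _).integrable_of_hasCompactSupport
    (hasCompactSupport_cutoff_pow hρ n)

lemma integral_cutoff_pow_pos (n : ℕ) : 0 < ∫ y : Space d, cutoff 0 1 y ^ (n + 1) :=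
  ((continuous_cutoff 0 1).pow _).integral_pos_of_hasCompactSupport_nonneg_nonzero
    (hasCompactSupport_cutoff_pow one_pos n) (fun y => pow_nonneg (cutoff_nonneg _ _ y) _)
    (x := 0) (by simp [cutoff])

end Cutoff

/-! ### Discrete subsolutions and their weak form -/

lemma sub_le_integral_of_backwardDifference_le_Ioc {Y J : ℝ → ℝ} {a b : ℝ} (hab : a ≤ b)
    (hY : Continuous Y) (hJ : Continuous J)
    (hstep : ∀ s ∈ Ioc a b, ∀ ε > 0, ∀ᶠ h in 𝓝[>] 0, Y s - Y (s - h) ≤ h * (J s + ε)) :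
    Y b - Y a ≤ ∫ s in a..b, J s := by
  have hprim : ∀ x, HasDerivAt (fun x => -Y b + ∫ s in (-x)..b, J s) (J (-x)) x := fun x => by
    have := (intervalIntegral.integral_hasDerivAt_left (hJ.intervalIntegrable _ b)
      hJ.stronglyMeasurable.stronglyMeasurableAtFilter hJ.continuousAt).comp x (hasDerivAt_neg x)
    simpa using this.const_add (-Y b)
  -- The comparison principle in the library is for forward differences, hence the reflection.
  have hcompare := image_le_of_liminf_slope_right_le_deriv_boundary (a := -b) (b := -a)
    (f := fun x => -Y (-x)) (B := fun x => -Y b + ∫ s in (-x)..b, J s) (B' := fun x => J (-x))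
    (by fun_prop) (by simp) (fun x _ => (hprim x).continuousAt.continuousWithinAt)
    (fun x _ => (hprim x).hasDerivWithinAt) ?_ (right_mem_Icc.2 (neg_le_neg hab))
  · simp only [neg_neg] at hcompare
    linarith
  · intro x hx r hr
    have hs : -x ∈ Ioc a b := ⟨by linarith [hx.2], by linarith [hx.1]⟩
    have hshift : Tendsto (fun z => z - x) (𝓝[>] x) (𝓝[>] 0) :=
      tendsto_nhdsWithin_iff.2 ⟨tendsto_nhdsWithin_of_tendsto_nhds
        (Continuous.tendsto' (by fun_prop) _ _ (sub_self x)), by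
          filter_upwards [self_mem_nhdsWithin] with z hz using mem_Ioi.2 (sub_pos.2 hz)⟩
    refine Eventually.frequently ?_
    filter_upwards [hshift.eventually (hstep _ hs ((r - J (-x)) / 2) (by linarith)),
      self_mem_nhdsWithin] with z hz hxz
    rw [slope_def_field, div_lt_iff₀ (sub_pos.2 hxz)]
    have : -x - (z - x) = -z := by ring
    rw [this] at hz
    nlinarith [sub_pos.2 (mem_Ioi.1 hxz)]

lemma sub_le_integral_of_backwardDifference_le {Y J : ℝ → ℝ} {a b : ℝ} (hab : a ≤ b)
    (hY : Continuous Y) (hJ : Continuous J)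
    (hstep : ∀ s ∈ Ioo a b, ∀ ε > 0, ∀ᶠ h in 𝓝[>] 0, Y s - Y (s - h) ≤ h * (J s + ε)) :
    Y b - Y a ≤ ∫ s in a..b, J s := by
  rcases hab.eq_or_lt with rfl | hlt
  · simp
  · have hinterior : ∀ c ∈ Ico a b, Y c - Y a ≤ ∫ s in a..c, J s := fun c hc =>
      sub_le_integral_of_backwardDifference_le_Ioc hc.1 hY hJ fun s hs =>
        hstep s ⟨hs.1, hs.2.trans_lt hc.2⟩
    have hprim : Continuous fun c => ∫ s in a..c, J s :=
      intervalIntegral.continuous_primitive hJ.intervalIntegrable a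
    exact ContinuousWithinAt.closure_le (s := Ico a b)
      ((closure_Ico hlt.ne).symm ▸ right_mem_Icc.2 hab)
      (hY.sub continuous_const).continuousWithinAt hprim.continuousWithinAt hinterior

section TestFunctions

variable {d : ℕ} {K : Space d → ℝ}

lemma integrable_mul_of_hasCompactSupport {f φ : Space d → ℝ} (hf : Continuous f)
    (hφ : Continuous φ) (hφc : HasCompactSupport φ) : Integrable (fun y => f y * φ y) :=
  (hf.mul hφ).integrable_of_hasCompactSupport hφc.mul_left

lemma continuous_integral_mul_of_hasCompactSupport {X : Type*} [TopologicalSpace X]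
    {F : X → Space d → ℝ} {φ : Space d → ℝ}
    (hF : Continuous fun p : X × Space d => F p.1 p.2) (hφ : Continuous φ)
    (hφc : HasCompactSupport φ) : Continuous fun s => ∫ y, F s y * φ y := by
  rw [← continuousOn_univ]
  refine continuousOn_integral_of_compact_support hφc
    (hF.mul (hφ.comp continuous_snd)).continuousOn fun s y _ hy => ?_
  simp [image_eq_zero_of_notMem_tsupport hy]

lemma intervalIntegral_integral_mul_swap {F : ℝ → Space d → ℝ} {φ : Space d → ℝ}
    (hF : Continuous fun p : ℝ × Space d => F p.1 p.2) (hφ : Continuous φ)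
    (hφc : HasCompactSupport φ) (a b : ℝ) :
    ∫ s in a..b, ∫ y, F s y * φ y = ∫ y, (∫ s in a..b, F s y) * φ y := by
  have hrestrict : ∀ f : Space d → ℝ, ∫ y, f y * φ y = ∫ y in tsupport φ, f y * φ y := fun f =>
    (setIntegral_eq_integral_of_forall_compl_eq_zero fun y hy => by
      rw [image_eq_zero_of_notMem_tsupport hy, mul_zero]).symm
  have h_int : IntegrableOn (Function.uncurry fun s y => F s y * φ y) (uIcc a b ×ˢ tsupport φ)
      (volume.prod volume) :=
    ContinuousOn.integrableOn_compact (isCompact_uIcc.prod hφc)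
      (hF.mul (hφ.comp continuous_snd)).continuousOn
  simp_rw [hrestrict]
  rw [intervalIntegral_integral_swap]
  · simp_rw [intervalIntegral.integral_mul_const]
  · rw [Measure.prod_restrict]
    exact h_int.mono_set (prod_mono uIoc_subset_uIcc le_rfl)

lemma continuous_spaceLap (hK : ContDiff ℝ 2 K) : Continuous (spaceLap K) := by
  refine continuous_finsetSum _ fun i _ => ?_
  have hfirst : ContDiff ℝ 1 fun y => fderiv ℝ K y (unitVec i) :=
    (hK.fderiv_right (by norm_num)).clm_apply contDiff_const
  exact (hfirst.continuous_fderiv one_ne_zero).clm_apply continuous_const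

lemma spaceLap_eq_zero_of_notMem_tsupport {y : Space d} (hy : y ∉ tsupport K) :
    spaceLap K y = 0 := by
  refine Finset.sum_eq_zero fun i _ => ?_
  have hsub := (tsupport_fderiv_apply_subset ℝ (unitVec i)).trans
    (tsupport_fderiv_apply_subset (f := K) ℝ (unitVec i))
  exact image_eq_zero_of_notMem_tsupport
    (f := fun x => fderiv ℝ (fun y => fderiv ℝ K y (unitVec i)) x (unitVec i))
    fun h => hy (hsub h)

lemma hasCompactSupport_spaceLap (hK : HasCompactSupport K) : HasCompactSupport (spaceLap K) :=
  HasCompactSupport.intro hK fun _ => spaceLap_eq_zero_of_notMem_tsupport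

lemma continuous_discreteLap {h : ℝ} (hK : Continuous K) : Continuous (discreteLap h K) := by
  unfold discreteLap; fun_prop

lemma discreteLap_eq_zero_of_notMem_cthickening {h : ℝ} (hh : |h| ≤ 1) {y : Space d}
    (hy : y ∉ cthickening 1 (tsupport K)) : discreteLap h K y = 0 := by
  have hzero : ∀ v : Space d, ‖v‖ ≤ 1 → K (y + v) = 0 := fun v hv =>
    image_eq_zero_of_notMem_tsupport fun hmem =>
      hy (mem_cthickening_of_dist_le _ _ _ _ hmem (by simpa using hv))
  refine Finset.sum_eq_zero fun i _ => ?_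
  have hplus := hzero (h • unitVec i) (by simpa [norm_smul] using hh)
  have hminus := hzero (-(h • unitVec i)) (by simpa [norm_smul] using hh)
  have hcentre := hzero 0 (by simp)
  rw [← sub_eq_add_neg] at hminus
  rw [add_zero] at hcentre
  rw [hplus, hminus, hcentre]
  ring

lemma integral_mul_translate (f g : Space d → ℝ) (v : Space d) :
    ∫ y, f (y + v) * g y = ∫ y, f y * g (y - v) := by
  rw [← integral_sub_right_eq_self (fun y => f (y + v) * g y) v]
  simp

lemma integral_secondDifference_mul {Z φ : Space d → ℝ} (hZ : Continuous Z) (hφ : Continuous φ)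
    (hφc : HasCompactSupport φ) (v : Space d) :
    ∫ y, (Z (y + v) + Z (y - v) - 2 * Z y) * φ y =
      ∫ y, Z y * (φ (y + v) + φ (y - v) - 2 * φ y) := by
  have hφtr : ∀ w : Space d, HasCompactSupport fun y => φ (y + w) := fun w =>
    hφc.comp_homeomorph (Homeomorph.addRight w)
  have hZint : ∀ w : Space d, Integrable fun y => Z (y + w) * φ y := fun w =>
    integrable_mul_of_hasCompactSupport (by fun_prop) hφ hφc
  have hφint : ∀ w : Space d, Integrable fun y => Z y * φ (y + w) := fun w =>
    integrable_mul_of_hasCompactSupport hZ (by fun_prop) (hφtr w)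
  have hcentre : Integrable fun y => 2 * (Z y * φ y) :=
    (integrable_mul_of_hasCompactSupport hZ hφ hφc).const_mul 2
  have hleft : ∀ y, (Z (y + v) + Z (y - v) - 2 * Z y) * φ y =
      Z (y + v) * φ y + Z (y + -v) * φ y - 2 * (Z y * φ y) := fun y => by
    rw [← sub_eq_add_neg]; ring
  have hright : ∀ y, Z y * (φ (y + v) + φ (y - v) - 2 * φ y) =
      Z y * φ (y + v) + Z y * φ (y + -v) - 2 * (Z y * φ y) := fun y => by
    rw [← sub_eq_add_neg]; ring
  have hZsum : Integrable fun y => Z (y + v) * φ y + Z (y + -v) * φ y :=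
    (hZint v).add (hZint (-v))
  have hφsum : Integrable fun y => Z y * φ (y + v) + Z y * φ (y + -v) :=
    (hφint v).add (hφint (-v))
  simp_rw [hleft, hright]
  rw [integral_sub hZsum hcentre, integral_sub hφsum hcentre,
    integral_add (hZint v) (hZint (-v)), integral_add (hφint v) (hφint (-v)),
    integral_mul_translate, integral_mul_translate]
  simp only [sub_neg_eq_add, ← sub_eq_add_neg]
  ring

lemma integral_discreteLap_mul {Z φ : Space d → ℝ} (hZ : Continuous Z) (hφ : Continuous φ)
    (hφc : HasCompactSupport φ) (h : ℝ) :
    ∫ y, discreteLap h Z y * φ y = ∫ y, Z y * discreteLap h φ y := by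
  have hφtr : ∀ w : Space d, HasCompactSupport fun y => φ (y + w) := fun w =>
    hφc.comp_homeomorph (Homeomorph.addRight w)
  simp only [discreteLap, Finset.sum_mul, Finset.mul_sum]
  rw [integral_finsetSum, integral_finsetSum]
  · exact Finset.sum_congr rfl fun i _ => integral_secondDifference_mul hZ hφ hφc _
  · intro i _
    refine integrable_mul_of_hasCompactSupport hZ (by fun_prop) ?_
    simp only [sub_eq_add_neg, two_mul]
    exact ((hφtr _).add (hφtr _)).add (hφc.add hφc).neg
  · exact fun i _ => integrable_mul_of_hasCompactSupport (by fun_prop) hφ hφc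

lemma eventually_integral_mul_discreteLap_le {Z : Space d → ℝ} (hZ : Continuous Z)
    (hK : ContDiff ℝ 2 K) (hKc : HasCompactSupport K) {ε : ℝ} (hε : 0 < ε) :
    ∀ᶠ h in 𝓝[>] (0 : ℝ),
      ∫ y, Z y * discreteLap h K y ≤ h ^ 2 * ((∫ y, Z y * spaceLap K y) + ε) := by
  set C := cthickening 1 (tsupport K)
  have hC : IsCompact C := hKc.isCompact.cthickening
  obtain ⟨δ, hδpos, hδ⟩ := exists_pos_mul_lt hε (∫ y in C, |Z y|)
  filter_upwards [Ioo_mem_nhdsGT one_pos,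
    eventually_forall_isCompact_abs_discreteLap_sub_le (F := fun _ => K)
      (isCompact_singleton (x := (0 : ℝ)).prod hC) isOpen_univ (subset_univ _)
      (hK.comp contDiff_snd).contDiffOn (ε := δ) hδpos] with h hh1 happrox
  have hzero : ∀ y ∉ C, discreteLap h K y - h ^ 2 * spaceLap K y = 0 := fun y hy => by
    rw [discreteLap_eq_zero_of_notMem_cthickening ((abs_of_pos hh1.1).trans_le hh1.2.le) hy,
      spaceLap_eq_zero_of_notMem_tsupport fun h' => hy (self_subset_cthickening _ h')]
    simp
  have herrc : Continuous fun y => discreteLap h K y - h ^ 2 * spaceLap K y :=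
    (continuous_discreteLap hK.continuous).sub ((continuous_spaceLap hK).const_mul _)
  have hlapint := integrable_mul_of_hasCompactSupport hZ (continuous_spaceLap hK)
    (hasCompactSupport_spaceLap hKc)
  have hsplit : ∫ y, Z y * discreteLap h K y =
      (∫ y in C, Z y * (discreteLap h K y - h ^ 2 * spaceLap K y)) +
        h ^ 2 * ∫ y, Z y * spaceLap K y := by
    rw [setIntegral_eq_integral_of_forall_compl_eq_zero fun y hy => by rw [hzero y hy, mul_zero],
      ← integral_const_mul, ← integral_add (integrable_mul_of_hasCompactSupport hZ herrc
        (HasCompactSupport.intro hC hzero)) (hlapint.const_mul _)]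
    exact integral_congr_ae (Eventually.of_forall fun y => by simp only; ring)
  have herr : ∫ y in C, Z y * (discreteLap h K y - h ^ 2 * spaceLap K y) ≤
      ∫ y in C, δ * h ^ 2 * |Z y| := by
    refine setIntegral_mono_on (ContinuousOn.integrableOn_compact hC (by fun_prop))
      (ContinuousOn.integrableOn_compact hC (by fun_prop)) hC.measurableSet fun y hy => ?_
    refine (le_abs_self _).trans ?_
    rw [abs_mul, mul_comm]
    exact mul_le_mul_of_nonneg_right (happrox (0, y) ⟨rfl, hy⟩) (abs_nonneg _)
  rw [integral_const_mul] at herr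
  nlinarith [sq_nonneg h]

end TestFunctions

section DiscreteSubsolution

variable {d : ℕ} {z Z : ℝ → Space d → ℝ}

/-- `∂ₜ z ≤ Δ Z` on the space-time set `C`, expressed by backward time differences of step `h` and
second space differences of step `h`, up to an error that is uniform on `C`. Unlike the
differential inequality, this makes sense for infima of families of solutions. -/
def IsDiscreteSubsolutionOn (z Z : ℝ → Space d → ℝ) (C : Set (ℝ × Space d)) : Prop :=
  ∀ ε > 0, ∀ᶠ h in 𝓝[>] (0 : ℝ), ∀ p ∈ C,
    h * (z p.1 p.2 - z (p.1 - h) p.2) ≤ discreteLap h (Z p.1) p.2 + ε * h ^ 2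

lemma IsDiscreteSubsolutionOn.integral_sub_le (hz : Continuous fun p : ℝ × Space d => z p.1 p.2)
    (hZ : Continuous fun p : ℝ × Space d => Z p.1 p.2) {K : Space d → ℝ} (hK : ContDiff ℝ 2 K)
    (hKc : HasCompactSupport K) (hK0 : ∀ y, 0 ≤ K y) {a b : ℝ} (hab : a ≤ b)
    (hsub : ∀ s ∈ Ioo a b, IsDiscreteSubsolutionOn z Z ({s} ×ˢ tsupport K)) :
    (∫ y, z b y * K y) - ∫ y, z a y * K y ≤ ∫ s in a..b, ∫ y, Z s y * spaceLap K y := by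
  have hz' : ∀ s, Continuous (z s) := fun s => hz.comp (Continuous.prodMk_right s)
  have hZ' : ∀ s, Continuous (Z s) := fun s => hZ.comp (Continuous.prodMk_right s)
  have hKint : Integrable K := hK.continuous.integrable_of_hasCompactSupport hKc
  refine sub_le_integral_of_backwardDifference_le hab
    (continuous_integral_mul_of_hasCompactSupport hz hK.continuous hKc)
    (continuous_integral_mul_of_hasCompactSupport hZ (continuous_spaceLap hK)
      (hasCompactSupport_spaceLap hKc)) fun s hs ε hε => ?_
  obtain ⟨δ, hδpos, hδ⟩ := exists_pos_mul_lt (half_pos hε) (∫ y, K y)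
  filter_upwards [self_mem_nhdsWithin, hsub s hs δ hδpos,
    eventually_integral_mul_discreteLap_le (hZ' s) hK hKc (half_pos hε)] with h hh hstep hlap
  have hzint := fun s => integrable_mul_of_hasCompactSupport (hz' s) hK.continuous hKc
  have hLint := integrable_mul_of_hasCompactSupport (continuous_discreteLap (h := h) (hZ' s))
    hK.continuous hKc
  have htested : h * ((∫ y, z s y * K y) - ∫ y, z (s - h) y * K y) ≤
      (∫ y, discreteLap h (Z s) y * K y) + δ * h ^ 2 * ∫ y, K y := by
    rw [← integral_sub (hzint s) (hzint _), ← integral_const_mul, ← integral_const_mul,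
      ← integral_add hLint (hKint.const_mul _)]
    refine integral_mono (((hzint s).sub (hzint _)).const_mul _)
      (hLint.add (hKint.const_mul _)) fun y => ?_
    by_cases hy : y ∈ tsupport K
    · have := mul_le_mul_of_nonneg_right (hstep (s, y) ⟨rfl, hy⟩) (hK0 y)
      simp only at this ⊢
      linarith
    · simp [image_eq_zero_of_notMem_tsupport hy]
  rw [integral_discreteLap_mul (hZ' s) hK.continuous hKc] at htested
  refine le_of_mul_le_mul_left ?_ (mem_Ioi.1 hh)
  nlinarith [sq_nonneg h]

end DiscreteSubsolution

/-! ### Mean value inequalities -/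

/-- The average of `V` around `x` at scale `ρ`, weighted by `cutoff x ρ ^ 2` and normalised by
`ρ ^ d`. This power of the cutoff is the one for which the derivative in `ρ` is the integral of `V`
against a Laplacian. -/
noncomputable def cutoffAverage {d : ℕ} (V : Space d → ℝ) (x : Space d) (ρ : ℝ) : ℝ :=
  ∫ y, V (x + ρ • y) * cutoff 0 1 y ^ 2

lemma integral_comp_add_smul {d : ℕ} (f : Space d → ℝ) (x : Space d) {ρ : ℝ} (hρ : 0 < ρ) :
    ∫ y, f (x + ρ • y) = (ρ ^ d)⁻¹ * ∫ z, f z := by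
  have hscale := Measure.integral_comp_smul (volume : Measure (Space d)) (fun z => f (x + z)) ρ
  simp only [finrank_euclideanSpace, Fintype.card_fin, smul_eq_mul] at hscale
  rw [hscale, abs_of_pos (by positivity), integral_add_left_eq_self f x]

lemma integral_cutoff_pow {d : ℕ} (x : Space d) {ρ : ℝ} (hρ : 0 < ρ) (n : ℕ) :
    ∫ z, cutoff x ρ z ^ n = ρ ^ d * ∫ y : Space d, cutoff 0 1 y ^ n := by
  have hscale := integral_comp_add_smul (fun z => cutoff x ρ z ^ n) x hρ
  simp only [cutoff_add_smul hρ] at hscale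
  rw [hscale, mul_inv_cancel_left₀ (by positivity)]

lemma hasDerivAt_inv_pow (n : ℕ) {x : ℝ} (hx : x ≠ 0) :
    HasDerivAt (fun x : ℝ => (x ^ n)⁻¹) (-(n * (x ^ n)⁻¹ / x)) x := by
  have hzpow := hasDerivAt_zpow (-n : ℤ) x (Or.inl hx)
  simp only [zpow_neg, zpow_natCast] at hzpow
  refine hzpow.congr_deriv ?_
  rw [zpow_sub_one₀ hx, zpow_neg, zpow_natCast]
  push_cast
  ring

section CutoffAverage

variable {d : ℕ} {V : Space d → ℝ} (x : Space d)

lemma continuous_cutoffAverage (hV : Continuous V) : Continuous (cutoffAverage V x) :=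
  continuous_integral_mul_of_hasCompactSupport (F := fun ρ y => V (x + ρ • y)) (by fun_prop)
    ((continuous_cutoff 0 1).pow 2) (hasCompactSupport_cutoff_pow one_pos 1)

lemma cutoffAverage_zero : cutoffAverage V x 0 = V x * ∫ y : Space d, cutoff 0 1 y ^ 2 := by
  simp [cutoffAverage, integral_const_mul]

lemma cutoffAverage_nonneg (hV : ∀ y, 0 ≤ V y) (ρ : ℝ) : 0 ≤ cutoffAverage V x ρ :=
  integral_nonneg fun _ => mul_nonneg (hV _) (sq_nonneg _)

lemma cutoffAverage_eq {ρ : ℝ} (hρ : 0 < ρ) :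
    cutoffAverage V x ρ = (ρ ^ d)⁻¹ * ∫ z, V z * cutoff x ρ z ^ 2 := by
  rw [← integral_comp_add_smul (fun z => V z * cutoff x ρ z ^ 2) x hρ]
  simp only [cutoffAverage, cutoff_add_smul hρ]

lemma hasDerivAt_cutoff_sq (z : Space d) {ρ : ℝ} (hρ : 0 < ρ) :
    HasDerivAt (fun ρ => cutoff x ρ z ^ 2) (4 * cutoff x ρ z * ‖z - x‖ ^ 2 / ρ ^ 3) ρ := by
  have hparabola : HasDerivAt (fun ρ : ℝ => 1 - ‖z - x‖ ^ 2 / ρ ^ 2)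
      (2 * ‖z - x‖ ^ 2 / ρ ^ 3) ρ := by
    have hquot := ((hasDerivAt_const ρ (‖z - x‖ ^ 2)).div (hasDerivAt_pow 2 ρ)
      (by positivity)).const_sub 1
    refine hquot.congr_deriv ?_
    field_simp
    ring
  refine ((hasDerivAt_max_zero_pow 0 _).comp ρ hparabola).congr_deriv ?_
  simp only [cutoff]
  ring

lemma integrable_mul_cutoff_sq (hV : Continuous V) {ρ : ℝ} (hρ : 0 < ρ) :
    Integrable fun z => V z * cutoff x ρ z ^ 2 :=
  integrable_mul_of_hasCompactSupport hV ((continuous_cutoff x ρ).pow 2)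
    (hasCompactSupport_cutoff_pow hρ 1)

lemma hasDerivAt_integral_mul_cutoff_sq (hV : Continuous V) {ρ : ℝ} (hρ : 0 < ρ) :
    HasDerivAt (fun ρ => ∫ z, V z * cutoff x ρ z ^ 2)
      (∫ z, V z * (4 * cutoff x ρ z * ‖z - x‖ ^ 2 / ρ ^ 3)) ρ := by
  refine (hasDerivAt_integral_of_dominated_loc_of_deriv_le
    (F := fun r z => V z * cutoff x r z ^ 2) (s := Ioo (ρ / 2) (2 * ρ))
    (F' := fun r z => V z * (4 * cutoff x r z * ‖z - x‖ ^ 2 / r ^ 3))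
    (bound := (closedBall x (2 * ρ)).indicator fun z => |V z| * (4 * (2 * ρ) ^ 2 / (ρ / 2) ^ 3))
    (Ioo_mem_nhds (by linarith) (by linarith))
    (Eventually.of_forall fun r => Continuous.aestronglyMeasurable (by fun_prop))
    (integrable_mul_cutoff_sq x hV hρ)
    (Continuous.aestronglyMeasurable (by fun_prop)) ?_ ?_ ?_).2
  · refine Eventually.of_forall fun z r hr => ?_
    have hr0 : 0 < r := by linarith [hr.1]
    by_cases hz : z ∈ closedBall x (2 * ρ)
    · have h0 := cutoff_nonneg x r z
      rw [indicator_of_mem hz, norm_mul, norm_eq_abs, norm_of_nonneg (by positivity)]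
      rw [mem_closedBall, dist_eq_norm] at hz
      have hr1 := hr.1.le
      calc _ ≤ |V z| * (4 * 1 * (2 * ρ) ^ 2 / (ρ / 2) ^ 3) := by
            gcongr; exact cutoff_le_one x r z
        _ = _ := by ring
    · have hz' : z ∉ ball x r := fun h =>
        hz (ball_subset_closedBall (ball_subset_ball hr.2.le h))
      simp [hz, cutoff_eq_zero hr0 hz']
  · rw [integrable_indicator_iff measurableSet_closedBall]
    exact ContinuousOn.integrableOn_compact (isCompact_closedBall _ _) (by fun_prop)
  · exact Eventually.of_forall fun z r hr =>
      (hasDerivAt_cutoff_sq x z (by linarith [hr.1])).const_mul (V z)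

lemma integral_mul_spaceLap_cutoff_pow (hV : Continuous V) {ρ : ℝ} (hρ : 0 < ρ) :
    ∫ z, V z * spaceLap (cutoff x ρ ^ 3) z =
      6 / ρ * (∫ z, V z * (4 * cutoff x ρ z * ‖z - x‖ ^ 2 / ρ ^ 3))
        - 6 * d / ρ ^ 2 * ∫ z, V z * cutoff x ρ z ^ 2 := by
  have hlin : Integrable fun z => V z * (4 * cutoff x ρ z * ‖z - x‖ ^ 2 / ρ ^ 3) :=
    integrable_mul_of_hasCompactSupport hV (by fun_prop) <|
      HasCompactSupport.intro (isCompact_closedBall x ρ) fun z hz => by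
        simp [cutoff_eq_zero hρ fun h => hz (ball_subset_closedBall h)]
  rw [← integral_const_mul, ← integral_const_mul,
    ← integral_sub (hlin.const_mul _) ((integrable_mul_cutoff_sq x hV hρ).const_mul _)]
  refine integral_congr_ae (Eventually.of_forall fun z => ?_)
  have := spaceLap_cutoff_pow (c := x) (ρ := ρ) 0 z
  simp only [Nat.cast_zero, zero_add] at this
  simp only [this]
  field_simp
  ring

lemma hasDerivAt_cutoffAverage (hV : Continuous V) {ρ : ℝ} (hρ : 0 < ρ) :
    HasDerivAt (cutoffAverage V x)
      (ρ * (ρ ^ d)⁻¹ / 6 * ∫ z, V z * spaceLap (cutoff x ρ ^ 3) z) ρ := by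
  have heq : cutoffAverage V x =ᶠ[𝓝 ρ] fun ρ => (ρ ^ d)⁻¹ * ∫ z, V z * cutoff x ρ z ^ 2 := by
    filter_upwards [Ioi_mem_nhds hρ] with r hr using cutoffAverage_eq x hr
  have hprod := (hasDerivAt_inv_pow d hρ.ne').mul (hasDerivAt_integral_mul_cutoff_sq x hV hρ)
  refine (hprod.congr_deriv ?_).congr_of_eventuallyEq heq
  rw [integral_mul_spaceLap_cutoff_pow x hV hρ]
  generalize ∫ z, V z * (4 * cutoff x ρ z * ‖z - x‖ ^ 2 / ρ ^ 3) = I₁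
  field_simp
  ring

lemma mul_le_of_integral_mul_spaceLap_le (hV : Continuous V) (hV0 : ∀ y, 0 ≤ V y) {r R a : ℝ}
    (hr : 0 < r) (hrR : r ≤ R) (ha : 0 ≤ a)
    (hsuper : ∀ ρ ∈ Ioo 0 r, ∫ z, V z * spaceLap (cutoff x ρ ^ 3) z ≤ 0)
    (hmass : ∀ ρ ∈ Ioo r R, ∫ z, V z * spaceLap (cutoff x ρ ^ 3) z ≤ -a) :
    r / (6 * R ^ d) * a * (R - r) ≤ V x * ∫ y : Space d, cutoff 0 1 y ^ 2 := by
  have hcont := continuous_cutoffAverage x hV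
  have hinner : cutoffAverage V x r ≤ cutoffAverage V x 0 := by
    refine antitoneOn_of_hasDerivWithinAt_nonpos (convex_Icc 0 r) hcont.continuousOn
      (fun ρ hρ => (hasDerivAt_cutoffAverage x hV (interior_Icc.subset hρ).1).hasDerivWithinAt)
      (fun ρ hρ => ?_) (left_mem_Icc.2 hr.le) (right_mem_Icc.2 hr.le) hr.le
    rw [interior_Icc] at hρ
    have := hρ.1
    exact mul_nonpos_of_nonneg_of_nonpos (by positivity) (hsuper ρ hρ)
  have houter : cutoffAverage V x R + r / (6 * R ^ d) * a * R ≤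
      cutoffAverage V x r + r / (6 * R ^ d) * a * r := by
    refine antitoneOn_of_hasDerivWithinAt_nonpos (convex_Icc r R)
      (f := fun ρ => cutoffAverage V x ρ + r / (6 * R ^ d) * a * ρ) (by fun_prop)
      (fun ρ hρ => ((hasDerivAt_cutoffAverage x hV (hr.trans (interior_Icc.subset hρ).1)).add
        ((hasDerivAt_id ρ).const_mul _)).hasDerivWithinAt)
      (fun ρ hρ => ?_) (left_mem_Icc.2 hrR) (right_mem_Icc.2 hrR) hrR
    rw [interior_Icc] at hρ
    have hρ0 : 0 < ρ := hr.trans hρ.1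
    have hweight : r / (6 * R ^ d) ≤ ρ * (ρ ^ d)⁻¹ / 6 :=
      calc r / (6 * R ^ d) = r * (R ^ d)⁻¹ / 6 := by ring
        _ ≤ ρ * (ρ ^ d)⁻¹ / 6 := by
            have hR0 : 0 < R := hr.trans_le hrR
            gcongr
            exacts [hρ.1.le, hρ.2.le]
    have hpos : 0 ≤ ρ * (ρ ^ d)⁻¹ / 6 := by positivity
    nlinarith [hmass ρ hρ]
  rw [← cutoffAverage_zero]
  linarith [cutoffAverage_nonneg x hV0 R]

lemma le_cutoffAverage_add_of_le_integral_mul_spaceLap (hV : Continuous V) {N r : ℝ} (hr : 0 < r)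
    (hlap : ∀ ρ ∈ Ioo 0 r,
      -(N * ∫ z, cutoff x ρ z ^ 3) ≤ ∫ z, V z * spaceLap (cutoff x ρ ^ 3) z) :
    V x * (∫ y : Space d, cutoff 0 1 y ^ 2) ≤
      cutoffAverage V x r + N * (∫ y : Space d, cutoff 0 1 y ^ 3) / 12 * r ^ 2 := by
  have hcont := continuous_cutoffAverage x hV
  set I := ∫ y : Space d, cutoff 0 1 y ^ 3
  have hmono := monotoneOn_of_hasDerivWithinAt_nonneg (convex_Icc 0 r)
    (f := fun ρ => cutoffAverage V x ρ + N * I / 12 * ρ ^ 2) (by fun_prop)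
    (fun ρ hρ => ((hasDerivAt_cutoffAverage x hV (interior_Icc.subset hρ).1).add
      ((hasDerivAt_pow 2 ρ).const_mul _)).hasDerivWithinAt)
    (fun ρ hρ => ?_) (left_mem_Icc.2 hr.le) (right_mem_Icc.2 hr.le) hr.le
  · simpa [cutoffAverage_zero] using hmono
  · rw [interior_Icc] at hρ
    have hρ0 := hρ.1
    have hbound := hlap ρ hρ
    rw [integral_cutoff_pow x hρ0] at hbound
    calc (0 : ℝ) = ρ * (ρ ^ d)⁻¹ / 6 * -(N * (ρ ^ d * I)) + N * I / 12 * (2 * ρ) := by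
          field_simp; ring
      _ ≤ _ := by
          have := mul_le_mul_of_nonneg_left hbound (a := ρ * (ρ ^ d)⁻¹ / 6) (by positivity)
          simpa using this

end CutoffAverage

/-! ### Finite differences of solutions of the fast diffusion equation -/

lemma mul_rpow_sub_one_mul_sub_le {v w q : ℝ} (hv : 0 < v) (hw : 0 ≤ w) (hq : 1 ≤ q) :
    q * v ^ (q - 1) * (w - v) ≤ w ^ q - v ^ q := by
  have hbernoulli := one_add_mul_self_le_rpow_one_add (s := w / v - 1)
    (by linarith [div_nonneg hw hv.le]) hq
  rw [add_sub_cancel, div_rpow hw hv.le, le_div_iff₀ (rpow_pos_of_pos hv q)] at hbernoulli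
  have hvq : v ^ q = v ^ (q - 1) * v := by rw [← rpow_add_one hv.ne', sub_add_cancel]
  have hexpand : (1 + q * (w / v - 1)) * v ^ q = v ^ q + q * v ^ (q - 1) * (w - v) := by
    rw [hvq]; field_simp
  linarith

section DiscreteEquation

variable {d : ℕ} {m : ℝ} {Q C : Set (ℝ × Space d)} {u : ℝ → Space d → ℝ}

lemma mul_discreteLap_le_discreteLap_rpow {v : Space d → ℝ} {x : Space d} {q : ℝ} (h : ℝ)
    (hx : 0 < v x) (hv : ∀ y, 0 ≤ v y) (hq : 1 ≤ q) :
    q * v x ^ (q - 1) * discreteLap h v x ≤ discreteLap h (fun y => v y ^ q) x := by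
  rw [discreteLap, discreteLap, Finset.mul_sum]
  refine Finset.sum_le_sum fun i _ => ?_
  linarith [mul_rpow_sub_one_mul_sub_le hx (hv (x + h • unitVec i)) hq,
    mul_rpow_sub_one_mul_sub_le hx (hv (x - h • unitVec i)) hq]

lemma discreteLap_le_of_forall_le {f g : Space d → ℝ} {x : Space d} (hx : f x = g x)
    (hfg : ∀ y, f y ≤ g y) (h : ℝ) : discreteLap h f x ≤ discreteLap h g x :=
  Finset.sum_le_sum fun i _ => by linarith [hfg (x + h • unitVec i), hfg (x - h • unitVec i)]

lemma discreteLap_const_mul (h c : ℝ) (f : Space d → ℝ) (x : Space d) :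
    discreteLap h (fun y => c * f y) x = c * discreteLap h f x := by
  rw [discreteLap, discreteLap, Finset.mul_sum]
  exact Finset.sum_congr rfl fun i _ => by ring

lemma mul_discreteLap_rpow_le {v : Space d → ℝ} {x : Space d} {p : ℝ} (h : ℝ) (hx : 0 < v x)
    (hv : ∀ y, 0 ≤ v y) (hm : 0 < m) (hp : 1 ≤ p) :
    p * v x ^ (p - 1) * discreteLap h (fun y => v y ^ m) x
      ≤ discreteLap h (fun y => p * m / (p + m - 1) * v y ^ (p + m - 1)) x := by
  have hexp : 0 < p + m - 1 := by linarith
  have hconvex := mul_discreteLap_le_discreteLap_rpow (v := fun y => v y ^ m)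
    (q := (p + m - 1) / m) h (rpow_pos_of_pos hx m) (fun y => rpow_nonneg (hv y) m)
    ((one_le_div hm).2 (by linarith))
  simp only [← rpow_mul (hv _), mul_div_cancel₀ _ hm.ne', mul_sub, mul_one] at hconvex
  rw [discreteLap_const_mul, show p - 1 = p + m - 1 - m by ring]
  refine le_of_eq_of_le ?_
    (mul_le_mul_of_nonneg_left hconvex (by positivity : 0 ≤ p * m / (p + m - 1)))
  field_simp

lemma IsFDESol.contDiffOn_rpow (hu : IsFDESol m Q u) (n : ℕ) (q : ℝ) :
    ContDiffOn ℝ n (fun p : ℝ × Space d => u p.1 p.2 ^ q) Q :=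
  (hu.2.1.of_le (mod_cast le_top)).rpow_const_of_ne fun p hp => (hu.1 p hp).ne'

lemma eventually_forall_Ioc_of_eventually {P : ℝ → Prop} (hP : ∀ᶠ h in 𝓝[>] 0, P h) :
    ∀ᶠ h in 𝓝[>] (0 : ℝ), ∀ s ∈ Ioc 0 h, P s := by
  obtain ⟨δ, hδ, hsub⟩ := mem_nhdsGT_iff_exists_Ioo_subset.1 hP
  filter_upwards [Ioo_mem_nhdsGT hδ] with h hh s hs
  exact hsub ⟨hs.1, hs.2.trans_lt hh.2⟩

lemma IsFDESol.eventually_abs_mul_discreteLap_sub_le (hu : IsFDESol m Q u) (hQ : IsOpen Q)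
    (hC : IsCompact C) (hCQ : C ⊆ Q) {ε : ℝ} (hε : 0 < ε) :
    ∀ᶠ h in 𝓝[>] (0 : ℝ), ∀ p ∈ C, ∀ a ∈ Ioc (0 : ℝ) 1,
      |a * discreteLap h (fun y => u p.1 y ^ m) p.2 - h * (u p.1 p.2 - u (p.1 - a * h) p.2)|
        ≤ ε * a * h ^ 2 := by
  have htime := eventually_forall_Ioc_of_eventually
    (eventually_forall_isCompact_abs_timeDifference_sub_le (F := u) hC hQ hCQ
      (hu.2.1.of_le (mod_cast le_top)) (half_pos hε))
  have hspace := eventually_forall_isCompact_abs_discreteLap_sub_le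
    (F := fun s y => u s y ^ m) hC hQ hCQ (hu.contDiffOn_rpow 2 m) (half_pos hε)
  filter_upwards [self_mem_nhdsWithin, htime, hspace] with h (hh : 0 < h) ht hs p hp a ha
  have ht := ht (a * h) ⟨mul_pos ha.1 hh, mul_le_of_le_one_left hh.le ha.2⟩ p hp
  rw [hu.2.2 p (hCQ hp)] at ht
  calc _ = |a * (discreteLap h (fun y => u p.1 y ^ m) p.2
          - h ^ 2 * spaceLap (fun y => u p.1 y ^ m) p.2)
        - h * (u p.1 p.2 - u (p.1 - a * h) p.2
          - a * h * spaceLap (fun y => u p.1 y ^ m) p.2)| := by ring_nf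
    _ ≤ a * (ε / 2 * h ^ 2) + h * (ε / 2 * (a * h)) := by
        refine (abs_sub _ _).trans ?_
        rw [abs_mul, abs_mul, abs_of_pos ha.1, abs_of_pos hh]
        exact add_le_add (mul_le_mul_of_nonneg_left (hs p hp) ha.1.le)
          (mul_le_mul_of_nonneg_left ht hh.le)
    _ = ε * a * h ^ 2 := by ring

lemma IsFDESol.isDiscreteSubsolutionOn_rpow (hu : IsFDESol m Q u) (hu0 : ∀ s y, 0 ≤ u s y)
    (hm : 0 < m) (hQ : IsOpen Q) (hC : IsCompact C) (hCQ : C ⊆ Q) {p : ℝ} (hp : 1 ≤ p) :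
    IsDiscreteSubsolutionOn (fun s y => u s y ^ p)
      (fun s y => p * m / (p + m - 1) * u s y ^ (p + m - 1)) C := by
  intro ε hε
  have hbdd : BddAbove ((fun x : ℝ × Space d => p * u x.1 x.2 ^ (p - 1)) '' C) :=
    (hC.image_of_continuousOn
      ((continuousOn_const.mul (hu.contDiffOn_rpow 0 (p - 1)).continuousOn).mono hCQ)).bddAbove
  obtain ⟨B, hB⟩ := hbdd
  obtain ⟨δ, hδ, hBδ⟩ := exists_pos_mul_lt hε B
  filter_upwards [self_mem_nhdsWithin, hu.eventually_abs_mul_discreteLap_sub_le hQ hC hCQ hδ]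
    with h (hh : 0 < h) happrox x hx
  have hpos := hu.1 x (hCQ hx)
  have hslope : 0 ≤ p * u x.1 x.2 ^ (p - 1) := by positivity
  have heq := (abs_le.1 (happrox x hx 1 ⟨one_pos, le_rfl⟩)).1
  rw [one_mul, one_mul, mul_one] at heq
  have htime := mul_rpow_sub_one_mul_sub_le hpos (hu0 (x.1 - h) x.2) hp
  have hspace := mul_discreteLap_rpow_le h hpos (hu0 x.1) hm hp
  have hδ' : p * u x.1 x.2 ^ (p - 1) * δ ≤ ε :=
    (mul_le_mul_of_nonneg_right (hB (mem_image_of_mem _ hx)) hδ.le).trans hBδ.le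
  calc h * (u x.1 x.2 ^ p - u (x.1 - h) x.2 ^ p)
      ≤ p * u x.1 x.2 ^ (p - 1) * (h * (u x.1 x.2 - u (x.1 - h) x.2)) := by
        linarith [mul_le_mul_of_nonneg_left htime hh.le]
    _ ≤ p * u x.1 x.2 ^ (p - 1) * discreteLap h (fun y => u x.1 y ^ m) x.2
          + p * u x.1 x.2 ^ (p - 1) * δ * h ^ 2 := by
        linarith [mul_le_mul_of_nonneg_left heq hslope]
    _ ≤ _ := add_le_add hspace (mul_le_mul_of_nonneg_right hδ' (sq_nonneg h))

lemma IsFDESol.eventually_discreteLap_rpow_le (hu : IsFDESol m Q u) (hQ : IsOpen Q)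
    (hC : IsCompact C) (hCQ : C ⊆ Q) {ε : ℝ} (hε : 0 < ε) :
    ∀ᶠ h in 𝓝[>] (0 : ℝ), ∀ p ∈ C, ∀ a ∈ Ioc (0 : ℝ) 1,
      discreteLap h (fun y => u p.1 y ^ m) p.2
        ≤ a⁻¹ * (h * (u p.1 p.2 - u (p.1 - a * h) p.2)) + ε * h ^ 2 := by
  filter_upwards [hu.eventually_abs_mul_discreteLap_sub_le hQ hC hCQ hε] with h hh p hp a ha
  have hupper := (abs_le.1 (hh p hp a ha)).2
  rw [← sub_le_iff_le_add, le_inv_mul_iff₀ ha.1]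
  linarith

end DiscreteEquation

/-! ### Persistence of mass -/

lemma rpow_le_rpow_sub_one_mul_add {n A x : ℝ} (hn0 : 0 ≤ n) (hn1 : n ≤ 1) (hA : 0 < A)
    (hx : 0 ≤ x) : x ^ n ≤ A ^ (n - 1) * x + A ^ n := by
  rcases le_total x A with hxA | hAx
  · have := rpow_le_rpow hx hxA hn0
    have : 0 ≤ A ^ (n - 1) * x := by positivity
    linarith
  · have hx' : 0 < x := hA.trans_le hAx
    calc x ^ n = x ^ (n - 1) * x := by rw [← rpow_add_one hx'.ne', sub_add_cancel]
      _ ≤ A ^ (n - 1) * x :=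
          mul_le_mul_of_nonneg_right (rpow_le_rpow_of_nonpos hA hAx (by linarith)) hx
      _ ≤ _ := le_add_of_nonneg_right (rpow_nonneg hA.le n)

section MassPersistence

variable {d : ℕ} {n : ℝ}

lemma exists_abs_spaceLap_cutoff_pow_le_rpow (d : ℕ) (hn0 : 0 ≤ n) (hn1 : n < 1)
    {ρ : ℝ} (hρ : 0 < ρ) :
    ∃ k : ℕ, ∃ D ≥ 0, ∀ c y : Space d,
      |spaceLap (cutoff c ρ ^ (k + 3)) y| ≤ D * (cutoff c ρ ^ (k + 3)) y ^ n := by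
  obtain ⟨k, hk⟩ := exists_nat_ge ((3 * n - 1) / (1 - n))
  rw [div_le_iff₀ (by linarith)] at hk
  refine ⟨k, _, by positivity, fun c y => (abs_spaceLap_cutoff_pow_le hρ k y).trans
    (mul_le_mul_of_nonneg_left ?_ (by positivity))⟩
  rw [Pi.pow_apply, ← rpow_natCast, ← rpow_natCast, ← rpow_mul (cutoff_nonneg c ρ y)]
  exact rpow_le_rpow_of_exponent_ge' (cutoff_nonneg c ρ y) (cutoff_le_one c ρ y) (by positivity)
    (by push_cast; linarith)

lemma abs_integral_rpow_mul_le {W K L : Space d → ℝ} {A D : ℝ} (hn0 : 0 ≤ n) (hn1 : n ≤ 1)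
    (hA : 0 < A) (hW : Continuous W) (hW0 : ∀ y, 0 ≤ W y) (hK : Continuous K)
    (hKc : HasCompactSupport K) (hK0 : ∀ y, 0 ≤ K y) (hL0 : ∀ y ∉ tsupport K, L y = 0)
    (hL : ∀ y, |L y| ≤ D * K y ^ n) (hD : 0 ≤ D) :
    |∫ y, W y ^ n * L y|
      ≤ D * (A ^ (n - 1) * (∫ y, W y * K y) + A ^ n * volume.real (tsupport K)) := by
  have hvol : volume (tsupport K) < ⊤ := hKc.measure_lt_top
  have hWK : Integrable fun y => A ^ (n - 1) * (W y * K y) :=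
    (integrable_mul_of_hasCompactSupport hW hK hKc).const_mul _
  have hind : Integrable ((tsupport K).indicator fun _ => A ^ n) :=
    (integrable_indicator_iff (isClosed_tsupport K).measurableSet).2
      (integrableOn_const hvol.ne)
  have hpoint : ∀ y, ‖W y ^ n * L y‖
      ≤ D * (A ^ (n - 1) * (W y * K y) + (tsupport K).indicator (fun _ => A ^ n) y) := fun y => by
    by_cases hy : y ∈ tsupport K
    · rw [indicator_of_mem hy, norm_mul, norm_of_nonneg (rpow_nonneg (hW0 y) n)]
      calc W y ^ n * ‖L y‖ ≤ W y ^ n * (D * K y ^ n) :=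
            mul_le_mul_of_nonneg_left (hL y) (rpow_nonneg (hW0 y) n)
        _ = D * (W y * K y) ^ n := by rw [mul_rpow (hW0 y) (hK0 y)]; ring
        _ ≤ _ := mul_le_mul_of_nonneg_left (rpow_le_rpow_sub_one_mul_add hn0 hn1 hA
            (mul_nonneg (hW0 y) (hK0 y))) hD
    · simp [hL0 y hy, hy, image_eq_zero_of_notMem_tsupport hy]
  rw [← Real.norm_eq_abs]
  refine (norm_integral_le_of_norm_le ((hWK.add hind).const_mul D)
    (ae_of_all _ hpoint)).trans_eq ?_
  simp only [Pi.add_apply]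
  rw [integral_const_mul, integral_add hWK hind, integral_const_mul,
    integral_indicator_const _ (isClosed_tsupport K).measurableSet, smul_eq_mul, mul_comm (A ^ n)]

lemma half_le_of_sub_le_integral {Y : ℝ → ℝ} {s B₁ B₂ : ℝ} (hY : Continuous Y) (hB₁ : 0 ≤ B₁)
    (hs : 0 ≤ s)
    (hdecay : ∀ a ∈ Icc 0 s, Y a - Y s ≤ ∫ r in a..s, (B₁ * Y r + B₂))
    (hrate : 0 ≤ B₁ * Y 0 + B₂) (hsmall : s * (B₁ * Y 0 + B₂) ≤ Y 0 / 2) : Y 0 / 2 ≤ Y s := by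
  have hcompact : IsCompact (Icc 0 s ∩ {r | Y 0 ≤ Y r}) :=
    isCompact_Icc.inter_right (isClosed_le continuous_const hY)
  obtain ⟨a, ⟨ha, hYa : Y 0 ≤ Y a⟩, hlast⟩ :=
    hcompact.exists_isGreatest ⟨0, left_mem_Icc.2 hs, le_refl (Y 0)⟩
  have hbelow : ∀ r ∈ Ioo a s, Y r ≤ Y 0 := fun r hr => by
    by_contra! hlt
    exact hr.1.not_ge (hlast ⟨⟨ha.1.trans hr.1.le, hr.2.le⟩, hlt.le⟩)
  have h_int : ∫ r in a..s, (B₁ * Y r + B₂) ≤ (s - a) * (B₁ * Y 0 + B₂) := by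
    rw [← smul_eq_mul, ← intervalIntegral.integral_const]
    refine intervalIntegral.integral_mono_on_of_le_Ioo ha.2
      ((continuous_const.mul hY).add continuous_const |>.intervalIntegrable _ _) (by simp)
      fun r hr => ?_
    linarith [mul_le_mul_of_nonneg_left (hbelow r hr) hB₁]
  linarith [hdecay a ha, mul_nonneg ha.1 hrate]

lemma half_integral_le_of_isDiscreteSubsolutionOn_neg {w : ℝ → Space d → ℝ} {K : Space d → ℝ}
    {D s : ℝ} (hn0 : 0 ≤ n) (hn1 : n ≤ 1) (hw : Continuous fun p : ℝ × Space d => w p.1 p.2)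
    (hw0 : ∀ s y, 0 ≤ w s y) (hK : ContDiff ℝ 2 K) (hKc : HasCompactSupport K)
    (hK0 : ∀ y, 0 ≤ K y) (hD : 0 ≤ D) (hlap : ∀ y, |spaceLap K y| ≤ D * K y ^ n) (hs : 0 ≤ s)
    (hsub : ∀ r ∈ Ioo 0 s,
      IsDiscreteSubsolutionOn (fun t y => -w t y) (fun t y => -w t y ^ n) ({r} ×ˢ tsupport K))
    (hmass : 0 < ∫ y, w 0 y * K y)
    (hsmall : s * (D * (1 + volume.real (tsupport K))) ≤ (∫ y, w 0 y * K y) ^ (1 - n) / 2) :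
    (∫ y, w 0 y * K y) / 2 ≤ ∫ y, w s y * K y := by
  set M := ∫ y, w 0 y * K y with hM
  have hwn : Continuous fun p : ℝ × Space d => w p.1 p.2 ^ n := hw.rpow_const fun _ => Or.inr hn0
  have hYcont := continuous_integral_mul_of_hasCompactSupport hw hK.continuous hKc
  have hrate : D * M ^ (n - 1) * M + D * (M ^ n * volume.real (tsupport K))
      = M ^ n * (D * (1 + volume.real (tsupport K))) := by
    rw [mul_assoc, ← rpow_add_one hmass.ne', sub_add_cancel]; ring
  have hhomog : M ^ n * M ^ (1 - n) = M := by rw [← rpow_add hmass]; simp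
  refine half_le_of_sub_le_integral (B₁ := D * M ^ (n - 1))
    (B₂ := D * (M ^ n * volume.real (tsupport K))) hYcont (by positivity) hs
    (fun a ha => ?_) (by rw [← hM, hrate]; positivity) ?_
  · have hweak := IsDiscreteSubsolutionOn.integral_sub_le hw.neg hwn.neg hK hKc hK0 ha.2
      fun r hr => hsub r ⟨ha.1.trans_lt hr.1, hr.2⟩
    simp only [neg_mul, integral_neg] at hweak
    have hmono : ∫ r in a..s, -∫ y, w r y ^ n * spaceLap K y ≤ ∫ r in a..s,
        (D * M ^ (n - 1) * (∫ y, w r y * K y) + D * (M ^ n * volume.real (tsupport K))) := by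
      refine intervalIntegral.integral_mono_on ha.2
        ((continuous_integral_mul_of_hasCompactSupport hwn (continuous_spaceLap hK)
          (hasCompactSupport_spaceLap hKc)).neg.intervalIntegrable _ _)
        ((by fun_prop : Continuous _).intervalIntegrable _ _) fun r _ => ?_
      have := (abs_le.1 (abs_integral_rpow_mul_le (W := w r) hn0 hn1 hmass
        (hw.comp (Continuous.prodMk_right r)) (hw0 r) hK.continuous hKc hK0
        (fun y => spaceLap_eq_zero_of_notMem_tsupport) hlap hD)).1
      linarith
    linarith
  · rw [← hM, hrate]
    nlinarith [mul_le_mul_of_nonneg_left hsmall (rpow_nonneg hmass.le n)]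

end MassPersistence

/-! ### The scaling envelope -/

section ScalingEnvelope

variable {d : ℕ} {m T κ L : ℝ} {Ω : Set (Space d)} {U : ℝ → Space d → ℝ}

/-- A solution of the fast diffusion equation on `(0, T) × Ω`, extended to a continuous nonnegative
function on the whole space-time so that it can be integrated against cutoffs at every time. -/
structure IsContFDESol (m T : ℝ) (Ω : Set (Space d)) (U : ℝ → Space d → ℝ) : Prop where
  continuous : Continuous fun p : ℝ × Space d => U p.1 p.2
  nonneg : ∀ s y, 0 ≤ U s y
  isFDESol : IsFDESol m (Ioo 0 T ×ˢ Ω) U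

/-- The infimum of the rescaled functions `a ^ (-κ) * U (a * s)` over `a = exp (-τ)`,
`0 ≤ τ ≤ L`. For `κ = 1 / (1 - m)` the equation is invariant under each of these rescalings. -/
noncomputable def scalingEnvelope (κ L : ℝ) (U : ℝ → Space d → ℝ) (s : ℝ) (y : Space d) : ℝ :=
  sInf ((fun τ => exp (κ * τ) * U (exp (-τ) * s) y) '' Icc 0 L)

lemma IsContFDESol.continuous_rescaled (hU : IsContFDESol m T Ω U) (κ : ℝ) :
    Continuous fun q : (ℝ × Space d) × ℝ => exp (κ * q.2) * U (exp (-q.2) * q.1.1) q.1.2 :=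
  (by fun_prop : Continuous fun q : (ℝ × Space d) × ℝ => exp (κ * q.2)).mul
    (hU.continuous.comp (f := fun q : (ℝ × Space d) × ℝ => (exp (-q.2) * q.1.1, q.1.2))
      (by fun_prop))

lemma IsContFDESol.continuous_scalingEnvelope (hU : IsContFDESol m T Ω U) (κ L : ℝ) :
    Continuous fun p : ℝ × Space d => scalingEnvelope κ L U p.1 p.2 :=
  isCompact_Icc.continuous_sInf
    (f := fun (p : ℝ × Space d) τ => exp (κ * τ) * U (exp (-τ) * p.1) p.2)
    (hU.continuous_rescaled κ)

lemma IsContFDESol.scalingEnvelope_le (hU : IsContFDESol m T Ω U) {τ : ℝ} (hτ : τ ∈ Icc 0 L)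
    (s : ℝ) (y : Space d) : scalingEnvelope κ L U s y ≤ exp (κ * τ) * U (exp (-τ) * s) y := by
  refine csInf_le ⟨0, ?_⟩ (mem_image_of_mem _ hτ)
  rintro _ ⟨σ, -, rfl⟩
  exact mul_nonneg (exp_pos _).le (hU.nonneg _ _)

lemma IsContFDESol.exists_scalingEnvelope_eq (hU : IsContFDESol m T Ω U) (hL : 0 ≤ L) (s : ℝ)
    (y : Space d) : ∃ τ ∈ Icc 0 L, scalingEnvelope κ L U s y = exp (κ * τ) * U (exp (-τ) * s) y :=
  isCompact_Icc.exists_sInf_image_eq (nonempty_Icc.2 hL)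
    ((hU.continuous_rescaled κ).comp (Continuous.prodMk_right (s, y))).continuousOn

lemma IsContFDESol.scalingEnvelope_nonneg (hU : IsContFDESol m T Ω U) (hL : 0 ≤ L) (s : ℝ)
    (y : Space d) : 0 ≤ scalingEnvelope κ L U s y := by
  obtain ⟨τ, -, hτ⟩ := hU.exists_scalingEnvelope_eq (κ := κ) hL s y
  exact hτ ▸ mul_nonneg (exp_pos _).le (hU.nonneg _ _)

lemma IsContFDESol.scalingEnvelope_le_self (hU : IsContFDESol m T Ω U) (hL : 0 ≤ L) (s : ℝ)
    (y : Space d) : scalingEnvelope κ L U s y ≤ U s y := by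
  simpa using hU.scalingEnvelope_le (κ := κ) (left_mem_Icc.2 hL) s y

lemma IsContFDESol.scalingEnvelope_zero (hU : IsContFDESol m T Ω U) (hκ : 0 ≤ κ) (hL : 0 ≤ L)
    (y : Space d) : scalingEnvelope κ L U 0 y = U 0 y := by
  refine le_antisymm (hU.scalingEnvelope_le_self hL 0 y) ?_
  obtain ⟨τ, hτ, heq⟩ := hU.exists_scalingEnvelope_eq (κ := κ) hL 0 y
  rw [heq, mul_zero]
  exact le_mul_of_one_le_left (hU.nonneg 0 y) (one_le_exp (mul_nonneg hκ hτ.1))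

lemma IsContFDESol.discreteLap_scalingEnvelope_rpow_le (hU : IsContFDESol m T Ω U) (hm : 0 ≤ m)
    (hL : 0 ≤ L) {τ s : ℝ} (hτ : τ ∈ Icc 0 L) {y : Space d} (h : ℝ)
    (htouch : scalingEnvelope κ L U s y = exp (κ * τ) * U (exp (-τ) * s) y) :
    discreteLap h (fun z => scalingEnvelope κ L U s z ^ m) y
      ≤ exp (κ * m * τ) * discreteLap h (fun z => U (exp (-τ) * s) z ^ m) y := by
  have hpow : ∀ z, (exp (κ * τ) * U (exp (-τ) * s) z) ^ m
      = exp (κ * m * τ) * U (exp (-τ) * s) z ^ m := fun z => by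
    rw [mul_rpow (exp_pos _).le (hU.nonneg _ _), ← exp_mul, mul_right_comm]
  rw [← discreteLap_const_mul]
  refine discreteLap_le_of_forall_le (by rw [htouch, hpow]) (fun z => ?_) h
  rw [← hpow]
  exact rpow_le_rpow (hU.scalingEnvelope_nonneg hL s z) (hU.scalingEnvelope_le hτ s z) hm

/- A minimising rescaling at `(s, y)` lies above the envelope and touches it at `(s, y)`, so the
equation of that rescaling passes to the envelope as an inequality. -/
lemma IsContFDESol.isDiscreteSubsolutionOn_neg_scalingEnvelope (hU : IsContFDESol m T Ω U)
    (hΩ : IsOpen Ω) (hm : 0 < m) (hκ : κ * (1 - m) = 1) (hκ0 : 0 ≤ κ) (hL : 0 ≤ L)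
    {B : Set (Space d)} (hB : IsCompact B) (hBΩ : B ⊆ Ω) {s : ℝ} (hs : s ∈ Ioo 0 T) :
    IsDiscreteSubsolutionOn (fun t y => -scalingEnvelope κ L U t y)
      (fun t y => -scalingEnvelope κ L U t y ^ m) ({s} ×ˢ B) := by
  intro ε hε
  obtain ⟨δ, hδ, hLδ⟩ := exists_pos_mul_lt hε (exp (κ * m * L))
  have hCQ : Icc (exp (-L) * s) s ×ˢ B ⊆ Ioo 0 T ×ˢ Ω :=
    prod_mono (fun r hr => ⟨(mul_pos (exp_pos _) hs.1).trans_le hr.1, hr.2.trans_lt hs.2⟩) hBΩ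
  filter_upwards [self_mem_nhdsWithin, hU.isFDESol.eventually_discreteLap_rpow_le
    (isOpen_Ioo.prod hΩ) (isCompact_Icc.prod hB) hCQ hδ] with h (hh : 0 < h) happrox
  rintro ⟨r, y⟩ ⟨hr, hy⟩
  obtain rfl : r = s := hr
  obtain ⟨τ, hτ, htouch⟩ := hU.exists_scalingEnvelope_eq (κ := κ) hL r y
  have heq := happrox (exp (-τ) * r, y) ⟨⟨mul_le_mul_of_nonneg_right
    (exp_le_exp.2 (neg_le_neg hτ.2)) hs.1.le, mul_le_of_le_one_left hs.1.le
      (exp_le_one_iff.2 (neg_nonpos.2 hτ.1))⟩, hy⟩ (exp (-τ))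
    ⟨exp_pos _, exp_le_one_iff.2 (neg_nonpos.2 hτ.1)⟩
  have htime := hU.scalingEnvelope_le (κ := κ) hτ (r - h) y
  rw [mul_sub] at htime
  have hspace := hU.discreteLap_scalingEnvelope_rpow_le hm.le hL hτ h htouch
  have hscale : exp (κ * m * τ) * (exp (-τ))⁻¹ = exp (κ * τ) := by
    rw [← exp_neg, ← exp_add]
    congr 1
    linear_combination -τ * hκ
  have hδε : exp (κ * m * τ) * δ ≤ ε := (mul_le_mul_of_nonneg_right (exp_le_exp.2
    (mul_le_mul_of_nonneg_left hτ.2 (mul_nonneg hκ0 hm.le))) hδ.le).trans hLδ.le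
  have hmul := mul_le_mul_of_nonneg_left heq (exp_pos (κ * m * τ)).le
  rw [mul_add, ← mul_assoc (exp _), hscale] at hmul
  simp only [htouch, neg_eq_neg_one_mul (_ ^ m), discreteLap_const_mul]
  nlinarith [mul_le_mul_of_nonneg_left htime hh.le,
    mul_le_mul_of_nonneg_right hδε (sq_nonneg h)]

end ScalingEnvelope

/-! ### The lower bound -/

section LowerBound

variable {d : ℕ} {m T κ L t : ℝ} {Ω : Set (Space d)} {U : ℝ → Space d → ℝ} {K : Space d → ℝ}

lemma one_sub_sq_div_sq_le_cutoff {c y : Space d} {r ρ₀ ρ : ℝ} (hy : ‖y - c‖ ≤ r) (hρ₀ : 0 < ρ₀)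
    (hρ : ρ₀ ≤ ρ) : 1 - r ^ 2 / ρ₀ ^ 2 ≤ cutoff c ρ y := by
  refine le_max_of_le_right (sub_le_sub_left ?_ 1)
  gcongr

lemma mul_setIntegral_ball_le_integral_mul_cutoff_pow {W : Space d → ℝ} (hW : Continuous W)
    (hW0 : ∀ y, 0 ≤ W y) (n : ℕ) :
    (3 / 4) ^ (n + 1) * ∫ y in ball 0 1, W y ≤ ∫ y, W y * (cutoff 0 2 ^ (n + 1)) y := by
  have h_int : Integrable fun y => W y * (cutoff 0 2 ^ (n + 1)) y :=
    integrable_mul_of_hasCompactSupport hW ((continuous_cutoff 0 2).pow _)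
      (hasCompactSupport_cutoff_pow two_pos n)
  have hball : IntegrableOn W (ball 0 1) :=
    (hW.continuousOn.integrableOn_compact (isCompact_closedBall 0 1)).mono_set
      ball_subset_closedBall
  rw [← integral_const_mul]
  refine (setIntegral_mono_on (hball.const_mul _) h_int.integrableOn measurableSet_ball
    fun y hy => ?_).trans (setIntegral_le_integral h_int (ae_of_all _ fun y =>
      mul_nonneg (hW0 y) (pow_nonneg (cutoff_nonneg 0 2 y) _)))
  rw [mul_comm, Pi.pow_apply]
  refine mul_le_mul_of_nonneg_left (pow_le_pow_left₀ (by norm_num) ?_ _) (hW0 y)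
  have := one_sub_sq_div_sq_le_cutoff (c := 0) (y := y) (by simpa using (mem_ball.1 hy).le) two_pos
    le_rfl
  norm_num at this ⊢
  exact this

lemma mul_cutoff_pow_le_cutoff_pow {x : Space d} (hx : x ∈ ball 0 1) {ρ : ℝ} (hρ : 4 ≤ ρ) (n : ℕ)
    (y : Space d) : (7 / 16) ^ 3 * (cutoff 0 2 ^ (n + 1)) y ≤ (cutoff x ρ ^ 3) y := by
  by_cases hy : y ∈ ball 0 2
  · rw [mem_ball_zero_iff] at hx hy
    refine (mul_le_of_le_one_right (by positivity)
      (pow_le_one₀ (cutoff_nonneg 0 2 y) (cutoff_le_one 0 2 y))).trans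
      (pow_le_pow_left₀ (by norm_num) ?_ 3)
    have := one_sub_sq_div_sq_le_cutoff (c := x) (y := y) (r := 3)
      (by linarith [norm_sub_le y x]) four_pos hρ
    norm_num at this ⊢
    exact this
  · rw [Pi.pow_apply, cutoff_pow_eq_zero two_pos n hy, mul_zero]
    exact pow_nonneg (cutoff_nonneg x ρ y) 3

lemma IsContFDESol.half_integral_le_integral_scalingEnvelope (hU : IsContFDESol m T Ω U)
    (hΩ : IsOpen Ω) (hm0 : 0 < m) (hm1 : m < 1) (hκ : κ * (1 - m) = 1) (hL : 0 ≤ L)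
    (hK : ContDiff ℝ 2 K) (hKc : HasCompactSupport K) (hK0 : ∀ y, 0 ≤ K y)
    (hKΩ : tsupport K ⊆ Ω) {D s : ℝ} (hD : 0 ≤ D) (hlap : ∀ y, |spaceLap K y| ≤ D * K y ^ m)
    (hs : 0 ≤ s) (hsT : s ≤ T) (hmass : 0 < ∫ y, U 0 y * K y)
    (hsmall : s * (D * (1 + volume.real (tsupport K))) ≤ (∫ y, U 0 y * K y) ^ (1 - m) / 2) :
    (∫ y, U 0 y * K y) / 2 ≤ ∫ y, scalingEnvelope κ L U s y * K y := by
  have hκ0 : 0 ≤ κ := by nlinarith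
  simp only [← hU.scalingEnvelope_zero hκ0 hL] at hmass hsmall ⊢
  exact half_integral_le_of_isDiscreteSubsolutionOn_neg hm0.le hm1.le
    (hU.continuous_scalingEnvelope κ L) (hU.scalingEnvelope_nonneg hL) hK hKc hK0 hD hlap hs
    (fun r hr => hU.isDiscreteSubsolutionOn_neg_scalingEnvelope hΩ hm0 hκ hκ0 hL hKc hKΩ
      ⟨hr.1, hr.2.trans_le hsT⟩) hmass hsmall

lemma IsContFDESol.scalingEnvelope_extinction_eq_zero (hU : IsContFDESol m T Ω U)
    (hext : ∀ y ∈ Ω, U T y = 0) (hL : 0 ≤ L) {y : Space d} (hy : y ∈ Ω) :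
    scalingEnvelope κ L U T y = 0 :=
  le_antisymm (hext y hy ▸ hU.scalingEnvelope_le_self hL T y) (hU.scalingEnvelope_nonneg hL T y)

/-- The potential `∫ w ^ m` over `(t, T)` of the scaling envelope `w`. It is superharmonic because
`w` is a supersolution that vanishes at time `T`. -/
noncomputable def envelopePotential (m κ L t T : ℝ) (U : ℝ → Space d → ℝ) (x : Space d) : ℝ :=
  ∫ s in t..T, scalingEnvelope κ L U s x ^ m

lemma IsContFDESol.continuous_scalingEnvelope_rpow (hU : IsContFDESol m T Ω U) (hm : 0 ≤ m)
    (κ L : ℝ) : Continuous fun p : ℝ × Space d => scalingEnvelope κ L U p.1 p.2 ^ m :=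
  (hU.continuous_scalingEnvelope κ L).rpow_const fun _ => Or.inr hm

lemma IsContFDESol.continuous_envelopePotential (hU : IsContFDESol m T Ω U) (hm : 0 ≤ m)
    (κ L t : ℝ) : Continuous (envelopePotential m κ L t T U) :=
  intervalIntegral.continuous_parametric_intervalIntegral_of_continuous'
    (f := fun x s => scalingEnvelope κ L U s x ^ m)
    ((hU.continuous_scalingEnvelope_rpow hm κ L).comp continuous_swap) _ _

lemma IsContFDESol.integral_envelopePotential_mul_spaceLap_le (hU : IsContFDESol m T Ω U)
    (hΩ : IsOpen Ω) (hext : ∀ y ∈ Ω, U T y = 0) (hm : 0 < m) (hκ : κ * (1 - m) = 1)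
    (hκ0 : 0 ≤ κ) (hL : 0 ≤ L) (ht : 0 ≤ t) (htT : t ≤ T)
    (hK : ContDiff ℝ 2 K) (hKc : HasCompactSupport K) (hK0 : ∀ y, 0 ≤ K y)
    (hKΩ : tsupport K ⊆ Ω) :
    ∫ z, envelopePotential m κ L t T U z * spaceLap K z
      ≤ -∫ y, scalingEnvelope κ L U t y * K y := by
  have hfinal : ∀ y, scalingEnvelope κ L U T y * K y = 0 := fun y => by
    by_cases hy : y ∈ tsupport K
    · rw [hU.scalingEnvelope_extinction_eq_zero hext hL (hKΩ hy), zero_mul]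
    · rw [image_eq_zero_of_notMem_tsupport hy, mul_zero]
  have hweak := IsDiscreteSubsolutionOn.integral_sub_le (hU.continuous_scalingEnvelope κ L).neg
    (hU.continuous_scalingEnvelope_rpow hm.le κ L).neg hK hKc hK0 htT fun r hr =>
      hU.isDiscreteSubsolutionOn_neg_scalingEnvelope hΩ hm hκ hκ0 hL hKc hKΩ
        ⟨ht.trans_lt hr.1, hr.2⟩
  simp only [neg_mul, integral_neg, hfinal, integral_zero, intervalIntegral.integral_neg] at hweak
  have hswap := intervalIntegral_integral_mul_swap
    (F := fun s y => scalingEnvelope κ L U s y ^ m)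
    (hU.continuous_scalingEnvelope_rpow hm.le κ L) (continuous_spaceLap hK)
    (hasCompactSupport_spaceLap hKc) t T
  simp only [envelopePotential]
  linarith

lemma IsContFDESol.envelopePotential_le (hU : IsContFDESol m T Ω U) (hm : 0 ≤ m)
    (hκ : κ * (1 - m) = 1) (hκ0 : 0 ≤ κ) (ht : 0 < t) (htT : t ≤ T) (x : Space d) :
    envelopePotential m κ (log (T / t)) t T U x ≤ T ^ κ * t ^ (-(κ * m)) * U t x ^ m := by
  have hT : 0 < T := ht.trans_le htT
  have hL : 0 ≤ log (T / t) := log_nonneg ((one_le_div ht).2 htT)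
  have hpoint : ∀ s ∈ Icc t T, scalingEnvelope κ (log (T / t)) U s x ^ m
      ≤ (T / t) ^ (κ * m) * U t x ^ m := fun s hs => by
    have hs0 : 0 < s := ht.trans_le hs.1
    have hle := hU.scalingEnvelope_le (κ := κ) (τ := log (s / t)) (L := log (T / t))
      ⟨log_nonneg ((one_le_div ht).2 hs.1),
        log_le_log (by positivity) (div_le_div_of_nonneg_right hs.2 ht.le)⟩ s x
    rw [mul_comm κ, ← rpow_def_of_pos (by positivity), exp_neg, exp_log (by positivity), inv_div,
      div_mul_cancel₀ _ hs0.ne'] at hle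
    refine (rpow_le_rpow (hU.scalingEnvelope_nonneg hL s x) hle hm).trans ?_
    rw [mul_rpow (by positivity) (hU.nonneg t x), ← rpow_mul (by positivity)]
    have := hU.nonneg t x
    gcongr
    exact hs.2
  have hbound : envelopePotential m κ (log (T / t)) t T U x
      ≤ (T - t) * ((T / t) ^ (κ * m) * U t x ^ m) := by
    rw [← smul_eq_mul, ← intervalIntegral.integral_const]
    exact intervalIntegral.integral_mono_on htT (((hU.continuous_scalingEnvelope_rpow hm _ _).comp
      (Continuous.prodMk_left x)).intervalIntegrable _ _) (by simp) hpoint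
  have hrpow : T ^ κ = T * T ^ (κ * m) := by
    rw [mul_comm, ← rpow_add_one hT.ne']; congr 1; linarith
  have := hU.nonneg t x
  calc _ ≤ T * ((T / t) ^ (κ * m) * U t x ^ m) :=
        hbound.trans (mul_le_mul_of_nonneg_right (by linarith) (by positivity))
    _ = _ := by rw [hrpow, div_rpow hT.le ht.le, rpow_neg ht.le]; ring

lemma IsContFDESol.mul_integral_scalingEnvelope_le (hU : IsContFDESol m T (ball 0 6) U)
    (hext : ∀ y ∈ ball 0 6, U T y = 0) (hm : 0 < m) (hκ : κ * (1 - m) = 1) (hκ0 : 0 ≤ κ)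
    (ht : 0 < t) (htT : t ≤ T) {x : Space d} (hx : x ∈ ball 0 1) (n : ℕ) :
    4 / (6 * 5 ^ d) * ((7 / 16) ^ 3 *
        ∫ y, scalingEnvelope κ (log (T / t)) U t y * (cutoff 0 2 ^ (n + 1)) y)
      ≤ T ^ κ * t ^ (-(κ * m)) * U t x ^ m * ∫ y : Space d, cutoff 0 1 y ^ 2 := by
  have hL : 0 ≤ log (T / t) := log_nonneg ((one_le_div ht).2 htT)
  set w := scalingEnvelope κ (log (T / t)) U t
  have hw0 : ∀ y, 0 ≤ w y := hU.scalingEnvelope_nonneg hL t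
  have hw : Continuous w :=
    (hU.continuous_scalingEnvelope κ _).comp (Continuous.prodMk_right t)
  have h_int : ∀ (c : Space d) {ρ : ℝ} (_ : 0 < ρ) (n : ℕ),
      Integrable fun y => w y * (cutoff c ρ ^ (n + 1)) y := fun c ρ hρ n =>
    integrable_mul_of_hasCompactSupport hw ((continuous_cutoff c ρ).pow _)
      (hasCompactSupport_cutoff_pow hρ n)
  have hball : ∀ ρ < 5, closedBall x ρ ⊆ ball 0 6 := fun ρ hρ =>
    closedBall_subset_ball' (by linarith [mem_ball.1 hx])
  have hlap : ∀ ρ, 0 < ρ → ρ < 5 → ∫ z, envelopePotential m κ (log (T / t)) t T U z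
      * spaceLap (cutoff x ρ ^ 3) z ≤ -∫ y, w y * (cutoff x ρ ^ 3) y := fun ρ hρ hρ5 =>
    hU.integral_envelopePotential_mul_spaceLap_le isOpen_ball hext hm hκ hκ0 hL ht.le htT
      (contDiff_cutoff_pow 0 2) (hasCompactSupport_cutoff_pow hρ 2)
      (fun y => pow_nonneg (cutoff_nonneg x ρ y) 3)
      ((tsupport_cutoff_pow_subset hρ 2).trans (hball ρ hρ5))
  have hmean := mul_le_of_integral_mul_spaceLap_le x (R := 5)
    (a := (7 / 16) ^ 3 * ∫ y, w y * (cutoff 0 2 ^ (n + 1)) y)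
    (hU.continuous_envelopePotential hm.le κ _ t)
    (fun z => intervalIntegral.integral_nonneg htT fun s _ =>
      rpow_nonneg (hU.scalingEnvelope_nonneg hL s z) m) four_pos (by norm_num)
    (mul_nonneg (by norm_num) (integral_nonneg fun y =>
      mul_nonneg (hw0 y) (pow_nonneg (cutoff_nonneg 0 2 y) _)))
    (fun ρ hρ => (hlap ρ hρ.1 (by linarith [hρ.2])).trans (neg_nonpos.2 (integral_nonneg fun y =>
      mul_nonneg (hw0 y) (pow_nonneg (cutoff_nonneg x ρ y) 3))))
    (fun ρ hρ => (hlap ρ (by linarith [hρ.1]) hρ.2).trans (neg_le_neg ?_))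
  · refine le_trans (by linarith) (mul_le_mul_of_nonneg_right
      (hU.envelopePotential_le hm.le hκ hκ0 ht htT x) (integral_cutoff_pow_pos 1).le)
  · rw [← integral_const_mul]
    refine integral_mono ((h_int 0 two_pos n).const_mul _) (h_int x (by linarith [hρ.1]) 2)
      fun y => ?_
    simpa only [mul_left_comm] using
      mul_le_mul_of_nonneg_left (mul_cutoff_pow_le_cutoff_pow hx hρ.1.le n y) (hw0 y)

lemma IsContFDESol.mul_setIntegral_le_integral_scalingEnvelope
    (hU : IsContFDESol m T (ball 0 6) U) (hm0 : 0 < m) (hm1 : m < 1) (hκ : κ * (1 - m) = 1)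
    (hL : 0 ≤ L) {k : ℕ} {D s : ℝ} (hD : 0 ≤ D)
    (hlap : ∀ y, |spaceLap (cutoff (0 : Space d) 2 ^ (k + 3)) y|
      ≤ D * (cutoff 0 2 ^ (k + 3)) y ^ m) (hs : 0 ≤ s) (hsT : s ≤ T)
    (hmass : 0 < ∫ y in ball 0 1, U 0 y)
    (hsmall : s * (D * (1 + volume.real (tsupport (cutoff (0 : Space d) 2 ^ (k + 3)))))
      ≤ ((3 / 4) ^ (k + 3) * ∫ y in ball 0 1, U 0 y) ^ (1 - m) / 2) :
    (3 / 4) ^ (k + 3) * (∫ y in ball 0 1, U 0 y) / 2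
      ≤ ∫ y, scalingEnvelope κ L U s y * (cutoff 0 2 ^ (k + 3)) y := by
  have hle := mul_setIntegral_ball_le_integral_mul_cutoff_pow (W := U 0)
    (hU.continuous.comp (Continuous.prodMk_right 0)) (hU.nonneg 0) (k + 2)
  refine (div_le_div_of_nonneg_right hle two_pos.le).trans
    (hU.half_integral_le_integral_scalingEnvelope isOpen_ball hm0 hm1 hκ hL
      (contDiff_cutoff_pow k 2) (hasCompactSupport_cutoff_pow two_pos (k + 2))
      (fun y => pow_nonneg (cutoff_nonneg 0 2 y) _)
      ((tsupport_cutoff_pow_subset two_pos (k + 2)).trans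
        (closedBall_subset_ball (by norm_num))) hD hlap hs hsT
      (lt_of_lt_of_le (by positivity) hle) (hsmall.trans ?_))
  gcongr

lemma rpow_mul_rpow_le_of_mul_le {b M v : ℝ} (hm : 0 < m) (hb : 0 ≤ b) (hM : 0 ≤ M) (hT : 0 < T)
    (ht : 0 < t) (hv : 0 ≤ v) (h : b * M ≤ T ^ κ * t ^ (-(κ * m)) * v ^ m) :
    b ^ (1 / m) * (M * T ^ (-κ)) ^ (1 / m) * t ^ κ ≤ v := by
  have hpow : b ^ (1 / m) * (M * T ^ (-κ)) ^ (1 / m) * t ^ κ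
      = (b * M * (T ^ (-κ) * t ^ (κ * m))) ^ m⁻¹ := by
    rw [show b * M * (T ^ (-κ) * t ^ (κ * m)) = b * (M * T ^ (-κ)) * t ^ (κ * m) by ring,
      one_div, mul_rpow (mul_nonneg hb (by positivity)) (by positivity),
      mul_rpow hb (by positivity), ← rpow_mul ht.le, mul_inv_cancel_right₀ hm.ne']
  rw [hpow, rpow_inv_le_iff_of_pos (by positivity) hv hm]
  calc b * M * (T ^ (-κ) * t ^ (κ * m))
      ≤ T ^ κ * t ^ (-(κ * m)) * v ^ m * (T ^ (-κ) * t ^ (κ * m)) := by gcongr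
    _ = v ^ m := by rw [rpow_neg hT.le, rpow_neg ht.le]; field_simp

theorem exists_lower_bound (d : ℕ) (hm0 : 0 < m) (hm1 : m < 1) :
    ∃ c₀ > 0, ∃ c₁ > 0, ∀ (T : ℝ) (U : ℝ → Space d → ℝ), 0 < T →
      IsContFDESol m T (ball 0 6) U → (∀ y ∈ ball 0 6, U T y = 0) →
      0 < ∫ y in ball 0 1, U 0 y →
      ∀ t, 0 < t → t ≤ c₀ * (∫ y in ball 0 1, U 0 y) ^ (1 - m) → t < T ∧ ∀ x ∈ ball 0 1,
        c₁ * ((∫ y in ball 0 1, U 0 y) * T ^ (-(1 / (1 - m)))) ^ (1 / m) * t ^ (1 / (1 - m))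
          ≤ U t x := by
  obtain ⟨k, D, hD, hlap⟩ := exists_abs_spaceLap_cutoff_pow_le_rpow d hm0.le hm1 two_pos
  have hm1' : 0 < 1 - m := sub_pos.2 hm1
  have hκ : 1 / (1 - m) * (1 - m) = 1 := one_div_mul_cancel hm1'.ne'
  have hI : 0 < ∫ y : Space d, cutoff 0 1 y ^ 2 := integral_cutoff_pow_pos 1
  set Ck := D * (1 + volume.real (tsupport (cutoff (0 : Space d) 2 ^ (k + 3))))
  have hCk : 0 ≤ Ck := by positivity
  set q : ℝ := (3 / 4) ^ (k + 3)
  have hq : 0 < q := by positivity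
  set b := 4 / (6 * 5 ^ d) * ((7 / 16) ^ 3 * (q / 2)) / ∫ y : Space d, cutoff 0 1 y ^ 2 with hb
  refine ⟨q ^ (1 - m) / (2 * (Ck + 1)), by positivity, b ^ (1 / m), by positivity,
    fun T U hT hU hext hM t ht htM => ?_⟩
  have hpersist := fun {s L : ℝ} (hL : 0 ≤ L) (hs : 0 ≤ s) (hsT : s ≤ T) (hst : s ≤ t) =>
    hU.mul_setIntegral_le_integral_scalingEnvelope hm0 hm1 hκ hL hD (hlap 0) hs hsT hM <| by
      rw [mul_rpow hq.le hM.le]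
      calc s * Ck ≤ q ^ (1 - m) / (2 * (Ck + 1)) * (∫ y in ball 0 1, U 0 y) ^ (1 - m)
            * (Ck + 1) := by gcongr; exacts [hst.trans htM, by linarith]
        _ = _ := by field_simp
  have htT : t < T := by
    by_contra! hTt
    have hzero : ∀ y, scalingEnvelope (1 / (1 - m)) 0 U T y * (cutoff 0 2 ^ (k + 3)) y = 0 := by
      intro y
      by_cases hy : y ∈ ball 0 2
      · rw [hU.scalingEnvelope_extinction_eq_zero hext le_rfl
          (ball_subset_ball (by norm_num) hy), zero_mul]
      · rw [Pi.pow_apply, cutoff_pow_eq_zero two_pos _ hy, mul_zero]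
    have := hpersist le_rfl hT.le le_rfl hTt
    simp only [hzero, integral_zero] at this
    exact this.not_gt (by positivity)
  refine ⟨htT, fun x hx => rpow_mul_rpow_le_of_mul_le hm0 (by positivity) hM.le hT ht
    (hU.nonneg t x) ?_⟩
  have hupper := hU.mul_integral_scalingEnvelope_le hext hm0 hκ (by positivity) ht htT.le hx (k + 2)
  rw [hb, div_mul_eq_mul_div, div_le_iff₀ hI]
  refine le_trans ?_ hupper
  have := hpersist (log_nonneg ((one_le_div ht).2 htT.le)) ht.le htT.le le_rfl
  rw [mul_assoc, mul_assoc]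
  gcongr
  linarith

end LowerBound

/-! ### Local `L^p` bounds -/

lemma le_two_mul_add_of_sub_le_integral {Y : ℝ → ℝ} {t B₁ B₂ : ℝ} (hY : Continuous Y)
    (hY0 : ∀ s, 0 ≤ Y s) (hB₁ : 0 ≤ B₁) (hB₂ : 0 ≤ B₂)
    (hgrowth : ∀ a ∈ Icc 0 t, Y a - Y 0 ≤ ∫ r in 0..a, (B₁ * Y r + B₂)) (hsmall : t * B₁ ≤ 1 / 2)
    {s : ℝ} (hs : s ∈ Icc 0 t) : Y s ≤ 2 * Y 0 + 2 * t * B₂ := by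
  obtain ⟨a, ha, hmax⟩ := isCompact_Icc.exists_isMaxOn ⟨s, hs⟩ hY.continuousOn
  have hle : ∀ r ∈ Icc 0 t, Y r ≤ Y a := fun r hr => hmax hr
  have h_int : ∫ r in 0..a, (B₁ * Y r + B₂) ≤ a * (B₁ * Y a + B₂) := by
    rw [← sub_zero a, ← smul_eq_mul, ← intervalIntegral.integral_const, sub_zero]
    refine intervalIntegral.integral_mono_on ha.1
      ((continuous_const.mul hY).add continuous_const |>.intervalIntegrable _ _) (by simp)
      fun r hr => ?_
    linarith [mul_le_mul_of_nonneg_left (hle r ⟨hr.1, hr.2.trans ha.2⟩) hB₁]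
  have hhalf : a * B₁ * Y a ≤ 1 / 2 * Y a :=
    mul_le_mul_of_nonneg_right ((mul_le_mul_of_nonneg_right ha.2 hB₁).trans hsmall) (hY0 a)
  linarith [hgrowth a ha, hle s hs, mul_le_mul_of_nonneg_right ha.2 hB₂]

section LpBound

variable {d : ℕ} {m n p c D t : ℝ} {w : ℝ → Space d → ℝ} {K : Space d → ℝ}

lemma IsDiscreteSubsolutionOn.integral_le (hn0 : 0 ≤ n) (hn1 : n < 1) (hc : 0 ≤ c)
    (hw : Continuous fun p : ℝ × Space d => w p.1 p.2) (hw0 : ∀ s y, 0 ≤ w s y)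
    (hK : ContDiff ℝ 2 K) (hKc : HasCompactSupport K) (hK0 : ∀ y, 0 ≤ K y) (hD : 0 ≤ D)
    (hlap : ∀ y, |spaceLap K y| ≤ D * K y ^ n) (ht : 0 < t)
    (hsub : ∀ r ∈ Ioo 0 t,
      IsDiscreteSubsolutionOn w (fun s y => c * w s y ^ n) ({r} ×ˢ tsupport K))
    {s : ℝ} (hs : s ∈ Icc 0 t) :
    ∫ y, w s y * K y ≤ 2 * (∫ y, w 0 y * K y)
      + (2 * (c * D + 1) * t) ^ (1 / (1 - n)) * volume.real (tsupport K) := by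
  set A := (2 * (c * D + 1) * t) ^ (1 / (1 - n)) with hA
  have hA0 : 0 < A := by positivity
  have hn1' : 1 - n ≠ 0 := by linarith
  have hrate : t * (c * D * A ^ (n - 1)) ≤ 1 / 2 := by
    rw [hA, ← rpow_mul (by positivity), ← neg_sub 1 n, mul_neg, one_div_mul_cancel hn1',
      rpow_neg_one]
    field_simp
    linarith
  have hwn : Continuous fun p : ℝ × Space d => c * w p.1 p.2 ^ n :=
    continuous_const.mul (hw.rpow_const fun _ => Or.inr hn0)
  have hbound : ∀ r, ∫ y, c * w r y ^ n * spaceLap K y ≤ c * D * A ^ (n - 1) * (∫ y, w r y * K y)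
      + c * D * A ^ (n - 1) * (A * volume.real (tsupport K)) := fun r => by
    have habs := abs_integral_rpow_mul_le (W := w r) hn0 hn1.le hA0
      (hw.comp (Continuous.prodMk_right r)) (hw0 r) hK.continuous hKc hK0
      (fun y => spaceLap_eq_zero_of_notMem_tsupport) hlap hD
    simp only [mul_assoc c, integral_const_mul]
    refine (mul_le_mul_of_nonneg_left (le_of_abs_le habs) hc).trans_eq ?_
    rw [show A ^ n = A ^ (n - 1) * A by rw [← rpow_add_one hA0.ne', sub_add_cancel]]
    ring
  have hYcont := continuous_integral_mul_of_hasCompactSupport hw hK.continuous hKc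
  refine (le_two_mul_add_of_sub_le_integral (B₁ := c * D * A ^ (n - 1))
    (B₂ := c * D * A ^ (n - 1) * (A * volume.real (tsupport K))) hYcont
    (fun r => integral_nonneg fun y => mul_nonneg (hw0 r y) (hK0 y)) (by positivity)
    (by positivity) (fun a ha => ?_) hrate hs).trans ?_
  · refine (IsDiscreteSubsolutionOn.integral_sub_le hw hwn hK hKc hK0 ha.1 fun r hr =>
      hsub r ⟨hr.1, hr.2.trans_le ha.2⟩).trans (intervalIntegral.integral_mono_on ha.1
        ((continuous_integral_mul_of_hasCompactSupport hwn (continuous_spaceLap hK)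
          (hasCompactSupport_spaceLap hKc)).intervalIntegrable _ _)
        ((by fun_prop : Continuous _).intervalIntegrable _ _) fun r _ => hbound r)
  · have := mul_le_mul_of_nonneg_right hrate (by positivity : 0 ≤ A * volume.real (tsupport K))
    linarith

lemma exists_integral_rpow_mul_cutoff_pow_le (d : ℕ) (hm0 : 0 < m) (hm1 : m < 1) (hp : 1 ≤ p) :
    ∃ k : ℕ, ∃ C > 0, ∀ (T : ℝ) (Ω : Set (Space d)) (U : ℝ → Space d → ℝ), IsOpen Ω →
      closedBall 0 1 ⊆ Ω → IsContFDESol m T Ω U → ∀ t, 0 < t → t ≤ T → ∀ s ∈ Icc 0 t,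
        ∫ y, U s y ^ p * (cutoff 0 1 ^ (k + 3)) y
          ≤ C * ((∫ y, U 0 y ^ p * (cutoff 0 1 ^ (k + 3)) y) + t ^ (p / (1 - m))) := by
  have hn0 : 0 ≤ (p + m - 1) / p := div_nonneg (by linarith) (by linarith)
  have hn1 : (p + m - 1) / p < 1 := (div_lt_one (by linarith)).2 (by linarith)
  have hexp : 1 / (1 - (p + m - 1) / p) = p / (1 - m) := by
    rw [one_sub_div (by linarith), one_div_div]; ring_nf
  obtain ⟨k, D, hD, hlap⟩ := exists_abs_spaceLap_cutoff_pow_le_rpow d hn0 hn1 one_pos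
  have hc : 0 ≤ p * m / (p + m - 1) := div_nonneg (by nlinarith) (by linarith)
  set B := (2 * (p * m / (p + m - 1) * D + 1)) ^ (p / (1 - m))
    * volume.real (tsupport (cutoff (0 : Space d) 1 ^ (k + 3))) with hB
  refine ⟨k, 2 + B, by positivity, fun T Ω U hΩ hball hU t ht htT s hs => ?_⟩
  have hpow : ∀ s y, (U s y ^ p) ^ ((p + m - 1) / p) = U s y ^ (p + m - 1) := fun s y => by
    rw [← rpow_mul (hU.nonneg s y), mul_div_cancel₀ _ (by linarith)]
  have hbound := IsDiscreteSubsolutionOn.integral_le (w := fun s y => U s y ^ p) hn0 hn1 hc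
    (hU.continuous.rpow_const fun _ => Or.inr (by linarith))
    (fun s y => rpow_nonneg (hU.nonneg s y) p) (contDiff_cutoff_pow k 2)
    (hasCompactSupport_cutoff_pow one_pos (k + 2)) (fun y => pow_nonneg (cutoff_nonneg 0 1 y) _)
    hD (hlap 0) ht (fun r hr => ?_) hs
  · rw [hexp, mul_rpow (by positivity) ht.le, mul_right_comm, ← hB] at hbound
    have hY0 : 0 ≤ ∫ y, U 0 y ^ p * (cutoff 0 1 ^ (k + 3)) y := integral_nonneg fun y =>
      mul_nonneg (rpow_nonneg (hU.nonneg 0 y) p) (pow_nonneg (cutoff_nonneg 0 1 y) _)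
    have hB0 : 0 ≤ B := by positivity
    have := rpow_pos_of_pos ht (p / (1 - m))
    nlinarith [mul_nonneg hB0 hY0]
  · simp only [hpow]
    exact hU.isFDESol.isDiscreteSubsolutionOn_rpow hU.nonneg hm0 (isOpen_Ioo.prod hΩ)
      (isCompact_singleton.prod (hasCompactSupport_cutoff_pow one_pos (k + 2)).isCompact)
      (prod_mono (singleton_subset_iff.2 ⟨hr.1, hr.2.trans_le htT⟩)
        ((tsupport_cutoff_pow_subset one_pos (k + 2)).trans hball)) hp

end LpBound

/-! ### A maximum principle for the time integral of `u ^ m` -/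

lemma tendsto_div_sq_of_eventually_abs_sub_le {f : ℝ → ℝ} {l : ℝ}
    (hf : ∀ ε > 0, ∀ᶠ h in 𝓝[>] (0 : ℝ), |f h - h ^ 2 * l| ≤ ε * h ^ 2) :
    Tendsto (fun h => f h / h ^ 2) (𝓝[>] 0) (𝓝 l) := by
  refine Metric.tendsto_nhds.2 fun ε hε => ?_
  filter_upwards [hf (ε / 2) (half_pos hε), self_mem_nhdsWithin] with h hfh (hh : 0 < h)
  have hdiv : f h / h ^ 2 - l = (f h - h ^ 2 * l) / h ^ 2 := by field_simp
  rw [Real.dist_eq, hdiv, abs_div, abs_of_pos (by positivity : 0 < h ^ 2)]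
  exact ((div_le_iff₀ (by positivity)).2 hfh).trans_lt (half_lt_self hε)

lemma nonneg_of_hasDerivAt_of_forall_le {f : ℝ → ℝ} {f' s₀ s : ℝ} (hf : HasDerivAt f f' s)
    (hs : s₀ < s) (hmax : ∀ σ ∈ Ioo s₀ s, f σ ≤ f s) : 0 ≤ f' := by
  have hslope := (hasDerivWithinAt_iff_tendsto_slope' self_notMem_Iio).1
    (hf.hasDerivWithinAt (s := Iio s))
  refine ge_of_tendsto hslope ?_
  filter_upwards [Ioo_mem_nhdsLT hs] with σ hσ
  rw [slope_def_field]
  exact div_nonneg_of_nonpos (sub_nonpos.2 (hmax σ hσ)) (sub_nonpos.2 hσ.2.le)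

lemma rpow_le_weighted {m a a₀ ζ ζ₀ : ℝ} (hm0 : 0 ≤ m) (hm1 : m < 1) (ha : 0 ≤ a) (ha₀ : 0 < a₀)
    (hζ : 0 < ζ) (hζ₀ : 0 < ζ₀) :
    a ^ m ≤ m * (a₀ ^ (m - 1) / ζ₀ ^ 2) * (ζ ^ 2 * a)
      + (1 - m) * (a₀ ^ m * ζ₀ ^ (2 * m / (1 - m))) * ζ ^ (-(2 * m / (1 - m))) := by
  have hm1' : 1 - m ≠ 0 := by linarith
  have hquot : 0 ≤ ζ ^ 2 * a / (ζ₀ ^ 2 * a₀) := by positivity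
  have hamgm := Real.geom_mean_le_arith_mean2_weighted hm0 (sub_nonneg.2 hm1.le) hquot
    (rpow_nonneg (div_nonneg hζ.le hζ₀.le) (-(2 * m / (1 - m)))) (by ring)
  have hgeom : (ζ ^ 2 * a / (ζ₀ ^ 2 * a₀)) ^ m * ((ζ / ζ₀) ^ (-(2 * m / (1 - m)))) ^ (1 - m)
      = a ^ m / a₀ ^ m := by
    rw [← rpow_mul (by positivity), neg_mul, div_mul_cancel₀ _ hm1', rpow_neg (by positivity),
      rpow_mul (by positivity), rpow_two, mul_div_mul_comm, ← div_pow,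
      mul_rpow (by positivity) (by positivity), div_rpow ha ha₀.le]
    field_simp
  rw [hgeom, div_le_iff₀ (by positivity)] at hamgm
  refine hamgm.trans_eq ?_
  rw [div_rpow hζ.le hζ₀.le, rpow_neg hζ₀.le, rpow_sub_one ha₀.ne']
  field_simp

section MaximumPrinciple

variable {d : ℕ} {m T s₀ s : ℝ} {Ω : Set (Space d)} {U : ℝ → Space d → ℝ} {f g : Space d → ℝ}
  {x c : Space d} {r : ℝ}

lemma tendsto_discreteLap_div_sq (hf : ContDiffAt ℝ 2 f x) :
    Tendsto (fun h => discreteLap h f x / h ^ 2) (𝓝[>] 0) (𝓝 (spaceLap f x)) := by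
  obtain ⟨V, hVx, hV⟩ := hf.contDiffOn le_rfl (by simp)
  refine tendsto_div_sq_of_eventually_abs_sub_le fun ε hε => ?_
  have hconst : ContDiffOn ℝ 2 (fun p : ℝ × Space d => f p.2) (univ ×ˢ interior V) :=
    (hV.mono interior_subset).comp contDiff_snd.contDiffOn fun p hp => hp.2
  have hxV : {((0 : ℝ), x)} ⊆ univ ×ˢ interior V :=
    singleton_subset_iff.2 ⟨mem_univ _, mem_interior_iff_mem_nhds.2 hVx⟩
  have happrox := eventually_forall_isCompact_abs_discreteLap_sub_le (F := fun _ => f)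
    isCompact_singleton (isOpen_univ.prod isOpen_interior) hxV hconst hε
  filter_upwards [happrox] with h hh using hh (0, x) (mem_singleton _)

lemma eventually_discreteLap_le_of_eventually_le (hx : f x = g x) (hfg : ∀ᶠ y in 𝓝 x, f y ≤ g y) :
    ∀ᶠ h in 𝓝[>] (0 : ℝ), discreteLap h f x ≤ discreteLap h g x := by
  have hcoord : ∀ i : Fin d, ∀ᶠ h in 𝓝[>] (0 : ℝ),
      f (x + h • unitVec i) ≤ g (x + h • unitVec i) ∧
        f (x - h • unitVec i) ≤ g (x - h • unitVec i) := fun i =>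
    ((Continuous.tendsto' (by fun_prop) (0 : ℝ) x (by simp)).mono_left nhdsWithin_le_nhds
      |>.eventually hfg).and
    ((Continuous.tendsto' (by fun_prop) (0 : ℝ) x (by simp)).mono_left nhdsWithin_le_nhds
      |>.eventually hfg)
  filter_upwards [eventually_all.2 hcoord] with h hh
  exact Finset.sum_le_sum fun i _ => by linarith [(hh i).1, (hh i).2]

lemma discreteLap_intervalIntegral {F : ℝ → Space d → ℝ} (hF : ∀ y, Continuous fun σ => F σ y)
    (a b h : ℝ) (x : Space d) :
    discreteLap h (fun y => ∫ σ in a..b, F σ y) x = ∫ σ in a..b, discreteLap h (F σ) x := by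
  have h_int : ∀ y, IntervalIntegrable (fun σ => F σ y) volume a b := fun y =>
    (hF y).intervalIntegrable a b
  simp only [discreteLap]
  rw [intervalIntegral.integral_finsetSum fun i _ =>
    ((h_int _).add (h_int _)).sub ((h_int _).const_mul _)]
  refine Finset.sum_congr rfl fun i _ => ?_
  rw [intervalIntegral.integral_sub ((h_int _).add (h_int _)) ((h_int _).const_mul _),
    intervalIntegral.integral_add (h_int _) (h_int _), intervalIntegral.integral_const_mul]

lemma IsFDESol.hasDerivAt {Q : Set (ℝ × Space d)} (hu : IsFDESol m Q U) (hQ : IsOpen Q)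
    (hx : (s, x) ∈ Q) : HasDerivAt (fun σ => U σ x) (spaceLap (fun y => U s y ^ m) x) s := by
  rw [← hu.2.2 _ hx]
  exact (hasDerivAt_timeSlice (differentiableAt_of_contDiffOn (by simp) hQ hu.2.1
    hx)).differentiableAt.hasDerivAt

lemma IsContFDESol.tendsto_discreteLap_integral_rpow_div_sq (hU : IsContFDESol m T Ω U)
    (hΩ : IsOpen Ω) (hm : 0 ≤ m) (hs₀ : 0 < s₀) (hs : s₀ ≤ s) (hsT : s < T) (hx : x ∈ Ω) :
    Tendsto (fun h => discreteLap h (fun y => ∫ σ in s₀..s, U σ y ^ m) x / h ^ 2) (𝓝[>] 0)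
      (𝓝 (U s x - U s₀ x)) := by
  have hQ : IsOpen (Ioo 0 T ×ˢ Ω) := isOpen_Ioo.prod hΩ
  have hIcc : Icc s₀ s ⊆ Ioo 0 T := Icc_subset_Ioo hs₀ hsT
  have hC : IsCompact (Icc s₀ s ×ˢ {x}) := isCompact_Icc.prod isCompact_singleton
  have hCQ : Icc s₀ s ×ˢ {x} ⊆ Ioo 0 T ×ˢ Ω := prod_mono hIcc (singleton_subset_iff.2 hx)
  have hpow : Continuous fun p : ℝ × Space d => U p.1 p.2 ^ m :=
    hU.continuous.rpow_const fun _ => Or.inr hm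
  have hslice : ∀ y, Continuous fun σ => U σ y ^ m := fun y => hpow.comp (.prodMk_left y)
  have hderiv : ∀ σ ∈ uIcc s₀ s, HasDerivAt (fun τ => U τ x) (spaceLap (fun y => U σ y ^ m) x) σ :=
    fun σ hσ => hU.isFDESol.hasDerivAt hQ ⟨hIcc (uIcc_of_le hs ▸ hσ), hx⟩
  have hlapcont : ContinuousOn (fun σ => spaceLap (fun y => U σ y ^ m) x) (uIcc s₀ s) := by
    have hsmooth : ContDiffOn ℝ 1 (fun σ => U σ x) (Ioo 0 T) :=
      (hU.isFDESol.2.1.of_le (by simp)).comp (contDiff_prodMk_left x).contDiffOn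
        fun σ hσ => ⟨hσ, hx⟩
    refine ((hsmooth.continuousOn_deriv_of_isOpen isOpen_Ioo le_rfl).mono
      (uIcc_of_le hs ▸ hIcc)).congr fun σ hσ => (hderiv σ hσ).deriv.symm
  have hftc := intervalIntegral.integral_eq_sub_of_hasDerivAt hderiv hlapcont.intervalIntegrable
  refine tendsto_div_sq_of_eventually_abs_sub_le fun ε hε => ?_
  obtain ⟨δ, hδ, hδε⟩ := exists_pos_mul_lt hε (s - s₀)
  filter_upwards [eventually_forall_isCompact_abs_discreteLap_sub_le
    (F := fun σ y => U σ y ^ m) hC hQ hCQ (hU.isFDESol.contDiffOn_rpow 2 m) hδ] with h hh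
  have hlap : Continuous fun σ => discreteLap h (fun y => U σ y ^ m) x := by
    simp only [discreteLap]
    fun_prop (disch := exact hslice)
  rw [discreteLap_intervalIntegral hslice, ← hftc, ← intervalIntegral.integral_const_mul,
    ← intervalIntegral.integral_sub (hlap.intervalIntegrable _ _)
      (hlapcont.intervalIntegrable.const_mul _), ← Real.norm_eq_abs]
  refine (intervalIntegral.norm_integral_le_of_norm_le_const fun σ hσ =>
    hh (σ, x) ⟨Ioc_subset_Icc_self (uIoc_of_le hs ▸ hσ), rfl⟩).trans ?_
  rw [abs_of_nonneg (sub_nonneg.2 hs)]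
  nlinarith [sq_nonneg h]

lemma cutoff_pos (hr : 0 < r) (hx : x ∈ ball c r) : 0 < cutoff c r x := by
  rw [cutoff, lt_max_iff, sub_pos, div_lt_one (by positivity)]
  exact Or.inr (pow_lt_pow_left₀ (mem_ball_iff_norm.1 hx) (norm_nonneg _) two_ne_zero)

lemma spaceLap_cutoff_rpow (hx : 0 < cutoff c r x) (q : ℝ) :
    spaceLap (fun y => cutoff c r y ^ q) x
      = 4 * (q * (q - 1) / r ^ 4 * cutoff c r x ^ (q - 2)) * ‖x - c‖ ^ 2
        - 2 * d * (q / r ^ 2 * cutoff c r x ^ (q - 1)) := by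
  have hlin : ∀ t, HasDerivAt (fun t => 1 - t / r ^ 2) (-(1 / r ^ 2)) t := fun t =>
    ((hasDerivAt_id t).div_const _).const_sub 1
  have hpos : 0 < 1 - ‖x - c‖ ^ 2 / r ^ 2 := (lt_max_iff.1 hx).resolve_left (lt_irrefl 0)
  have hnear : ∀ t, 0 < 1 - t / r ^ 2 → ∀ᶠ τ in 𝓝 t, 0 < 1 - τ / r ^ 2 := fun t ht =>
    (hlin t).continuousAt.eventually_const_lt ht
  have hderiv : ∀ q t, 0 < 1 - t / r ^ 2 → HasDerivAt (fun t => max 0 (1 - t / r ^ 2) ^ q)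
      (-(1 / r ^ 2) * q * max 0 (1 - t / r ^ 2) ^ (q - 1)) t := fun q t ht => by
    rw [max_eq_right ht.le]
    refine ((hlin t).rpow_const (Or.inl ht.ne')).congr_of_eventuallyEq ?_
    filter_upwards [hnear t ht] with τ hτ
    rw [max_eq_right hτ.le]
  have hlap := spaceLap_comp_norm_sub_sq ((hnear _ hpos).mono fun t ht => hderiv q t ht)
    ((hderiv (q - 1) _ hpos).const_mul (-(1 / r ^ 2) * q))
  refine hlap.trans ?_
  rw [sub_sub, one_add_one_eq_two, cutoff]
  ring

/-- An upper bound, uniform in the ball, for `ζ ^ (β + 2) Δ(ζ ^ (-β))` when `ζ` is the cutoff of a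
unit ball in dimension `d`. -/
noncomputable def barrierConst (d : ℕ) (β : ℝ) : ℝ :=
  4 * β * (β + 1) + 2 * d * β

lemma barrierConst_nonneg (d : ℕ) {β : ℝ} (hβ : 0 ≤ β) : 0 ≤ barrierConst d β := by
  unfold barrierConst
  positivity

lemma cutoff_rpow_mul_spaceLap_le (hr : 0 < r) (hx : x ∈ ball c r) {β : ℝ} (hβ : 0 ≤ β) :
    cutoff c r x ^ (β + 2) * spaceLap (fun y => cutoff c r y ^ (-β)) x ≤
      barrierConst d β / r ^ 2 := by
  have hpos := cutoff_pos hr hx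
  have hone := cutoff_le_one c r x
  have hnorm : ‖x - c‖ ^ 2 / r ^ 2 ≤ 1 := (div_le_one (by positivity)).2
    (pow_le_pow_left₀ (norm_nonneg _) (mem_ball_iff_norm.1 hx).le 2)
  have hcancel₂ : cutoff c r x ^ (β + 2) * cutoff c r x ^ (-β - 2) = 1 := by
    rw [← rpow_add hpos, show β + 2 + (-β - 2) = 0 by ring, rpow_zero]
  have hcancel₁ : cutoff c r x ^ (β + 2) * cutoff c r x ^ (-β - 1) = cutoff c r x := by
    rw [← rpow_add hpos, show β + 2 + (-β - 1) = 1 by ring, rpow_one]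
  rw [spaceLap_cutoff_rpow hpos]
  calc _ = (4 * β * (β + 1) * (‖x - c‖ ^ 2 / r ^ 2)
          * (cutoff c r x ^ (β + 2) * cutoff c r x ^ (-β - 2))
        + 2 * d * β * (cutoff c r x ^ (β + 2) * cutoff c r x ^ (-β - 1))) / r ^ 2 := by
        field_simp; ring
    _ ≤ (4 * β * (β + 1) * 1 + 2 * d * β * 1) / r ^ 2 := by
        rw [hcancel₂, hcancel₁, mul_one]; gcongr
    _ = barrierConst d β / r ^ 2 := by simp only [barrierConst, mul_one]

lemma contDiffAt_cutoff_rpow {n : WithTop ℕ∞} (hx : 0 < cutoff c r x) (q : ℝ) :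
    ContDiffAt ℝ n (fun y => cutoff c r y ^ q) x := by
  have hpos : 0 < 1 - ‖x - c‖ ^ 2 / r ^ 2 := (lt_max_iff.1 hx).resolve_left (lt_irrefl 0)
  have hsmooth : ContDiff ℝ n fun y => 1 - ‖y - c‖ ^ 2 / r ^ 2 :=
    contDiff_const.sub (((contDiff_id.sub contDiff_const).norm_sq ℝ).div_const _)
  refine (hsmooth.contDiffAt.rpow_const_of_ne (p := q) hpos.ne').congr_of_eventuallyEq ?_
  filter_upwards [hsmooth.continuous.continuousAt.eventually_const_lt hpos] with y hy
  rw [cutoff, max_eq_right hy.le]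

/- At a maximum of `ζ² v - W` the function `v ^ m` is touched from above by an affine function of
`W` plus a multiple of `ζ ^ (-2m / (1 - m))`, so the discrete Laplacians can be compared there. -/
lemma spaceLap_rpow_le_of_eventually_le {v W ζ : Space d → ℝ} {L : ℝ} (hm0 : 0 ≤ m) (hm1 : m < 1)
    (hζ : ∀ᶠ y in 𝓝 x, 0 < ζ y) (hζm : ContDiffAt ℝ 2 (fun y => ζ y ^ (-(2 * m / (1 - m)))) x)
    (hv : ∀ y, 0 ≤ v y) (hvx : 0 < v x) (hvm : ContDiffAt ℝ 2 (fun y => v y ^ m) x)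
    (hW : Tendsto (fun h => discreteLap h W x / h ^ 2) (𝓝[>] 0) (𝓝 L))
    (hmax : ∀ᶠ y in 𝓝 x, ζ y ^ 2 * v y - W y ≤ ζ x ^ 2 * v x - W x) :
    spaceLap (fun y => v y ^ m) x ≤ m * (v x ^ (m - 1) / ζ x ^ 2) * L
      + (1 - m) * (v x ^ m * ζ x ^ (2 * m / (1 - m)))
        * spaceLap (fun y => ζ y ^ (-(2 * m / (1 - m)))) x := by
  have hζx := hζ.self_of_nhds
  set β := 2 * m / (1 - m)
  set A := m * (v x ^ (m - 1) / ζ x ^ 2)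
  set B := (1 - m) * (v x ^ m * ζ x ^ β)
  have hA : 0 ≤ A := by positivity
  let barrier : Space d → ℝ := fun y =>
    A * W y + B * ζ y ^ (-β) + A * (ζ x ^ 2 * v x - W x)
  have htouch : v x ^ m = barrier x := by
    have hcancel : ζ x ^ β * ζ x ^ (-β) = 1 := by
      rw [← rpow_add hζx, add_neg_cancel, rpow_zero]
    have hvm' : v x ^ m = v x ^ (m - 1) * v x := by rw [← rpow_add_one hvx.ne', sub_add_cancel]
    simp only [barrier, A, B]
    linear_combination (norm := (field_simp; ring)) m * hvm' - (1 - m) * v x ^ m * hcancel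
  have hbelow : ∀ᶠ y in 𝓝 x, v y ^ m ≤ barrier y := by
    filter_upwards [hmax, hζ] with y hy hζy
    refine (rpow_le_weighted hm0 hm1 (hv y) hvx hζy hζx).trans ?_
    linarith [mul_le_mul_of_nonneg_left hy hA]
  have hlap : ∀ h, discreteLap h barrier x / h ^ 2 = A * (discreteLap h W x / h ^ 2)
      + B * (discreteLap h (fun y => ζ y ^ (-β)) x / h ^ 2) := fun h => by
    simp only [barrier, discreteLap, div_eq_mul_inv, Finset.mul_sum, Finset.sum_mul,
      ← Finset.sum_add_distrib]
    exact Finset.sum_congr rfl fun i _ => by ring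
  refine le_of_tendsto_of_tendsto (tendsto_discreteLap_div_sq hvm)
    ((hW.const_mul _).add ((tendsto_discreteLap_div_sq hζm).const_mul _)) ?_
  filter_upwards [eventually_discreteLap_le_of_eventually_le htouch hbelow] with h hh
  rw [← hlap]
  gcongr

lemma cutoff_sq_mul_spaceLap_le_of_eventually_le {v W : Space d → ℝ} {L : ℝ} (hm0 : 0 ≤ m)
    (hm1 : m < 1) (hr : 0 < r) (hx : x ∈ ball c r) (hv : ∀ y, 0 ≤ v y) (hvx : 0 < v x)
    (hvm : ContDiffAt ℝ 2 (fun y => v y ^ m) x)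
    (hW : Tendsto (fun h => discreteLap h W x / h ^ 2) (𝓝[>] 0) (𝓝 L))
    (hmax : ∀ᶠ y in 𝓝 x, cutoff c r y ^ 2 * v y - W y ≤ cutoff c r x ^ 2 * v x - W x) :
    cutoff c r x ^ 2 * spaceLap (fun y => v y ^ m) x ≤
      m * v x ^ (m - 1) * L + (1 - m) * v x ^ m * (barrierConst d (2 * m / (1 - m)) / r ^ 2) := by
  have hζ := cutoff_pos hr hx
  have hζ' : ∀ᶠ y in 𝓝 x, 0 < cutoff c r y :=
    (continuous_cutoff c r).continuousAt.eventually_const_lt hζ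
  have hβ : 0 ≤ 2 * m / (1 - m) := div_nonneg (by positivity) (sub_pos.2 hm1).le
  have hlap := spaceLap_rpow_le_of_eventually_le hm0 hm1 hζ' (contDiffAt_cutoff_rpow hζ _)
    hv hvx hvm hW hmax
  set β := 2 * m / (1 - m)
  set ψ := spaceLap (fun y => cutoff c r y ^ (-β)) x
  calc _ ≤ cutoff c r x ^ 2 * (m * (v x ^ (m - 1) / cutoff c r x ^ 2) * L
        + (1 - m) * (v x ^ m * cutoff c r x ^ β) * ψ) := by gcongr
    _ = m * v x ^ (m - 1) * L + (1 - m) * v x ^ m * (cutoff c r x ^ (β + 2) * ψ) := by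
        rw [rpow_add hζ, rpow_two]
        field_simp
    _ ≤ _ := by gcongr; exact cutoff_rpow_mul_spaceLap_le hr hx hβ

lemma IsContFDESol.cutoff_sq_mul_spaceLap_rpow_le {K η : ℝ} (hU : IsContFDESol m T Ω U)
    (hΩ : IsOpen Ω) (hm0 : 0 ≤ m) (hm1 : m < 1) (hr : 0 < r) (hcr : closedBall c r ⊆ Ω)
    (hs₀ : 0 < s₀) (hs : s₀ ≤ s) (hsT : s < T) (hx : x ∈ ball c r) (hK : 0 ≤ K) (hη : 0 < η)
    (hη1 : η ≤ 1)
    (hmax : ∀ y ∈ ball c r, η * cutoff c r y ^ 2 * U s y - K * ∫ σ in s₀..s, U σ y ^ m ≤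
      η * cutoff c r x ^ 2 * U s x - K * ∫ σ in s₀..s, U σ x ^ m) :
    η * cutoff c r x ^ 2 * spaceLap (fun y => U s y ^ m) x ≤
      (m * K + (1 - m) * (barrierConst d (2 * m / (1 - m)) / r ^ 2)) * U s x ^ m := by
  have hxΩ : x ∈ Ω := hcr (ball_subset_closedBall hx)
  have hsx : (s, x) ∈ Ioo 0 T ×ˢ Ω := ⟨⟨hs₀.trans_le hs, hsT⟩, hxΩ⟩
  have hUx : 0 < U s x := hU.isFDESol.1 _ hsx
  have hsmooth : ContDiffAt ℝ 2 (fun y => U s y ^ m) x :=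
    ((hU.isFDESol.contDiffOn_rpow 2 m).contDiffAt
      ((isOpen_Ioo.prod hΩ).mem_nhds hsx)).comp x (contDiff_prodMk_right s).contDiffAt
  have hW : Tendsto (fun h => discreteLap h (fun y => K / η * ∫ σ in s₀..s, U σ y ^ m) x / h ^ 2)
      (𝓝[>] 0) (𝓝 (K / η * (U s x - U s₀ x))) := by
    simp only [discreteLap_const_mul, mul_div_assoc]
    exact (hU.tendsto_discreteLap_integral_rpow_div_sq hΩ hm0 hs₀ hs hsT hxΩ).const_mul _
  have hlap := cutoff_sq_mul_spaceLap_le_of_eventually_le hm0 hm1 hr hx (hU.nonneg s) hUx hsmooth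
    hW <| by
    filter_upwards [isOpen_ball.mem_nhds hx] with y hy
    have hyη := div_le_div_of_nonneg_right (hmax y hy) hη.le
    field_simp at hyη ⊢
    linarith
  have hUm : U s x ^ m = U s x ^ (m - 1) * U s x := by rw [← rpow_add_one hUx.ne', sub_add_cancel]
  have hΛ := barrierConst_nonneg d
    (div_nonneg (mul_nonneg zero_le_two hm0) (sub_pos.2 hm1).le : 0 ≤ 2 * m / (1 - m))
  set Λ := barrierConst d (2 * m / (1 - m))
  calc η * cutoff c r x ^ 2 * spaceLap (fun y => U s y ^ m) x
      ≤ η * (m * U s x ^ (m - 1) * (K / η * (U s x - U s₀ x))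
        + (1 - m) * U s x ^ m * (Λ / r ^ 2)) := by rw [mul_assoc]; gcongr
    _ = m * K * U s x ^ (m - 1) * (U s x - U s₀ x)
        + η * ((1 - m) * U s x ^ m * (Λ / r ^ 2)) := by field_simp
    _ ≤ m * K * U s x ^ (m - 1) * U s x + 1 * ((1 - m) * U s x ^ m * (Λ / r ^ 2)) := by
        have hU₀ := hU.nonneg s₀ x
        gcongr
        linarith
    _ = _ := by rw [hUm]; ring

lemma IsContFDESol.cutoff_sq_mul_div_add_mul_spaceLap_nonneg {K τ ε : ℝ}
    (hU : IsContFDESol m T Ω U) (hΩ : IsOpen Ω) (hm0 : 0 ≤ m) (hs₀ : 0 < s₀) (hs : s₀ < s)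
    (hsT : s < T) (hx : x ∈ Ω)
    (hmax : ∀ σ ∈ Ioo s₀ s,
      (σ - s₀) / τ * cutoff c r x ^ 2 * U σ x - K * (∫ ρ in s₀..σ, U ρ x ^ m) - ε * (σ - s₀) ≤
      (s - s₀) / τ * cutoff c r x ^ 2 * U s x - K * (∫ ρ in s₀..s, U ρ x ^ m) - ε * (s - s₀)) :
    ε + K * U s x ^ m ≤ cutoff c r x ^ 2 * U s x / τ
      + (s - s₀) / τ * cutoff c r x ^ 2 * spaceLap (fun y => U s y ^ m) x := by
  have hpow : Continuous fun σ => U σ x ^ m :=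
    (hU.continuous.comp (.prodMk_left x)).rpow_const fun _ => Or.inr hm0
  have hUs := hU.isFDESol.hasDerivAt (isOpen_Ioo.prod hΩ)
    (mk_mem_prod ⟨hs₀.trans hs, hsT⟩ hx)
  have hlin : HasDerivAt (fun σ => σ - s₀) 1 s := (hasDerivAt_id s).sub_const s₀
  have hderiv := (((((hlin.div_const τ).mul_const (cutoff c r x ^ 2)).mul hUs).sub
    ((hpow.integral_hasStrictDerivAt s₀ s).hasDerivAt.const_mul K)).sub (hlin.const_mul ε))
  have hnonneg := nonneg_of_hasDerivAt_of_forall_le hderiv hs hmax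
  linarith [show 1 / τ * cutoff c r x ^ 2 * U s x = cutoff c r x ^ 2 * U s x / τ by ring]

lemma le_rpow_mul_rpow {a M : ℝ} (ha : 0 < a) (hm1 : m ≤ 1) (haM : a ≤ M) :
    a ≤ M ^ (1 - m) * a ^ m :=
  calc a = a ^ (1 - m) * a ^ m := by rw [← rpow_add ha, sub_add_cancel, rpow_one]
    _ ≤ M ^ (1 - m) * a ^ m := by
      have := sub_nonneg.2 hm1
      gcongr

/-- The difference between the solution, localised in the ball by the cutoff and in time by the
factor `(s - s₀) / τ`, and `K` times the time integral of `U ^ m` from `s₀` on. -/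
noncomputable def localizedExcess (m K : ℝ) (c : Space d) (r s₀ τ : ℝ) (U : ℝ → Space d → ℝ)
    (p : ℝ × Space d) : ℝ :=
  (p.1 - s₀) / τ * cutoff c r p.2 ^ 2 * U p.1 p.2 - K * ∫ σ in s₀..p.1, U σ p.2 ^ m

lemma IsContFDESol.continuous_localizedExcess {K τ : ℝ} (hU : IsContFDESol m T Ω U) (hm0 : 0 ≤ m) :
    Continuous (localizedExcess m K c r s₀ τ U) := by
  have hUc := hU.continuous
  have hpow : Continuous fun q : (ℝ × Space d) × ℝ => U q.2 q.1.2 ^ m :=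
    (hUc.comp (by fun_prop : Continuous fun q : (ℝ × Space d) × ℝ => (q.2, q.1.2))).rpow_const
      fun _ => Or.inr hm0
  have h_int : Continuous fun p : ℝ × Space d => ∫ σ in s₀..p.1, U σ p.2 ^ m :=
    intervalIntegral.continuous_parametric_intervalIntegral_of_continuous hpow continuous_fst
  exact ((((continuous_fst.sub continuous_const).div_const _).mul
    (((continuous_cutoff c r).comp continuous_snd).pow 2)).mul hUc).sub (h_int.const_mul K)

/-- The constant in the local maximum principle for a solution bounded by `M` on a ball of radius
`r` during a time span `τ`. -/
noncomputable def maxPrincipleConst (d : ℕ) (m M τ r : ℝ) : ℝ :=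
  M ^ (1 - m) / ((1 - m) * τ) + barrierConst d (2 * m / (1 - m)) / r ^ 2

lemma maxPrincipleConst_nonneg (d : ℕ) {M τ : ℝ} (hm0 : 0 ≤ m) (hm1 : m < 1) (hM : 0 ≤ M)
    (hτ : 0 ≤ τ) (r : ℝ) : 0 ≤ maxPrincipleConst d m M τ r := by
  have hm1' := sub_pos.2 hm1
  exact add_nonneg (div_nonneg (rpow_nonneg hM _) (mul_nonneg hm1'.le hτ))
    (div_nonneg (barrierConst_nonneg d (div_nonneg (mul_nonneg zero_le_two hm0) hm1'.le))
      (sq_nonneg r))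

lemma IsContFDESol.nonpos_of_localizedExcess_sub_le {M τ ε : ℝ} (hU : IsContFDESol m T Ω U)
    (hΩ : IsOpen Ω) (hm0 : 0 ≤ m) (hm1 : m < 1) (hr : 0 < r) (hcr : closedBall c r ⊆ Ω)
    (hs₀ : 0 < s₀) (hs : s₀ < s) (hsτ : s - s₀ ≤ τ) (hsT : s < T) (hx : x ∈ ball c r)
    (hM : U s x ≤ M)
    (hmax : ∀ σ ∈ Icc s₀ s, ∀ y ∈ closedBall c r,
      localizedExcess m (maxPrincipleConst d m M τ r) c r s₀ τ U (σ, y) - ε * (σ - s₀) ≤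
      localizedExcess m (maxPrincipleConst d m M τ r) c r s₀ τ U (s, x) - ε * (s - s₀)) :
    ε ≤ 0 := by
  have hτ : 0 < τ := (sub_pos.2 hs).trans_le hsτ
  have hm1' : 1 - m ≠ 0 := (sub_pos.2 hm1).ne'
  have hxΩ : x ∈ Ω := hcr (ball_subset_closedBall hx)
  have hUx : 0 < U s x := hU.isFDESol.1 (s, x) ⟨⟨hs₀.trans hs, hsT⟩, hxΩ⟩
  have hK := maxPrincipleConst_nonneg d hm0 hm1 (hUx.le.trans hM) hτ.le r
  have htime := hU.cutoff_sq_mul_div_add_mul_spaceLap_nonneg hΩ hm0 hs₀ hs hsT hxΩ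
    fun σ hσ => hmax σ (Ioo_subset_Icc_self hσ) x (ball_subset_closedBall hx)
  have hspace := hU.cutoff_sq_mul_spaceLap_rpow_le hΩ hm0 hm1 hr hcr hs₀ hs.le hsT hx hK
    (div_pos (sub_pos.2 hs) hτ) ((div_le_one hτ).2 hsτ) fun y hy =>
      sub_le_sub_iff_right (ε * (s - s₀)) |>.1
        (hmax s (right_mem_Icc.2 hs.le) y (ball_subset_closedBall hy))
  have hsize : cutoff c r x ^ 2 * U s x / τ ≤ M ^ (1 - m) * U s x ^ m / τ := by
    refine div_le_div_of_nonneg_right ?_ hτ.le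
    exact (mul_le_of_le_one_left hUx.le (pow_le_one₀ (cutoff_nonneg c r x)
      (cutoff_le_one c r x))).trans (le_rpow_mul_rpow hUx hm1.le hM)
  have hbalance : M ^ (1 - m) * U s x ^ m / τ = (1 - m) * (maxPrincipleConst d m M τ r
      - barrierConst d (2 * m / (1 - m)) / r ^ 2) * U s x ^ m := by
    rw [maxPrincipleConst, add_sub_cancel_right]
    field_simp
  linarith

lemma IsContFDESol.localizedExcess_le {M s₁ ε : ℝ} (hU : IsContFDESol m T Ω U)
    (hΩ : IsOpen Ω) (hm0 : 0 ≤ m) (hm1 : m < 1) (hr : 0 < r) (hcr : closedBall c r ⊆ Ω)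
    (hs₀ : 0 < s₀) (hs : s₀ < s₁) (hsT : s₁ < T)
    (hM : ∀ s ∈ Icc s₀ s₁, ∀ y ∈ closedBall c r, U s y ≤ M) (hε : 0 < ε) :
    localizedExcess m (maxPrincipleConst d m M (s₁ - s₀) r) c r s₀ (s₁ - s₀) U (s₁, c) ≤
      ε * (s₁ - s₀) := by
  have hM0 : 0 ≤ M := (hU.nonneg s₀ c).trans
    (hM s₀ (left_mem_Icc.2 hs.le) c (mem_closedBall_self hr.le))
  have hK := maxPrincipleConst_nonneg d hm0 hm1 hM0 (sub_pos.2 hs).le r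
  set K := maxPrincipleConst d m M (s₁ - s₀) r
  obtain ⟨⟨s, x⟩, ⟨hs_mem, hx_mem⟩, hmax⟩ := (isCompact_Icc.prod (isCompact_closedBall c r)
    |>.exists_isMaxOn (f := fun p : ℝ × Space d => localizedExcess m K c r s₀ (s₁ - s₀) U p
        - ε * (p.1 - s₀)) ⟨(s₀, c), left_mem_Icc.2 hs.le, mem_closedBall_self hr.le⟩
      ((hU.continuous_localizedExcess hm0).sub (by fun_prop)).continuousOn)
  have hle : ∀ σ ∈ Icc s₀ s₁, ∀ y ∈ closedBall c r,
      localizedExcess m K c r s₀ (s₁ - s₀) U (σ, y) - ε * (σ - s₀) ≤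
        localizedExcess m K c r s₀ (s₁ - s₀) U (s, x) - ε * (s - s₀) := fun σ hσ y hy =>
    hmax (mk_mem_prod hσ hy)
  have h_int : 0 ≤ ∫ σ in s₀..s, U σ x ^ m :=
    intervalIntegral.integral_nonneg hs_mem.1 fun σ _ => rpow_nonneg (hU.nonneg σ x) m
  refine sub_nonpos.1 ((hle s₁ (right_mem_Icc.2 hs.le) c (mem_closedBall_self hr.le)).trans ?_)
  rcases hs_mem.1.eq_or_lt with rfl | hs₀s
  · simp [localizedExcess]
  by_cases hx : x ∈ ball c r
  · refine absurd (hU.nonpos_of_localizedExcess_sub_le hΩ hm0 hm1 hr hcr hs₀ hs₀s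
      (sub_le_sub_right hs_mem.2 s₀) (hs_mem.2.trans_lt hsT) hx (hM s hs_mem x hx_mem)
      fun σ hσ y hy => ?_) hε.not_ge
    exact hle σ ⟨hσ.1, hσ.2.trans hs_mem.2⟩ y hy
  · simp only [localizedExcess, cutoff_eq_zero hr hx]
    nlinarith [mul_nonneg hK h_int, mul_pos hε (sub_pos.2 hs₀s)]

lemma IsContFDESol.le_mul_integral_rpow {M s₁ : ℝ} (hU : IsContFDESol m T Ω U)
    (hΩ : IsOpen Ω) (hm0 : 0 ≤ m) (hm1 : m < 1) (hr : 0 < r) (hcr : closedBall c r ⊆ Ω)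
    (hs₀ : 0 < s₀) (hs : s₀ < s₁) (hsT : s₁ < T)
    (hM : ∀ s ∈ Icc s₀ s₁, ∀ y ∈ closedBall c r, U s y ≤ M) :
    U s₁ c ≤ maxPrincipleConst d m M (s₁ - s₀) r * ∫ σ in s₀..s₁, U σ c ^ m := by
  refine le_of_forall_pos_le_add fun δ hδ => ?_
  have hτ : 0 < s₁ - s₀ := sub_pos.2 hs
  have hexcess := hU.localizedExcess_le hΩ hm0 hm1 hr hcr hs₀ hs hsT hM (div_pos hδ hτ)
  rw [localizedExcess, div_mul_cancel₀ _ hτ.ne', div_self hτ.ne'] at hexcess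
  simp only [cutoff, sub_self, norm_zero] at hexcess
  norm_num at hexcess
  linarith

end MaximumPrinciple

/-! ### The upper bound -/

lemma rpow_le_rpow_add_mul_rpow {x a m p : ℝ} (hx : 0 ≤ x) (ha : 0 < a) (hm : 0 < m)
    (hmp : m ≤ p) : x ^ m ≤ a ^ m + a ^ (m - p) * x ^ p := by
  rcases le_or_gt x a with hxa | hax
  · exact (rpow_le_rpow hx hxa hm.le).trans (le_add_of_nonneg_right (by positivity))
  · have hx0 : 0 < x := ha.trans hax
    calc x ^ m = x ^ (m - p) * x ^ p := by rw [← rpow_add hx0, sub_add_cancel]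
      _ ≤ a ^ (m - p) * x ^ p := by
        gcongr ?_ * _
        exact rpow_le_rpow_of_nonpos ha hax.le (by linarith)
      _ ≤ _ := le_add_of_nonneg_left (by positivity)

section LocalMaximum

variable {d : ℕ} {m p T M N Y s₀ s₁ r ρ a : ℝ} {Ω : Set (Space d)} {U : ℝ → Space d → ℝ}
  {x : Space d}

lemma IsContFDESol.continuous_rpow (hU : IsContFDESol m T Ω U) {q : ℝ} (hq : 0 ≤ q) :
    Continuous fun p : ℝ × Space d => U p.1 p.2 ^ q :=
  hU.continuous.rpow_const fun _ => Or.inr hq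

lemma IsContFDESol.neg_le_integral_mul_spaceLap_cutoff (hU : IsContFDESol m T Ω U)
    (hΩ : IsOpen Ω) (hm : 0 < m) (hρ : 0 < ρ) (hball : closedBall x ρ ⊆ Ω) (hs₀ : 0 ≤ s₀)
    (hs : s₀ ≤ s₁) (hsT : s₁ ≤ T) (hM : ∀ y ∈ closedBall x ρ, U s₀ y ≤ M) :
    -(M * ∫ z, cutoff x ρ z ^ 3)
      ≤ ∫ z, (∫ σ in s₀..s₁, U σ z ^ m) * spaceLap (cutoff x ρ ^ 3) z := by
  have hcutoff : ContDiff ℝ 2 (cutoff x ρ ^ 3) := contDiff_cutoff_pow 0 2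
  have hsupp := hasCompactSupport_cutoff_pow (c := x) hρ 2
  have hcutoff0 : ∀ y, 0 ≤ (cutoff x ρ ^ 3) y := fun y => pow_nonneg (cutoff_nonneg x ρ y) 3
  have hweak := IsDiscreteSubsolutionOn.integral_sub_le hU.continuous (hU.continuous_rpow hm.le)
    hcutoff hsupp hcutoff0 hs fun s hs => by
      have hsub := hU.isFDESol.isDiscreteSubsolutionOn_rpow hU.nonneg hm (isOpen_Ioo.prod hΩ)
        (isCompact_singleton.prod hsupp.isCompact)
        (prod_mono (singleton_subset_iff.2 ⟨hs₀.trans_lt hs.1, hs.2.trans_le hsT⟩)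
          ((tsupport_cutoff_pow_subset hρ 2).trans hball)) le_rfl
      simpa [hm.ne'] using hsub
  rw [intervalIntegral_integral_mul_swap (F := fun s y => U s y ^ m) (hU.continuous_rpow hm.le)
    (continuous_spaceLap hcutoff) (hasCompactSupport_spaceLap hsupp)] at hweak
  have hend : 0 ≤ ∫ y, U s₁ y * (cutoff x ρ ^ 3) y :=
    integral_nonneg fun y => mul_nonneg (hU.nonneg _ _) (hcutoff0 y)
  have hstart : ∫ y, U s₀ y * (cutoff x ρ ^ 3) y ≤ M * ∫ z, cutoff x ρ z ^ 3 := by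
    rw [← integral_const_mul]
    refine integral_mono
      (integrable_mul_of_hasCompactSupport (hU.continuous.comp (Continuous.prodMk_right s₀))
        hcutoff.continuous hsupp)
      ((integrable_cutoff_pow hρ 2).const_mul M) fun y => ?_
    by_cases hy : y ∈ ball x ρ
    · exact mul_le_mul_of_nonneg_right (hM y (ball_subset_closedBall hy)) (hcutoff0 y)
    · simp [cutoff_eq_zero hρ hy]
  linarith

lemma integral_rpow_mul_cutoff_sq_le {W : Space d → ℝ} (hW : Continuous W) (hW0 : ∀ y, 0 ≤ W y)
    (hm : 0 < m) (hmp : m ≤ p) (hρ : 0 < ρ) (hρr : ρ ≤ r) (ha : 0 < a) :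
    ∫ y, W y ^ m * cutoff x ρ y ^ 2 ≤ a ^ m * (ρ ^ d * ∫ y : Space d, cutoff 0 1 y ^ 2)
      + a ^ (m - p) * ∫ y, W y ^ p * cutoff x r y ^ 2 := by
  have hWm : Continuous fun y => W y ^ m := hW.rpow_const fun _ => Or.inr hm.le
  have hWp : Continuous fun y => W y ^ p := hW.rpow_const fun _ => Or.inr (hm.le.trans hmp)
  have hintp : Integrable fun y => a ^ (m - p) * (W y ^ p * cutoff x ρ y ^ 2) :=
    (integrable_mul_cutoff_sq x hWp hρ).const_mul _
  have hint2 : Integrable fun y => a ^ m * cutoff x ρ y ^ 2 :=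
    (integrable_cutoff_pow hρ 1).const_mul _
  calc ∫ y, W y ^ m * cutoff x ρ y ^ 2
      ≤ ∫ y, (a ^ m * cutoff x ρ y ^ 2 + a ^ (m - p) * (W y ^ p * cutoff x ρ y ^ 2)) := by
        refine integral_mono (integrable_mul_cutoff_sq x hWm hρ) (hint2.add hintp) fun y => ?_
        have hsplit := mul_le_mul_of_nonneg_right
          (rpow_le_rpow_add_mul_rpow (hW0 y) ha hm hmp) (sq_nonneg (cutoff x ρ y))
        exact hsplit.trans_eq (by ring)
    _ = a ^ m * (ρ ^ d * ∫ y : Space d, cutoff 0 1 y ^ 2)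
        + a ^ (m - p) * ∫ y, W y ^ p * cutoff x ρ y ^ 2 := by
        rw [integral_add hint2 hintp, integral_const_mul, integral_const_mul,
          integral_cutoff_pow x hρ]
    _ ≤ _ := by
        gcongr _ + _ * ?_
        refine integral_mono (integrable_mul_cutoff_sq x hWp hρ)
          (integrable_mul_cutoff_sq x hWp (hρ.trans_le hρr)) fun y => ?_
        exact mul_le_mul_of_nonneg_left
          (pow_le_pow_left₀ (cutoff_nonneg x ρ y) (cutoff_le_cutoff hρ hρr y) 2)
          (rpow_nonneg (hW0 y) p)

lemma IsContFDESol.cutoffAverage_le (hU : IsContFDESol m T Ω U) (hm : 0 < m) (hmp : m ≤ p)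
    (hs : s₀ ≤ s₁) (hρ : 0 < ρ) (hρr : ρ ≤ r) (ha : 0 < a)
    (hY : ∀ s ∈ Icc s₀ s₁, ∫ y, U s y ^ p * cutoff x r y ^ 2 ≤ Y) :
    cutoffAverage (fun y => ∫ σ in s₀..s₁, U σ y ^ m) x ρ
      ≤ (s₁ - s₀)
        * (a ^ m * (∫ y : Space d, cutoff 0 1 y ^ 2) + (ρ ^ d)⁻¹ * (a ^ (m - p) * Y)) := by
  have hUm := hU.continuous_rpow hm.le
  have hcut : Continuous fun y => cutoff x ρ y ^ 2 := (continuous_cutoff x ρ).pow 2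
  have hcutc := hasCompactSupport_cutoff_pow (c := x) hρ 1
  have hslice : ∀ s ∈ Icc s₀ s₁, ∫ y, U s y ^ m * cutoff x ρ y ^ 2
      ≤ a ^ m * (ρ ^ d * ∫ y : Space d, cutoff 0 1 y ^ 2) + a ^ (m - p) * Y := fun s hs =>
    (integral_rpow_mul_cutoff_sq_le (hU.continuous.comp (Continuous.prodMk_right s)) (hU.nonneg s)
      hm hmp hρ hρr ha).trans (by gcongr; exact hY s hs)
  have hmono := intervalIntegral.integral_mono_on (μ := volume) hs
    ((continuous_integral_mul_of_hasCompactSupport hUm hcut hcutc).intervalIntegrable _ _)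
    intervalIntegrable_const hslice
  rw [intervalIntegral.integral_const, smul_eq_mul,
    intervalIntegral_integral_mul_swap (F := fun s y => U s y ^ m) hUm hcut hcutc] at hmono
  rw [cutoffAverage_eq x hρ]
  refine (mul_le_mul_of_nonneg_left hmono (by positivity)).trans_eq ?_
  field_simp

/-- The value of `maxPrincipleConst d m (2 * N) (N ^ (1 - m)) 1`, which by scaling does not depend
on `N`. -/
noncomputable def doublingConst (d : ℕ) (m : ℝ) : ℝ :=
  2 ^ (1 - m) / (1 - m) + barrierConst d (2 * m / (1 - m))

lemma doublingConst_pos (d : ℕ) (hm0 : 0 ≤ m) (hm1 : m < 1) : 0 < doublingConst d m := by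
  have hm1' := sub_pos.2 hm1
  exact add_pos_of_pos_of_nonneg (div_pos (by positivity) hm1')
    (barrierConst_nonneg d (div_nonneg (by positivity) hm1'.le))

lemma maxPrincipleConst_two_mul (d : ℕ) (m : ℝ) (hN : 0 < N) (hr : 0 < r) :
    maxPrincipleConst d m (2 * N) (N ^ (1 - m) * r ^ 2) r = doublingConst d m / r ^ 2 := by
  rw [maxPrincipleConst, doublingConst, mul_rpow zero_le_two hN.le, add_div]
  field_simp

lemma IsContFDESol.integral_rpow_mul_le_cutoffAverage_add (hU : IsContFDESol m T Ω U)
    (hΩ : IsOpen Ω) (hm : 0 < m) (hρ : 0 < ρ) (hball : closedBall x ρ ⊆ Ω) (hs₀ : 0 ≤ s₀)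
    (hs : s₀ ≤ s₁) (hsT : s₁ ≤ T) (hM : ∀ y ∈ closedBall x ρ, U s₀ y ≤ M) :
    (∫ σ in s₀..s₁, U σ x ^ m) * (∫ y : Space d, cutoff 0 1 y ^ 2)
      ≤ cutoffAverage (fun y => ∫ σ in s₀..s₁, U σ y ^ m) x ρ
        + M * (∫ y : Space d, cutoff 0 1 y ^ 3) / 12 * ρ ^ 2 := by
  refine le_cutoffAverage_add_of_le_integral_mul_spaceLap x
    (intervalIntegral.continuous_parametric_intervalIntegral_of_continuous'
      (f := fun y σ => U σ y ^ m) ((hU.continuous_rpow hm.le).comp continuous_swap) s₀ s₁) hρ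
    fun ρ' hρ' => ?_
  have hsub := closedBall_subset_closedBall (x := x) hρ'.2.le
  exact hU.neg_le_integral_mul_spaceLap_cutoff hΩ hm hρ'.1 (hsub.trans hball) hs₀ hs hsT
    fun y hy => hM y (hsub hy)

lemma IsContFDESol.mul_integral_cutoff_sq_le (hU : IsContFDESol m T Ω U) (hΩ : IsOpen Ω)
    (hm0 : 0 < m) (hm1 : m < 1) (hmp : m ≤ p) (hr : 0 < r) (hN : 0 < N)
    (hball : closedBall x r ⊆ Ω) (hs₀ : 0 < s₀) (hsT : s₁ < T) (hτ : s₁ - s₀ = N ^ (1 - m) * r ^ 2)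
    (hM : ∀ s ∈ Icc s₀ s₁, ∀ y ∈ closedBall x r, U s y ≤ 2 * N) (hx : U s₁ x = N)
    (hY : ∀ s ∈ Icc s₀ s₁, ∫ y, U s y ^ p * cutoff x r y ^ 2 ≤ Y)
    (ha : 0 < a) {e : ℝ} (he0 : 0 < e) (he1 : e ≤ 1) :
    N * (∫ y : Space d, cutoff 0 1 y ^ 2) ≤ doublingConst d m * (N ^ (1 - m)
      * (a ^ m * (∫ y : Space d, cutoff 0 1 y ^ 2) + ((e * r) ^ d)⁻¹ * (a ^ (m - p) * Y))
        + N * (∫ y : Space d, cutoff 0 1 y ^ 3) / 6 * e ^ 2) := by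
  have hs : s₀ < s₁ := sub_pos.1 (hτ ▸ by positivity)
  have her : e * r ≤ r := mul_le_of_le_one_left hr.le he1
  have hsub : closedBall x (e * r) ⊆ closedBall x r := closedBall_subset_closedBall her
  have hmax := hU.le_mul_integral_rpow hΩ hm0.le hm1 hr hball hs₀ hs hsT hM
  have hmean := hU.integral_rpow_mul_le_cutoffAverage_add hΩ hm0 (mul_pos he0 hr)
    (hsub.trans hball) hs₀.le hs.le hsT.le fun y hy => hM s₀ (left_mem_Icc.2 hs.le) y (hsub hy)
  have haverage := hU.cutoffAverage_le hm0 hmp hs.le (mul_pos he0 hr) her ha hY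
  rw [hx, hτ, maxPrincipleConst_two_mul d m hN hr] at hmax
  rw [hτ] at haverage
  set I₂ := ∫ y : Space d, cutoff 0 1 y ^ 2
  have hI₂ : 0 ≤ I₂ := integral_nonneg fun y => sq_nonneg _
  have hK : 0 ≤ doublingConst d m / r ^ 2 := div_nonneg (doublingConst_pos d hm0.le hm1).le
    (sq_nonneg r)
  refine (mul_le_mul_of_nonneg_right hmax hI₂).trans_eq (mul_assoc _ _ _) |>.trans
    ((mul_le_mul_of_nonneg_left (hmean.trans (add_le_add_left haverage _)) hK).trans_eq ?_)
  field_simp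
  ring

lemma rpow_mul_pow_mul_le_of_mul_le {K I₂ I₃ δ e : ℝ} (hN : 0 < N) (hr : 0 < r) (hδ : 0 < δ)
    (h : N * I₂ ≤ K * (N ^ (1 - m) * ((δ * N) ^ m * I₂ + ((e * r) ^ d)⁻¹ * ((δ * N) ^ (m - p) * Y))
      + N * I₃ / 6 * e ^ 2)) :
    N ^ p * r ^ d * I₂ ≤ K * ((δ ^ m * I₂ + I₃ / 6 * e ^ 2) * (N ^ p * r ^ d)
      + δ ^ (m - p) * (e ^ d)⁻¹ * Y) := by
  rw [mul_rpow hδ.le hN.le, mul_rpow hδ.le hN.le, mul_pow, mul_inv] at h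
  have hNm : N ^ (1 - m) * N ^ m = N := by rw [← rpow_add hN, sub_add_cancel, rpow_one]
  have hNp : N ^ (1 - m) * N ^ (m - p) * N ^ p = N := by
    rw [← rpow_add hN, ← rpow_add hN]; simp
  have hrd : r ^ d * (r ^ d)⁻¹ = 1 := mul_inv_cancel₀ (by positivity)
  refine le_of_mul_le_mul_left ?_ hN
  linear_combination (N ^ p * r ^ d) * h + N ^ p * r ^ d * K * δ ^ m * I₂ * hNm
    + K * (e ^ d)⁻¹ * δ ^ (m - p) * Y * (N * hrd + r ^ d * (r ^ d)⁻¹ * hNp)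

lemma IsContFDESol.exists_rpow_mul_pow_le (d : ℕ) (hm0 : 0 < m) (hm1 : m < 1) (hmp : m ≤ p) :
    ∃ C > 0, ∀ (T : ℝ) (Ω : Set (Space d)) (U : ℝ → Space d → ℝ), IsContFDESol m T Ω U → IsOpen Ω →
      ∀ (s₀ s₁ r N Y : ℝ) (x : Space d), 0 < r → 0 < N → closedBall x r ⊆ Ω → 0 < s₀ → s₁ < T →
      s₁ - s₀ = N ^ (1 - m) * r ^ 2 → (∀ s ∈ Icc s₀ s₁, ∀ y ∈ closedBall x r, U s y ≤ 2 * N) →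
      U s₁ x = N → (∀ s ∈ Icc s₀ s₁, ∫ y, U s y ^ p * cutoff x r y ^ 2 ≤ Y) →
      N ^ p * r ^ d ≤ C * Y := by
  have hK := doublingConst_pos d hm0.le hm1
  have hI₂ : 0 < ∫ y : Space d, cutoff 0 1 y ^ 2 := integral_cutoff_pow_pos 1
  have hI₃ : 0 < ∫ y : Space d, cutoff 0 1 y ^ 3 := integral_cutoff_pow_pos 2
  set I₂ := ∫ y : Space d, cutoff 0 1 y ^ 2
  set I₃ := ∫ y : Space d, cutoff 0 1 y ^ 3
  obtain ⟨e', he', hsmall'⟩ := exists_pos_mul_lt (by positivity : 0 < I₂ / 4)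
    (doublingConst d m * (I₃ / 6))
  set e := min 1 e'
  have he0 : 0 < e := lt_min one_pos he'
  have hsmall : doublingConst d m * (I₃ / 6) * e ^ 2 ≤ I₂ / 4 := by
    refine le_trans ?_ hsmall'.le
    gcongr
    nlinarith [min_le_left 1 e', min_le_right 1 e']
  set δ := (1 / (4 * doublingConst d m)) ^ (1 / m) with hδ
  have hδ0 : 0 < δ := by positivity
  have hδm : doublingConst d m * δ ^ m = 1 / 4 := by
    rw [hδ, ← rpow_mul (by positivity), one_div_mul_cancel hm0.ne', rpow_one]; field_simp
  refine ⟨2 * doublingConst d m * (δ ^ (m - p) * (e ^ d)⁻¹) / I₂, by positivity, ?_⟩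
  intro T Ω U hU hΩ s₀ s₁ r N Y x hr hN hball hs₀ hsT hτ hM hx hY
  have hbound := rpow_mul_pow_mul_le_of_mul_le hN hr hδ0 <| hU.mul_integral_cutoff_sq_le hΩ hm0 hm1
    hmp hr hN hball hs₀ hsT hτ hM hx hY (mul_pos hδ0 hN) he0 (min_le_left _ _)
  rw [div_mul_eq_mul_div, le_div_iff₀ hI₂]
  have := mul_le_mul_of_nonneg_right hsmall (by positivity : 0 ≤ N ^ p * r ^ d)
  linear_combination 2 * hbound + 2 * this + 2 * I₂ * N ^ p * r ^ d * hδm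

end LocalMaximum

section Doubling

variable {d : ℕ} {m p θ κ N s₁ ℓ ε : ℝ}

lemma le_two_mul_of_rpow_mul_le {a b l s δ v : ℝ} (ha : 0 ≤ a) (hb : 0 ≤ b) (hl : 0 < l)
    (hlab : l ^ (b + a) = 1 / 2) (hs₁ : 0 < s₁) (hℓ : 0 < ℓ) (hs : l * s₁ ≤ s) (hδ : l * ℓ ≤ δ)
    (hv : 0 ≤ v) (h : s ^ b * δ ^ a * v ≤ s₁ ^ b * ℓ ^ a * N) : v ≤ 2 * N := by
  have hweight : (l * s₁) ^ b * (l * ℓ) ^ a = 1 / 2 * (s₁ ^ b * ℓ ^ a) := by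
    rw [mul_rpow hl.le hs₁.le, mul_rpow hl.le hℓ.le, ← hlab, rpow_add hl]; ring
  have hs0 : 0 ≤ s := (by positivity : 0 ≤ l * s₁).trans hs
  have hle : 1 / 2 * (s₁ ^ b * ℓ ^ a) * v ≤ s₁ ^ b * ℓ ^ a * N := by
    rw [← hweight]
    refine le_trans ?_ h
    gcongr
  refine le_of_mul_le_mul_left ?_ (by positivity : 0 < s₁ ^ b * ℓ ^ a)
  linarith

lemma rpow_mul_le_of_rpow_mul_pow_le {r B : ℝ} (hN : 0 < N) (hs₁ : 0 ≤ s₁) (hε : 0 < ε)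
    (hr0 : 0 ≤ r) (hθ0 : 0 ≤ θ) (hθ : (2 * p - d * (1 - m)) * θ = 1)
    (hr : r ^ 2 = ε * s₁ * N ^ (m - 1)) (h : N ^ p * r ^ d ≤ B) :
    s₁ ^ (d * θ) * N ≤ ε ^ (-(d * θ)) * B ^ (2 * θ) := by
  have hrθ : (r ^ d) ^ (2 * θ) = (r ^ 2) ^ (d * θ) := by
    rw [← rpow_natCast, ← rpow_natCast, ← rpow_mul hr0, ← rpow_mul hr0]; push_cast; ring_nf
  have hpow := rpow_le_rpow (by positivity) h (by positivity : 0 ≤ 2 * θ)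
  rw [mul_rpow (by positivity) (by positivity), hrθ, hr, mul_rpow (by positivity) (by positivity),
    mul_rpow hε.le hs₁, ← rpow_mul hN.le, ← rpow_mul hN.le, mul_comm, mul_assoc, ← rpow_add hN,
    show (m - 1) * (d * θ) + p * (2 * θ) = 1 by linear_combination hθ, rpow_one] at hpow
  rw [rpow_neg hε.le, ← div_eq_inv_mul, le_div_iff₀ (by positivity)]
  linarith

lemma rpow_mul_le_of_sq_le (hm : m < 1) (hN : 0 < N) (hε : 0 < ε) (hℓ : 0 ≤ ℓ)
    (hκ : (1 - m) * κ = 1) (h : (ε * ℓ) ^ 2 ≤ ε * s₁ * N ^ (m - 1)) :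
    ℓ ^ (2 * κ) * N ≤ ε ^ (-κ) * s₁ ^ κ := by
  have hκ0 : 0 < κ := pos_of_mul_pos_right (one_pos.trans_eq hκ.symm) (sub_pos.2 hm).le
  have hcancel : N ^ (m - 1) * N ^ (1 - m) = 1 := by rw [← rpow_add hN]; simp
  have hbase : ε * ℓ ^ 2 * N ^ (1 - m) ≤ s₁ := by
    refine le_of_mul_le_mul_left ?_ hε
    linear_combination N ^ (1 - m) * h + ε * s₁ * hcancel
  have hpow := rpow_le_rpow (by positivity) hbase hκ0.le
  rw [mul_rpow (by positivity) (by positivity), mul_rpow hε.le (by positivity), ← rpow_mul hN.le,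
    hκ, rpow_one, ← rpow_natCast, ← rpow_mul hℓ] at hpow
  rw [rpow_neg hε.le, ← div_eq_inv_mul, le_div_iff₀ (by positivity)]
  push_cast at hpow
  linarith

lemma exists_radius_of_rpow_mul_pow_le (d : ℕ) (hm : m < 1) (hN : 0 < N) (hs₁ : 0 < s₁)
    (hε : 0 < ε) (hℓ0 : 0 < ℓ) (hℓ1 : ℓ ≤ 1) (hθ0 : 0 ≤ θ) (hθ : (2 * p - d * (1 - m)) * θ = 1)
    (hκ : (1 - m) * κ = 1) :
    ∃ r > 0, r ≤ ε * ℓ ∧ N ^ (1 - m) * r ^ 2 ≤ ε * s₁ ∧ ∀ B, N ^ p * r ^ d ≤ B →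
      s₁ ^ (d * θ) * ℓ ^ (2 * κ) * N
        ≤ max (ε ^ (-(d * θ)) * B ^ (2 * θ)) (s₁ ^ (d * θ) * (ε ^ (-κ) * s₁ ^ κ)) := by
  have hκ0 : 0 < κ := pos_of_mul_pos_right (one_pos.trans_eq hκ.symm) (sub_pos.2 hm).le
  set ρ := √(ε * s₁ * N ^ (m - 1))
  have hρ2 : ρ ^ 2 = ε * s₁ * N ^ (m - 1) := sq_sqrt (by positivity)
  have hρ0 : 0 < ρ := sqrt_pos.2 (by positivity)
  refine ⟨min ρ (ε * ℓ), lt_min hρ0 (by positivity), min_le_right _ _, ?_, fun B hB => ?_⟩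
  · have hcancel : N ^ (1 - m) * N ^ (m - 1) = 1 := by rw [← rpow_add hN]; simp
    have hle : min ρ (ε * ℓ) ^ 2 ≤ ρ ^ 2 := by gcongr; exact min_le_left _ _
    linear_combination N ^ (1 - m) * (hle.trans_eq hρ2) + ε * s₁ * hcancel
  rcases le_total ρ (ε * ℓ) with hle | hle
  · rw [min_eq_left hle] at hB
    refine le_max_of_le_left (le_trans ?_
      (rpow_mul_le_of_rpow_mul_pow_le hN hs₁.le hε hρ0.le hθ0 hθ hρ2 hB))
    gcongr
    exact mul_le_of_le_one_right (by positivity) (rpow_le_one hℓ0.le hℓ1 (by positivity))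
  · refine le_max_of_le_right ?_
    rw [mul_assoc]
    refine mul_le_mul_of_nonneg_left (rpow_mul_le_of_sq_le hm hN hε hℓ0.le hκ ?_) (by positivity)
    rw [← hρ2]
    gcongr

lemma integral_mul_cutoff_sq_le {W : Space d → ℝ} (hW : Continuous W) (hW0 : ∀ y, 0 ≤ W y)
    {x : Space d} {r : ℝ} (hr : 0 < r) (hball : closedBall x r ⊆ closedBall 0 (1 / 2)) (n : ℕ) :
    ∫ y, W y * cutoff x r y ^ 2 ≤ (4 / 3) ^ (n + 1) * ∫ y, W y * (cutoff 0 1 ^ (n + 1)) y := by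
  rw [← integral_const_mul]
  refine integral_mono (integrable_mul_cutoff_sq x hW hr) ((integrable_mul_of_hasCompactSupport hW
    ((continuous_cutoff 0 1).pow (n + 1)) (hasCompactSupport_cutoff_pow one_pos n)).const_mul _)
    fun y => ?_
  by_cases hy : y ∈ ball x r
  · have hlower : (3 / 4 : ℝ) ≤ cutoff 0 1 y := by
      have hnorm : ‖y - 0‖ ≤ 1 / 2 := mem_closedBall_iff_norm.1 (hball (ball_subset_closedBall hy))
      exact le_trans (by norm_num) (one_sub_sq_div_sq_le_cutoff hnorm one_pos le_rfl)
    have hcompare : cutoff x r y ^ 2 ≤ (4 / 3) ^ (n + 1) * cutoff 0 1 y ^ (n + 1) := by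
      rw [← mul_pow]
      exact (pow_le_one₀ (cutoff_nonneg x r y) (cutoff_le_one x r y)).trans
        (one_le_pow₀ (by linarith))
    exact (mul_le_mul_of_nonneg_left hcompare (hW0 y)).trans_eq (mul_left_comm _ _ _)
  · have := cutoff_nonneg 0 1 y
    have := hW0 y
    simp only [cutoff_eq_zero hr hy, zero_pow two_ne_zero, mul_zero, Pi.pow_apply]
    positivity

/-- The height of `U` weighted by powers of the time and of the distance to the sphere of radius
`1 / 2`: it vanishes on the parabolic boundary of the cylinder over the ball of radius `1 / 2`, so
that a large value of `U` forces a large value at an interior maximum point. -/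
noncomputable def weightedHeight (a b : ℝ) (U : ℝ → Space d → ℝ) (s : ℝ) (y : Space d) : ℝ :=
  s ^ b * (1 / 2 - ‖y‖) ^ a * U s y

lemma exists_rpow_mul_pow_le_of_weightedHeight_le (d : ℕ) (hm0 : 0 < m) (hm1 : m < 1)
    (hmp : m ≤ p) {a b l : ℝ} (ha : 0 ≤ a) (hb : 0 ≤ b) (hl : 0 < l) (hlab : l ^ (b + a) = 1 / 2)
    (n : ℕ) :
    ∃ C > 0, ∀ (T : ℝ) (Ω : Set (Space d)) (U : ℝ → Space d → ℝ), IsContFDESol m T Ω U → IsOpen Ω →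
      closedBall 0 (1 / 2) ⊆ Ω → ∀ s₁ Y : ℝ, 0 < s₁ → s₁ < T →
      (∀ s ∈ Icc 0 s₁, ∫ y, U s y ^ p * (cutoff 0 1 ^ (n + 1)) y ≤ Y) →
      ∀ x₁ ∈ ball 0 (1 / 2), 0 < U s₁ x₁ →
      (∀ s ∈ Icc 0 s₁, ∀ y ∈ closedBall 0 (1 / 2),
        weightedHeight a b U s y ≤ weightedHeight a b U s₁ x₁) →
      ∀ r > 0, r ≤ (1 - l) * (1 / 2 - ‖x₁‖) → U s₁ x₁ ^ (1 - m) * r ^ 2 ≤ (1 - l) * s₁ →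
      U s₁ x₁ ^ p * r ^ d ≤ C * Y := by
  obtain ⟨C, hC, hlocal⟩ := IsContFDESol.exists_rpow_mul_pow_le d hm0 hm1 hmp
  refine ⟨C * (4 / 3) ^ (n + 1), by positivity, ?_⟩
  intro T Ω U hU hΩ hball s₁ Y hs₁ hsT hY x₁ hx₁ hN hmax r hr hrx hrs
  rw [mem_ball_zero_iff, ← sub_pos] at hx₁
  have hdist : ∀ y ∈ closedBall x₁ r, l * (1 / 2 - ‖x₁‖) ≤ 1 / 2 - ‖y‖ := fun y hy => by
    linarith [norm_le_norm_add_norm_sub' y x₁, mem_closedBall_iff_norm.1 hy]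
  have hsub : closedBall x₁ r ⊆ closedBall 0 (1 / 2) := fun y hy => by
    rw [mem_closedBall_zero_iff]
    linarith [hdist y hy, mul_pos hl hx₁]
  have htime : ∀ s ∈ Icc (s₁ - U s₁ x₁ ^ (1 - m) * r ^ 2) s₁, l * s₁ ≤ s := fun s hs => by
    linarith [hs.1]
  have hIcc : ∀ s ∈ Icc (s₁ - U s₁ x₁ ^ (1 - m) * r ^ 2) s₁, s ∈ Icc 0 s₁ := fun s hs =>
    ⟨(mul_pos hl hs₁).le.trans (htime s hs), hs.2⟩
  have hdouble : ∀ s ∈ Icc (s₁ - U s₁ x₁ ^ (1 - m) * r ^ 2) s₁, ∀ y ∈ closedBall x₁ r,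
      U s y ≤ 2 * U s₁ x₁ := fun s hs y hy =>
    le_two_mul_of_rpow_mul_le ha hb hl hlab hs₁ hx₁ (htime s hs) (hdist y hy) (hU.nonneg s y)
      (hmax s (hIcc s hs) y (hsub hy))
  rw [mul_assoc]
  refine hlocal T Ω U hU hΩ _ s₁ r (U s₁ x₁) _ x₁ hr hN (hsub.trans hball)
    (by linarith [mul_pos hl hs₁]) hsT (sub_sub_cancel _ _) hdouble rfl fun s hs => ?_
  exact (integral_mul_cutoff_sq_le
    ((hU.continuous_rpow (hm0.le.trans hmp)).comp (Continuous.prodMk_right s))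
    (fun y => rpow_nonneg (hU.nonneg s y) p) hr hsub n).trans (by gcongr; exact hY s (hIcc s hs))

lemma exists_weightedHeight_le_of_forall_le (d : ℕ) (hm0 : 0 < m) (hm1 : m < 1) (hmp : m ≤ p)
    (hθ0 : 0 < θ) (hθ : (2 * p - d * (1 - m)) * θ = 1) (hκ : (1 - m) * κ = 1) (n : ℕ) :
    ∃ C > 0, ∀ (T : ℝ) (Ω : Set (Space d)) (U : ℝ → Space d → ℝ), IsContFDESol m T Ω U → IsOpen Ω →
      closedBall 0 (1 / 2) ⊆ Ω → ∀ s₁ Y : ℝ, 0 < s₁ → s₁ < T → 0 ≤ Y →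
      (∀ s ∈ Icc 0 s₁, ∫ y, U s y ^ p * (cutoff 0 1 ^ (n + 1)) y ≤ Y) →
      ∀ x₁ ∈ ball 0 (1 / 2), 0 < U s₁ x₁ →
      (∀ s ∈ Icc 0 s₁, ∀ y ∈ closedBall 0 (1 / 2),
        weightedHeight (2 * κ) (d * θ) U s y ≤ weightedHeight (2 * κ) (d * θ) U s₁ x₁) →
      weightedHeight (2 * κ) (d * θ) U s₁ x₁ ≤ C * (Y ^ (2 * θ) + s₁ ^ (d * θ) * s₁ ^ κ) := by
  have hκ0 : 0 < κ := pos_of_mul_pos_right (one_pos.trans_eq hκ.symm) (sub_pos.2 hm1).le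
  set l : ℝ := (1 / 2) ^ (1 / (d * θ + 2 * κ)) with hl
  have hl0 : 0 < l := by positivity
  have hl1 : 0 < 1 - l :=
    sub_pos.2 (rpow_lt_one (by norm_num) (by norm_num) (by positivity))
  have hlab : l ^ (d * θ + 2 * κ) = 1 / 2 := by
    rw [hl, ← rpow_mul (by norm_num), one_div_mul_cancel (by positivity), rpow_one]
  obtain ⟨C, hC, hlocal⟩ := exists_rpow_mul_pow_le_of_weightedHeight_le (d := d) hm0 hm1 hmp
    (by positivity) (by positivity) hl0 hlab n
  refine ⟨max ((1 - l) ^ (-(d * θ)) * C ^ (2 * θ)) ((1 - l) ^ (-κ)), by positivity, ?_⟩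
  intro T Ω U hU hΩ hball s₁ Y hs₁ hsT hY0 hY x₁ hx₁ hN hmax
  have hx₁' := sub_pos.2 (mem_ball_zero_iff.1 hx₁)
  obtain ⟨r, hr0, hrx, hrs, hr⟩ := exists_radius_of_rpow_mul_pow_le (p := p) d hm1 hN hs₁ hl1
    hx₁' (by linarith [norm_nonneg x₁]) hθ0.le hθ hκ
  have hbound := hr _ (hlocal T Ω U hU hΩ hball s₁ Y hs₁ hsT hY x₁ hx₁ hN hmax r hr0 hrx hrs)
  rw [mul_rpow hC.le hY0, ← mul_assoc, mul_left_comm] at hbound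
  refine hbound.trans (max_le ?_ ?_)
  · gcongr
    · exact le_max_left _ _
    · exact le_add_of_nonneg_right (by positivity)
  · gcongr
    · exact le_max_right _ _
    · exact le_add_of_nonneg_left (by positivity)

lemma le_mul_of_weightedHeight_zero_le {a b t M : ℝ} {U : ℝ → Space d → ℝ} (ht : 0 < t)
    (h : weightedHeight a b U t 0 ≤ M) : U t 0 ≤ 2 ^ a * t ^ (-b) * M := by
  have hcancel : (2 : ℝ) ^ a * t ^ (-b) * weightedHeight a b U t 0 = U t 0 := by
    rw [weightedHeight, norm_zero, sub_zero, one_div, inv_rpow two_pos.le, rpow_neg ht.le]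
    field_simp
  rw [← hcancel]
  gcongr

lemma IsContFDESol.exists_weightedHeight_max {T t a b : ℝ} {Ω : Set (Space d)}
    {U : ℝ → Space d → ℝ} (hU : IsContFDESol m T Ω U) (ha : 0 < a) (hb : 0 < b) (ht : 0 < t)
    (hpos : 0 < U t 0) :
    ∃ s₁ ∈ Ioc 0 t, ∃ x₁ ∈ ball 0 (1 / 2), 0 < U s₁ x₁ ∧ ∀ s ∈ Icc 0 t,
      ∀ y ∈ closedBall 0 (1 / 2), weightedHeight a b U s y ≤ weightedHeight a b U s₁ x₁ := by
  have hcont : Continuous fun q : ℝ × Space d => weightedHeight a b U q.1 q.2 :=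
    ((continuous_fst.rpow_const fun _ => Or.inr hb.le).mul
      ((continuous_const.sub continuous_snd.norm).rpow_const fun _ => Or.inr ha.le)).mul
      hU.continuous
  have hmem : (t, (0 : Space d)) ∈ Icc 0 t ×ˢ closedBall 0 (1 / 2) :=
    ⟨⟨ht.le, le_rfl⟩, mem_closedBall_self (by norm_num)⟩
  obtain ⟨⟨s₁, x₁⟩, ⟨hs₁, hx₁⟩, hmax⟩ := (isCompact_Icc.prod
    (isCompact_closedBall (0 : Space d) (1 / 2))).exists_isMaxOn ⟨_, hmem⟩ hcont.continuousOn
  have hval : 0 < weightedHeight a b U s₁ x₁ := by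
    refine lt_of_lt_of_le ?_ (hmax hmem)
    simp only [weightedHeight, norm_zero, sub_zero]
    positivity
  rw [weightedHeight] at hval
  have hs₁0 : s₁ ≠ 0 := fun h => by simp [h, zero_rpow hb.ne'] at hval
  have hx₁0 : ‖x₁‖ ≠ 1 / 2 := fun h => by simp [h, zero_rpow ha.ne'] at hval
  have hU0 : U s₁ x₁ ≠ 0 := fun h => by simp [h] at hval
  exact ⟨s₁, ⟨hs₁.1.lt_of_ne' hs₁0, hs₁.2⟩, x₁,
    mem_ball_zero_iff.2 ((mem_closedBall_zero_iff.1 hx₁).lt_of_ne hx₁0),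
    (hU.nonneg s₁ x₁).lt_of_ne' hU0, fun s hs y hy => hmax (Set.mk_mem_prod hs hy)⟩

lemma exists_le_of_forall_integral_rpow_mul_cutoff_le (hd : 0 < d) (hm0 : 0 < m) (hm1 : m < 1)
    (hmp : m ≤ p) (hθ0 : 0 < θ) (hθ : (2 * p - d * (1 - m)) * θ = 1) (hκ : (1 - m) * κ = 1)
    (n : ℕ) :
    ∃ C > 0, ∀ (T : ℝ) (Ω : Set (Space d)) (U : ℝ → Space d → ℝ), IsContFDESol m T Ω U → IsOpen Ω →
      closedBall 0 (1 / 2) ⊆ Ω → ∀ t Y : ℝ, 0 < t → t < T → 0 ≤ Y →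
      (∀ s ∈ Icc 0 t, ∫ y, U s y ^ p * (cutoff 0 1 ^ (n + 1)) y ≤ Y) →
      U t 0 ≤ C * (Y ^ (2 * θ) * t ^ (-(d * θ)) + t ^ κ) := by
  have hκ0 : 0 < κ := pos_of_mul_pos_right (one_pos.trans_eq hκ.symm) (sub_pos.2 hm1).le
  obtain ⟨C, hC, hmaxBound⟩ := exists_weightedHeight_le_of_forall_le d hm0 hm1 hmp hθ0 hθ hκ n
  refine ⟨2 ^ (2 * κ) * C, by positivity, fun T Ω U hU hΩ hball t Y ht htT hY0 hY => ?_⟩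
  have hpos : 0 < U t 0 :=
    hU.isFDESol.1 (t, 0) ⟨⟨ht, htT⟩, hball (mem_closedBall_self (by norm_num))⟩
  obtain ⟨s₁, hs₁, x₁, hx₁, hU₁, hmax⟩ := hU.exists_weightedHeight_max
    (by positivity : 0 < 2 * κ) (by positivity : 0 < d * θ) ht hpos
  have hsub : Icc 0 s₁ ⊆ Icc 0 t := Icc_subset_Icc_right hs₁.2
  have hbound := hmaxBound T Ω U hU hΩ hball s₁ Y hs₁.1 (hs₁.2.trans_lt htT) hY0
    (fun s hs => hY s (hsub hs)) x₁ hx₁ hU₁ fun s hs => hmax s (hsub hs)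
  have hs₁t : s₁ ^ (d * θ) * s₁ ^ κ ≤ t ^ (d * θ) * t ^ κ := by
    have := hs₁.1
    gcongr <;> exact hs₁.2
  calc U t 0 ≤ 2 ^ (2 * κ) * t ^ (-(d * θ)) * (C * (Y ^ (2 * θ) + t ^ (d * θ) * t ^ κ)) :=
        le_mul_of_weightedHeight_zero_le ht ((hmax t ⟨ht.le, le_rfl⟩ 0
          (mem_closedBall_self (by norm_num))).trans (hbound.trans (by gcongr)))
    _ = 2 ^ (2 * κ) * C * (Y ^ (2 * θ) * t ^ (-(d * θ)) + t ^ κ) := by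
        rw [rpow_neg ht.le]
        field_simp

lemma add_rpow_le_two_rpow_mul {a b q : ℝ} (ha : 0 ≤ a) (hb : 0 ≤ b) (hq : 0 ≤ q) :
    (a + b) ^ q ≤ 2 ^ q * (a ^ q + b ^ q) := by
  wlog hab : a ≤ b generalizing a b
  · rw [add_comm a, add_comm (a ^ q)]
    exact this hb ha (le_of_not_ge hab)
  calc (a + b) ^ q ≤ (2 * b) ^ q := by gcongr; linarith
    _ = 2 ^ q * b ^ q := mul_rpow two_pos.le hb
    _ ≤ 2 ^ q * (a ^ q + b ^ q) := by gcongr; exact le_add_of_nonneg_left (by positivity)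

lemma integral_mul_cutoff_pow_le_setIntegral {f : Space d → ℝ} (hf : Continuous f)
    (hf0 : ∀ y, 0 ≤ f y) {x : Space d} {r : ℝ} (hr : 0 < r) (n : ℕ) :
    ∫ y, f y * (cutoff x r ^ (n + 1)) y ≤ ∫ y in ball x r, f y := by
  have hzero : ∀ y ∉ ball x r, f y * (cutoff x r ^ (n + 1)) y = 0 := fun y hy => by
    rw [Pi.pow_apply, cutoff_eq_zero hr hy, zero_pow n.succ_ne_zero, mul_zero]
  rw [← setIntegral_eq_integral_of_forall_compl_eq_zero hzero]
  refine setIntegral_mono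
    (integrable_mul_of_hasCompactSupport hf ((continuous_cutoff x r).pow (n + 1))
      (hasCompactSupport_cutoff_pow hr n)).integrableOn
    ((hf.continuousOn.integrableOn_compact (isCompact_closedBall x r)).mono_set
      ball_subset_closedBall) fun y => ?_
  exact mul_le_of_le_one_right (hf0 y) (pow_le_one₀ (cutoff_nonneg x r y) (cutoff_le_one x r y))

lemma rpow_mul_add_rpow_le {C y t : ℝ} (hC : 0 ≤ C) (hy : 0 ≤ y) (ht : 0 < t) (hθ0 : 0 ≤ θ)
    (hθ : (2 * p - d * (1 - m)) * θ = 1) (hκ : (1 - m) * κ = 1) :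
    (C * (y + t ^ (p * κ))) ^ (2 * θ) * t ^ (-(d * θ))
      ≤ (2 * C) ^ (2 * θ) * (y ^ (2 * θ) * t ^ (-(d * θ)) + t ^ κ) := by
  have hexp : (t ^ (p * κ)) ^ (2 * θ) * t ^ (-(d * θ)) = t ^ κ := by
    rw [← rpow_mul ht.le, ← rpow_add ht]
    congr 1
    linear_combination κ * hθ + d * θ * hκ
  calc (C * (y + t ^ (p * κ))) ^ (2 * θ) * t ^ (-(d * θ))
      ≤ C ^ (2 * θ) * (2 ^ (2 * θ) * (y ^ (2 * θ) + (t ^ (p * κ)) ^ (2 * θ))) *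
          t ^ (-(d * θ)) := by
        rw [mul_rpow hC (by positivity)]
        gcongr
        exact add_rpow_le_two_rpow_mul hy (by positivity) (by positivity)
    _ = (2 * C) ^ (2 * θ) * (y ^ (2 * θ) * t ^ (-(d * θ)) + t ^ κ) := by
        rw [mul_rpow two_pos.le hC, ← hexp]; ring

lemma exists_upper_bound (hd : 0 < d) (hm0 : 0 < m) (hm1 : m < 1) (hp : 1 ≤ p) (hθ0 : 0 < θ)
    (hθ : (2 * p - d * (1 - m)) * θ = 1) (hκ : (1 - m) * κ = 1) :
    ∃ C > 0, ∀ (T : ℝ) (Ω : Set (Space d)) (U : ℝ → Space d → ℝ), IsOpen Ω →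
      closedBall 0 1 ⊆ Ω → IsContFDESol m T Ω U → ∀ t, 0 < t → t < T →
      U t 0 ≤ C * ((∫ y in ball 0 1, U 0 y ^ p) ^ (2 * θ) * t ^ (-(d * θ)) + t ^ κ) := by
  have hpκ : p / (1 - m) = p * κ := by
    rw [div_eq_iff (sub_pos.2 hm1).ne']
    linear_combination -p * hκ
  obtain ⟨k, C, hC, hLp⟩ := exists_integral_rpow_mul_cutoff_pow_le d hm0 hm1 hp
  obtain ⟨C', hC', hpoint⟩ := exists_le_of_forall_integral_rpow_mul_cutoff_le hd hm0 hm1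
    (hm1.le.trans hp) hθ0 hθ hκ (k + 2)
  refine ⟨C' * ((2 * C) ^ (2 * θ) + 1), by positivity, fun T Ω U hΩ hball hU t ht htT => ?_⟩
  have hcont : Continuous fun y => U 0 y ^ p :=
    (hU.continuous_rpow (zero_le_one.trans hp)).comp (Continuous.prodMk_right 0)
  have hnonneg : ∀ y, 0 ≤ U 0 y ^ p := fun y => rpow_nonneg (hU.nonneg 0 y) p
  have hinit := integral_mul_cutoff_pow_le_setIntegral hcont hnonneg (x := 0) one_pos (k + 2)
  set y₀ := ∫ y in ball 0 1, U 0 y ^ p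
  have hy₀ : 0 ≤ y₀ := integral_nonneg hnonneg
  have hcontrol : ∀ s ∈ Icc 0 t, ∫ y, U s y ^ p * (cutoff 0 1 ^ (k + 3)) y
      ≤ C * (y₀ + t ^ (p * κ)) := fun s hs =>
    (hLp T Ω U hΩ hball hU t ht htT.le s hs).trans (by rw [hpκ]; gcongr)
  have hbound := hpoint T Ω U hU hΩ ((closedBall_subset_closedBall (by norm_num)).trans hball) t _
    ht htT (by positivity) hcontrol
  calc U t 0 ≤ C' * ((C * (y₀ + t ^ (p * κ))) ^ (2 * θ) * t ^ (-(d * θ)) + t ^ κ) := hbound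
    _ ≤ C' * ((2 * C) ^ (2 * θ) * (y₀ ^ (2 * θ) * t ^ (-(d * θ)) + t ^ κ) +
          (y₀ ^ (2 * θ) * t ^ (-(d * θ)) + t ^ κ)) := by
        gcongr ?_ * (?_ + ?_)
        · exact rpow_mul_add_rpow_le hC.le hy₀ ht hθ0.le hθ hκ
        · exact le_add_of_nonneg_left (by positivity)
    _ = C' * ((2 * C) ^ (2 * θ) + 1) * (y₀ ^ (2 * θ) * t ^ (-(d * θ)) + t ^ κ) := by ring

end Doubling

/-! ### Normalisation to the unit ball -/

section Normalisation

variable {d : ℕ} {m T b R : ℝ} {Q : Set (ℝ × Space d)} {Ω : Set (Space d)} {u v : ℝ → Space d → ℝ}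
  {u₀ : Space d → ℝ} {x₀ : Space d}

lemma spaceLap_congr {f g : Space d → ℝ} {x : Space d} (h : f =ᶠ[𝓝 x] g) :
    spaceLap f x = spaceLap g x := by
  refine Finset.sum_congr rfl fun i _ => ?_
  rw [EventuallyEq.fderiv_eq (h.fderiv.mono fun y hy => by rw [hy])]

lemma spaceLap_const_mul_comp_add_smul (f : Space d → ℝ) (c : ℝ) (x₀ : Space d) (R : ℝ)
    (x : Space d) :
    spaceLap (fun y => c * f (x₀ + R • y)) x = c * R ^ 2 * spaceLap f (x₀ + R • x) := by
  have hfderiv (k : ℝ) (g : Space d → ℝ) (y : Space d) :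
      fderiv ℝ (fun y => k * g (x₀ + R • y)) y = (k * R) • fderiv ℝ g (x₀ + R • y) := by
    have hsmul := congr_fun (fderiv_const_smul_field (𝕜 := ℝ) k (f := fun y => g (x₀ + R • y))) y
    refine hsmul.trans ?_
    rw [Pi.smul_apply, fderiv_comp_smul (f := fun z => g (x₀ + z)), fderiv_comp_add_left, smul_smul]
  simp only [spaceLap, hfderiv, smul_apply, smul_eq_mul, Finset.mul_sum]
  refine Finset.sum_congr rfl fun i _ => ?_
  rw [hfderiv (c * R) fun z => fderiv ℝ f z (EuclideanSpace.single i 1), smul_apply, smul_eq_mul]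
  ring

lemma IsFDESol.congr (hu : IsFDESol m Q u) (hQ : IsOpen Q) (huv : ∀ q ∈ Q, v q.1 q.2 = u q.1 q.2) :
    IsFDESol m Q v := by
  refine ⟨fun q hq => (hu.1 q hq).trans_eq (huv q hq).symm, hu.2.1.congr huv, fun q hq => ?_⟩
  have htime : ∀ᶠ s in 𝓝 q.1, (s, q.2) ∈ Q :=
    (Continuous.prodMk_left q.2).continuousAt.eventually (hQ.mem_nhds hq)
  have hspace : ∀ᶠ y in 𝓝 q.2, (q.1, y) ∈ Q :=
    (Continuous.prodMk_right q.1).continuousAt.eventually (hQ.mem_nhds hq)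
  rw [EventuallyEq.deriv_eq (htime.mono fun s hs => huv (s, q.2) hs), hu.2.2 q hq]
  exact spaceLap_congr (hspace.mono fun y hy => (congrArg (· ^ m) (huv (q.1, y) hy)).symm)

lemma IsFDESol.const_mul_comp_add_smul (hu : IsFDESol m (Ioo 0 T ×ˢ Ω) u) (hΩ : IsOpen Ω)
    (hb : 0 < b) (hbR : b ^ m * R ^ 2 = b) (x₀ : Space d) :
    IsFDESol m (Ioo 0 T ×ˢ ((fun y => x₀ + R • y) ⁻¹' Ω)) fun s y => b * u s (x₀ + R • y) := by
  refine ⟨fun q hq => mul_pos hb (hu.1 (q.1, x₀ + R • q.2) hq), ?_, fun q hq => ?_⟩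
  · exact contDiffOn_const.mul (hu.2.1.comp (g := fun q : ℝ × Space d => u q.1 q.2)
      (f := fun q : ℝ × Space d => (q.1, x₀ + R • q.2)) (by fun_prop) fun q hq => hq)
  have hpow : (fun y => (b * u q.1 (x₀ + R • y)) ^ m) =ᶠ[𝓝 q.2]
      fun y => b ^ m * u q.1 (x₀ + R • y) ^ m := by
    filter_upwards [(hΩ.preimage (by fun_prop)).mem_nhds hq.2] with y hy
    exact mul_rpow hb.le (hu.1 (q.1, x₀ + R • y) ⟨hq.1, hy⟩).le
  have htime := hu.2.2 (q.1, x₀ + R • q.2) hq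
  rw [deriv_const_mul_field, htime, spaceLap_congr hpow,
    spaceLap_const_mul_comp_add_smul fun z => u q.1 z ^ m, hbR]

lemma IsFDESol.exists_isContFDESol_eqOn {K : Set (Space d)} (hu : IsFDESol m (Ioo 0 T ×ˢ Ω) u)
    (hΩ : IsOpen Ω) (hK : IsClosed K) (hΩK : Ω ⊆ K)
    (hcont : ContinuousOn (fun q : ℝ × Space d => u q.1 q.2) (Icc 0 T ×ˢ K))
    (hnonneg : ∀ s ∈ Icc 0 T, ∀ y ∈ K, 0 ≤ u s y) :
    ∃ U, IsContFDESol m T Ω U ∧ ∀ s ∈ Icc 0 T, ∀ y ∈ K, U s y = u s y := by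
  obtain ⟨g, hg0, hg⟩ := ContinuousMap.exists_restrict_eq_forall_mem_of_closed (t := Ici (0 : ℝ))
    ⟨_, hcont.domRestrict⟩ (fun q => hnonneg _ q.2.1 _ q.2.2) nonempty_Ici (isClosed_Icc.prod hK)
  have heq : ∀ s ∈ Icc 0 T, ∀ y ∈ K, g (s, y) = u s y := fun s hs y hy =>
    DFunLike.congr_fun hg ⟨(s, y), hs, hy⟩
  exact ⟨fun s y => g (s, y), ⟨g.continuous, fun s y => hg0 (s, y), hu.congr (isOpen_Ioo.prod hΩ)
    fun q hq => heq q.1 (Ioo_subset_Icc_self hq.1) q.2 (hΩK hq.2)⟩, heq⟩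

/-- A classical solution on `(0, T) × Ω` taking the nonnegative initial data `u₀` and having
extinction time `T`: the hypotheses on `u` in the Harnack inequality. -/
structure IsExtinguishingSol (m T : ℝ) (Ω : Set (Space d)) (u₀ : Space d → ℝ)
    (u : ℝ → Space d → ℝ) : Prop where
  isOpen : IsOpen Ω
  time_pos : 0 < T
  isFDESol : IsFDESol m (Ioo 0 T ×ˢ Ω) u
  init_nonneg : ∀ x ∈ Ω, 0 ≤ u₀ x
  takesInit : TakesInit T Ω u u₀
  extinctAt : ExtinctAt T Ω u

lemma IsExtinguishingSol.continuousOn (hu : IsExtinguishingSol m T Ω u₀ u) :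
    ContinuousOn (fun q : ℝ × Space d => u q.1 q.2) (Icc 0 T ×ˢ Ω) := by
  rintro ⟨s, x⟩ ⟨hs, hx⟩
  rcases hs.2.lt_or_eq with hsT | rfl
  · refine (hu.takesInit.1 (s, x) ⟨⟨hs.1, hsT⟩, hx⟩).mono_of_mem_nhdsWithin ?_
    filter_upwards [mem_nhdsWithin_of_mem_nhds
      ((isOpen_lt continuous_fst continuous_const).mem_nhds hsT), self_mem_nhdsWithin] with q hqT hq
    exact ⟨⟨hq.1.1, hqT⟩, hq.2⟩
  · refine (hu.extinctAt.1 (s, x) ⟨⟨hu.time_pos, le_rfl⟩, hx⟩).mono_of_mem_nhdsWithin ?_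
    filter_upwards [mem_nhdsWithin_of_mem_nhds ((isOpen_lt continuous_const
      continuous_fst).mem_nhds hu.time_pos), self_mem_nhdsWithin] with q hq0 hq
    exact ⟨⟨hq0, hq.1.2⟩, hq.2⟩

lemma IsExtinguishingSol.nonneg (hu : IsExtinguishingSol m T Ω u₀ u) {s : ℝ} (hs : s ∈ Icc 0 T)
    {x : Space d} (hx : x ∈ Ω) : 0 ≤ u s x := by
  rcases hs.1.eq_or_lt with rfl | hs0
  · exact (hu.init_nonneg x hx).trans_eq (hu.takesInit.2 x hx).symm
  rcases hs.2.eq_or_lt with rfl | hsT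
  · exact (hu.extinctAt.2.1 x hx).ge
  · exact (hu.isFDESol.1 (s, x) ⟨⟨hs0, hsT⟩, hx⟩).le

lemma closedBall_subset_preimage_add_smul {r : ℝ} (hR : 0 ≤ R)
    (hball : closedBall x₀ (r * R) ⊆ Ω) : closedBall 0 r ⊆ (fun y => x₀ + R • y) ⁻¹' Ω :=
  fun y hy => hball <| by
    rw [mem_closedBall_iff_norm, add_sub_cancel_left, norm_smul, norm_of_nonneg hR, mul_comm]
    exact mul_le_mul_of_nonneg_right (mem_closedBall_zero_iff.1 hy) hR

lemma IsFDESol.mono {Q' : Set (ℝ × Space d)} (hu : IsFDESol m Q u) (hQ : Q' ⊆ Q) :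
    IsFDESol m Q' u :=
  ⟨fun p hp => hu.1 p (hQ hp), hu.2.1.mono hQ, fun p hp => hu.2.2 p (hQ hp)⟩

lemma IsExtinguishingSol.exists_rescaled {κ r : ℝ} (hu : IsExtinguishingSol m T Ω u₀ u)
    (hR : 0 < R) (hκ : (1 - m) * κ = 1) (hball : closedBall x₀ (r * R) ⊆ Ω) :
    ∃ U, IsContFDESol m T (ball 0 r) U ∧ ∀ s ∈ Icc 0 T, ∀ y ∈ closedBall 0 r,
      U s y = R ^ (2 * κ) * u s (x₀ + R • y) := by
  have hscale : (R ^ (2 * κ)) ^ m * R ^ 2 = R ^ (2 * κ) := by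
    rw [← rpow_mul hR.le, ← rpow_natCast R 2, ← rpow_add hR]
    congr 1
    push_cast
    linear_combination -2 * hκ
  have hmaps := closedBall_subset_preimage_add_smul hR.le hball
  have hsol := (hu.isFDESol.const_mul_comp_add_smul hu.isOpen (by positivity) hscale x₀).mono
    (prod_mono_right (ball_subset_closedBall.trans hmaps))
  refine hsol.exists_isContFDESol_eqOn isOpen_ball isClosed_closedBall ball_subset_closedBall ?_ ?_
  · exact continuousOn_const.mul (hu.continuousOn.comp
      (g := fun q : ℝ × Space d => u q.1 q.2) (f := fun q : ℝ × Space d => (q.1, x₀ + R • q.2))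
      (by fun_prop) fun q hq => ⟨hq.1, hmaps hq.2⟩)
  · exact fun s hs y hy => mul_nonneg (by positivity) (hu.nonneg hs (hmaps hy))

lemma setIntegral_ball_comp_add_smul (f : Space d → ℝ) (x₀ : Space d) (hR : 0 < R) :
    ∫ y in ball 0 1, f (x₀ + R • y) = R ^ (-d : ℝ) * ∫ x in ball x₀ R, f x := by
  have hpre (y : Space d) : y ∈ ball 0 1 ↔ x₀ + R • y ∈ ball x₀ R := by
    rw [mem_ball_zero_iff, mem_ball_iff_norm, add_sub_cancel_left, norm_smul, norm_of_nonneg hR.le,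
      mul_lt_iff_lt_one_right hR]
  have hind : (ball 0 1).indicator (fun y => f (x₀ + R • y))
      = fun y => (ball x₀ R).indicator f (x₀ + R • y) := by
    ext y
    by_cases hy : y ∈ ball 0 1
    · rw [indicator_of_mem hy, indicator_of_mem ((hpre y).1 hy)]
    · rw [indicator_of_notMem hy, indicator_of_notMem (mt (hpre y).2 hy)]
  rw [← integral_indicator measurableSet_ball, hind, integral_comp_add_smul _ _ hR,
    integral_indicator measurableSet_ball, rpow_neg hR.le, rpow_natCast]

lemma IsExtinguishingSol.integral_rescaled_rpow {U : ℝ → Space d → ℝ} {r κ : ℝ}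
    (hu : IsExtinguishingSol m T Ω u₀ u) (hR : 0 < R) (hr : 1 ≤ r)
    (hball : closedBall x₀ (r * R) ⊆ Ω)
    (hU : ∀ s ∈ Icc 0 T, ∀ y ∈ closedBall 0 r, U s y = R ^ (2 * κ) * u s (x₀ + R • y)) (p : ℝ) :
    ∫ y in ball 0 1, U 0 y ^ p = R ^ (2 * κ * p - d) * ∫ x in ball x₀ R, u₀ x ^ p := by
  have heq : EqOn (fun y => U 0 y ^ p) (fun y => R ^ (2 * κ * p) * u₀ (x₀ + R • y) ^ p)
      (ball 0 1) := fun y hy => by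
    have hy' : y ∈ closedBall 0 r := closedBall_subset_closedBall hr (ball_subset_closedBall hy)
    have hmem : x₀ + R • y ∈ Ω := closedBall_subset_preimage_add_smul hR.le hball hy'
    simp only [hU 0 ⟨le_rfl, hu.time_pos.le⟩ y hy', hu.takesInit.2 _ hmem]
    rw [mul_rpow (by positivity) (hu.init_nonneg _ hmem), rpow_mul hR.le (2 * κ) p]
  rw [setIntegral_congr_fun measurableSet_ball heq, integral_const_mul,
    setIntegral_ball_comp_add_smul (fun x => u₀ x ^ p) x₀ hR, ← mul_assoc, ← rpow_add hR,
    ← sub_eq_add_neg]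

lemma IsExtinguishingSol.integral_init_rpow_nonneg {r : ℝ} (hu : IsExtinguishingSol m T Ω u₀ u)
    (hR : 0 ≤ R) (hr : 1 ≤ r) (hball : closedBall x₀ (r * R) ⊆ Ω) (p : ℝ) :
    0 ≤ ∫ x in ball x₀ R, u₀ x ^ p :=
  setIntegral_nonneg measurableSet_ball fun x hx => rpow_nonneg (hu.init_nonneg x (hball
    (ball_subset_closedBall (ball_subset_ball (le_mul_of_one_le_left hR hr) hx)))) p

lemma exists_mem_ball_add_smul_eq {x : Space d} (hR : 0 < R) (hx : x ∈ ball x₀ R) :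
    ∃ y ∈ ball 0 1, x₀ + R • y = x := by
  refine ⟨R⁻¹ • (x - x₀), ?_, by rw [smul_inv_smul₀ hR.ne', add_sub_cancel]⟩
  rw [mem_ball_zero_iff, norm_smul, norm_inv, norm_of_nonneg hR.le, inv_mul_lt_one₀ hR]
  exact mem_ball_iff_norm.1 hx

end Normalisation

/-! ### Harnack inequalities -/

section Harnack

variable {d : ℕ} {m p : ℝ}

lemma time_scale_eq {R M κ : ℝ} (hR : 0 < R) (hM : 0 ≤ M) (hκ : (1 - m) * κ = 1) :
    R ^ (2 - d * (1 - m)) * M ^ (1 - m) = (R ^ (2 * κ - d) * M) ^ (1 - m) := by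
  rw [mul_rpow (by positivity) hM, ← rpow_mul hR.le]
  congr 2
  linear_combination -2 * hκ

lemma height_scale_eq {R M S κ : ℝ} (hR : 0 < R) (hm : m ≠ 0) (hκ : (1 - m) * κ = 1)
    (hMS : 0 ≤ M * S) :
    (R ^ (2 * κ - d) * M * S) ^ (1 / m)
      = R ^ (2 * κ) * (R ^ ((2 - d) / m) * (M * S) ^ (1 / m)) := by
  rw [mul_assoc, mul_rpow (by positivity) hMS, ← rpow_mul hR.le, ← mul_assoc, ← rpow_add hR]
  congr 2
  field_simp
  linear_combination 2 * hκ

lemma exists_lower_bound_rescaled (d : ℕ) (hm0 : 0 < m) (hm1 : m < 1) :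
    ∃ c₀ > 0, ∃ c₁ > 0, ∀ (Ω : Set (Space d)) (u : ℝ → Space d → ℝ) (u₀ : Space d → ℝ) (T : ℝ),
      IsExtinguishingSol m T Ω u₀ u → ∀ (x₀ : Space d) (R : ℝ), 0 < R →
      closedBall x₀ (6 * R) ⊆ Ω → 0 < ∫ x in ball x₀ R, u₀ x → ∀ t : ℝ, 0 < t →
      t ≤ c₀ * R ^ (2 - d * (1 - m)) * (∫ x in ball x₀ R, u₀ x) ^ (1 - m) →
      t < T ∧ ∀ x ∈ ball x₀ R, c₁ * R ^ ((2 - d) / m) *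
        ((∫ y in ball x₀ R, u₀ y) * T ^ (-(1 / (1 - m)))) ^ (1 / m) * t ^ (1 / (1 - m))
          ≤ u t x := by
  obtain ⟨c₀, hc₀, c₁, hc₁, hlower⟩ := exists_lower_bound d hm0 hm1
  refine ⟨c₀, hc₀, c₁, hc₁, fun Ω u u₀ T hu x₀ R hR hball hM t ht htle => ?_⟩
  have hT := hu.time_pos
  have hκ : (1 - m) * (1 / (1 - m)) = 1 := mul_one_div_cancel (sub_pos.2 hm1).ne'
  set κ := 1 / (1 - m)
  obtain ⟨U, hU, hUu⟩ := hu.exists_rescaled hR hκ hball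
  have hmass : ∫ y in ball 0 1, U 0 y = R ^ (2 * κ - d) * ∫ x in ball x₀ R, u₀ x := by
    simpa only [rpow_one, mul_one] using
      hu.integral_rescaled_rpow hR (by norm_num) hball hUu 1
  have hextinct : ∀ y ∈ ball 0 6, U T y = 0 := fun y hy => by
    have hy' := ball_subset_closedBall hy
    rw [hUu T ⟨hT.le, le_rfl⟩ y hy',
      hu.extinctAt.2.1 _ (closedBall_subset_preimage_add_smul hR.le hball hy'), mul_zero]
  set M := ∫ x in ball x₀ R, u₀ x
  rw [mul_assoc, time_scale_eq hR hM.le hκ, ← hmass] at htle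
  obtain ⟨htT, hpoint⟩ := hlower T U hT hU hextinct (hmass ▸ by positivity) t ht htle
  refine ⟨htT, fun x hx => ?_⟩
  obtain ⟨y, hy, rfl⟩ := exists_mem_ball_add_smul_eq hR hx
  have hbound := hpoint y hy
  rw [hUu t ⟨ht.le, htT.le⟩ y (closedBall_subset_closedBall (by norm_num)
    (ball_subset_closedBall hy)), hmass,
    height_scale_eq hR hm0.ne' hκ (by positivity)] at hbound
  refine le_of_mul_le_mul_left ?_ (by positivity : 0 < R ^ (2 * κ))
  linarith

lemma integral_scale_eq {R I t κ θ : ℝ} (hR : 0 < R) (ht : 0 < t) (hI : 0 ≤ I)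
    (hκ : (1 - m) * κ = 1) (hθ : (2 * p - d * (1 - m)) * θ = 1) (hp : p ≠ 0) :
    (R ^ (2 * κ * p - d) * I) ^ (2 * θ) * t ^ (-(d * θ)) + t ^ κ
      = R ^ (2 * κ) * (t ^ κ * ((I ^ (1 / p)) ^ (2 * p * θ) * t ^ (-(2 * p * θ * κ))
        + R ^ (-(2 * κ)))) := by
  have hspace : (R ^ (2 * κ * p - d) * I) ^ (2 * θ) = R ^ (2 * κ) * I ^ (2 * θ) := by
    rw [mul_rpow (by positivity) hI, ← rpow_mul hR.le]
    congr 2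
    linear_combination 2 * κ * hθ + 2 * d * θ * hκ
  have hnorm : (I ^ (1 / p)) ^ (2 * p * θ) = I ^ (2 * θ) := by
    rw [← rpow_mul hI]
    congr 1
    field_simp
  have htime : t ^ (-(d * θ)) = t ^ κ * t ^ (-(2 * p * θ * κ)) := by
    rw [← rpow_add ht]
    congr 1
    linear_combination κ * hθ + d * θ * hκ
  have hR' : R ^ (2 * κ) * R ^ (-(2 * κ)) = 1 := by
    rw [← rpow_add hR, add_neg_cancel, rpow_zero]
  rw [hspace, hnorm, htime]
  linear_combination -(t ^ κ) * hR'

lemma exists_upper_bound_rescaled (hd : 0 < d) (hm0 : 0 < m) (hm1 : m < 1) (hp : 1 ≤ p)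
    (hpm : d * (1 - m) < 2 * p) :
    ∃ C > 0, ∀ (Ω : Set (Space d)) (u : ℝ → Space d → ℝ) (u₀ : Space d → ℝ) (T : ℝ),
      IsExtinguishingSol m T Ω u₀ u → ∀ (x₀ : Space d) (R : ℝ), 0 < R →
      closedBall x₀ (6 * R) ⊆ Ω → ∀ t : ℝ, 0 < t → t < T →
      u t x₀ ≤ C * t ^ (1 / (1 - m)) *
        (((∫ y in ball x₀ R, u₀ y ^ p) ^ (1 / p)) ^ (2 * p / (2 * p - d * (1 - m))) *
          t ^ (-(2 * p / (2 * p - d * (1 - m)) / (1 - m))) + R ^ (-(2 / (1 - m)))) := by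
  have hκ : (1 - m) * (1 / (1 - m)) = 1 := mul_one_div_cancel (sub_pos.2 hm1).ne'
  have hθ : (2 * p - d * (1 - m)) * (1 / (2 * p - d * (1 - m))) = 1 :=
    mul_one_div_cancel (sub_pos.2 hpm).ne'
  have hθ0 : 0 < 1 / (2 * p - d * (1 - m)) := one_div_pos.2 (sub_pos.2 hpm)
  rw [div_eq_mul_one_div (2 * p), div_eq_mul_one_div 2,
    div_eq_mul_one_div (2 * p * _)]
  set κ := 1 / (1 - m)
  set θ := 1 / (2 * p - d * (1 - m))
  obtain ⟨C, hC, hupper⟩ := exists_upper_bound hd hm0 hm1 hp hθ0 hθ hκ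
  refine ⟨C, hC, fun Ω u u₀ T hu x₀ R hR hball t ht htT => ?_⟩
  obtain ⟨U, hU, hUu⟩ := hu.exists_rescaled hR hκ hball
  have hbound := hupper T (ball 0 6) U isOpen_ball
    (closedBall_subset_ball (by norm_num)) hU t ht htT
  rw [hUu t ⟨ht.le, htT.le⟩ 0 (mem_closedBall_self (by norm_num)), smul_zero, add_zero,
    hu.integral_rescaled_rpow hR (by norm_num) hball hUu p] at hbound
  rw [integral_scale_eq hR ht (hu.integral_init_rpow_nonneg hR.le (by norm_num) hball p) hκ hθ
    (by linarith)] at hbound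
  refine le_of_mul_le_mul_left ?_ (by positivity : 0 < R ^ (2 * κ))
  linarith

end Harnack

theorem harnack_initial_times_general (d : ℕ) (hd : 0 < d) (m : ℝ) (hm0 : 0 < m) (hm1 : m < 1)
    (p : ℝ) (hp : 1 ≤ p) (hpm : d * (1 - m) < 2 * p) :
    ∃ c₀' C₆ : ℝ, 0 < c₀' ∧ 0 < C₆ ∧
      ∀ (Ω : Set (Space d)) (u : ℝ → Space d → ℝ) (u₀ : Space d → ℝ) (T : ℝ),
        IsExtinguishingSol m T Ω u₀ u →
      ∀ (x₀ : Space d) (R : ℝ), 0 < R → closedBall x₀ (6 * R) ⊆ Ω → 0 < ∫ x in ball x₀ R, u₀ x →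
      ∀ t₀ : ℝ, 0 < t₀ →
        t₀ ≤ c₀' * R ^ (2 - d * (1 - m)) * (∫ x in ball x₀ R, u₀ x) ^ (1 - m) →
      ∀ t : ℝ, t₀ / 2 ≤ t →
        t ≤ c₀' * R ^ (2 - d * (1 - m)) * (∫ x in ball x₀ R, u₀ x) ^ (1 - m) →
      ∀ x ∈ ball x₀ R,
        (C₆ * R ^ ((2 - d) / m) *
            ((∫ y in ball x₀ R, u₀ y) * T ^ (-(1 / (1 - m)))) ^ (1 / m) *
            (((∫ y in ball x₀ R, u₀ y ^ p) ^ (1 / p)) ^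
                (2 * p / (2 * p - d * (1 - m))) *
              t₀ ^ (-(2 * p / (2 * p - d * (1 - m)) / (1 - m))) +
              R ^ (-(2 / (1 - m))))⁻¹) * u t₀ x₀ ≤ u t x := by
  obtain ⟨c₀, hc₀, c₁, hc₁, hlower⟩ := exists_lower_bound_rescaled d hm0 hm1
  obtain ⟨C, hC, hupper⟩ := exists_upper_bound_rescaled hd hm0 hm1 hp hpm
  refine ⟨c₀, c₁ / (2 ^ (1 / (1 - m)) * C), hc₀, by positivity, ?_⟩
  intro Ω u u₀ T hu x₀ R hR hball hM t₀ ht₀ ht₀le t htt₀ htle x hx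
  have hT := hu.time_pos
  have hlow := (hlower Ω u u₀ T hu x₀ R hR hball hM t (by linarith) htle).2 x hx
  have hup := hupper Ω u u₀ T hu x₀ R hR hball t₀ ht₀
    (hlower Ω u u₀ T hu x₀ R hR hball hM t₀ ht₀ ht₀le).1
  have hIp := hu.integral_init_rpow_nonneg hR.le (by norm_num) hball p
  have hpow : (t₀ / 2) ^ (1 / (1 - m)) ≤ t ^ (1 / (1 - m)) :=
    rpow_le_rpow (by positivity) htt₀ (one_div_pos.2 (sub_pos.2 hm1)).le
  rw [div_rpow ht₀.le zero_le_two] at hpow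
  set M := ∫ y in ball x₀ R, u₀ y
  set D := ((∫ y in ball x₀ R, u₀ y ^ p) ^ (1 / p)) ^ (2 * p / (2 * p - d * (1 - m))) *
    t₀ ^ (-(2 * p / (2 * p - d * (1 - m)) / (1 - m))) + R ^ (-(2 / (1 - m)))
  have hD : 0 < D := by positivity
  calc c₁ / (2 ^ (1 / (1 - m)) * C) * R ^ ((2 - d) / m) *
          (M * T ^ (-(1 / (1 - m)))) ^ (1 / m) * D⁻¹ * u t₀ x₀
      ≤ c₁ / (2 ^ (1 / (1 - m)) * C) * R ^ ((2 - d) / m) *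
          (M * T ^ (-(1 / (1 - m)))) ^ (1 / m) * D⁻¹ * (C * t₀ ^ (1 / (1 - m)) * D) := by gcongr
    _ = c₁ * R ^ ((2 - d) / m) * (M * T ^ (-(1 / (1 - m)))) ^ (1 / m) *
          (t₀ ^ (1 / (1 - m)) / 2 ^ (1 / (1 - m))) := by field_simp
    _ ≤ c₁ * R ^ ((2 - d) / m) * (M * T ^ (-(1 / (1 - m)))) ^ (1 / m) * t ^ (1 / (1 - m)) := by
        gcongr
    _ ≤ u t x := hlow

lemma one_le_and_lt_two_mul_of_critical {d : ℕ} {m p : ℝ} (hd : 0 < d)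
    (hp₁ : (d - 2 : ℝ) / d < m → p = 1) (hp₂ : m ≤ (d - 2 : ℝ) / d → d * (1 - m) / 2 < p) :
    1 ≤ p ∧ d * (1 - m) < 2 * p := by
  have hd' : (0 : ℝ) < d := Nat.cast_pos.2 hd
  rcases lt_or_ge ((d - 2 : ℝ) / d) m with hm | hm
  · obtain rfl := hp₁ hm
    rw [div_lt_iff₀ hd'] at hm
    exact ⟨le_rfl, by linarith⟩
  · have hp := hp₂ hm
    rw [le_div_iff₀ hd'] at hm
    constructor <;> linarith

/-- **Theorem 5.1: forward, backward and elliptic Harnack inequalities at initial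
times.** Here `m_c = (d-2)/d`, `p_c = d(1-m)/2`, `ϑ_p = 1/(2p - d(1-m))`, and
`t_* = c₀' R^{2-d(1-m)} ‖u₀‖_{L¹(B_R)}^{1-m}`. -/
theorem harnack_initial_times
    (d : ℕ) (hd : 3 ≤ d) (m : ℝ) (hm0 : 0 < m) (hm1 : m < 1) (p : ℝ)
    (hp₁ : (d - 2 : ℝ) / d < m → p = 1)
    (hp₂ : m ≤ (d - 2 : ℝ) / d → d * (1 - m) / 2 < p) :
    ∃ c₀' C₆ : ℝ, 0 < c₀' ∧ 0 < C₆ ∧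
      ∀ (Ω : Set (EuclideanSpace ℝ (Fin d))), IsOpen Ω →
      ∀ (u : ℝ → EuclideanSpace ℝ (Fin d) → ℝ) (u₀ : EuclideanSpace ℝ (Fin d) → ℝ) (T : ℝ),
        0 < T →
        IsFDESol m (Ioo 0 T ×ˢ Ω) u →
        (∀ x ∈ Ω, 0 ≤ u₀ x) →
        LocallyIntegrableOn (fun x => u₀ x ^ p) Ω →
        TakesInit T Ω u u₀ →
        ExtinctAt T Ω u →
      ∀ (x₀ : EuclideanSpace ℝ (Fin d)) (R : ℝ), 0 < R →
        closedBall x₀ (6 * R) ⊆ Ω →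
        0 < ∫ x in ball x₀ R, u₀ x →
      ∀ t₀ : ℝ, 0 < t₀ →
        t₀ ≤ c₀' * R ^ (2 - d * (1 - m)) * (∫ x in ball x₀ R, u₀ x) ^ (1 - m) →
      ∀ θ : ℝ, 0 ≤ θ →
        θ ≤ min (c₀' * R ^ (2 - d * (1 - m)) * (∫ x in ball x₀ R, u₀ x) ^ (1 - m) - t₀)
          (t₀ / 2) →
      ∀ x ∈ ball x₀ R,
        (C₆ * R ^ ((2 - d) / m) *
            ((∫ y in ball x₀ R, u₀ y) * T ^ (-(1 / (1 - m)))) ^ (1 / m) *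
            (((∫ y in ball x₀ R, u₀ y ^ p) ^ (1 / p)) ^
                (2 * p / (2 * p - d * (1 - m))) *
              t₀ ^ (-(2 * p / (2 * p - d * (1 - m)) / (1 - m))) +
              R ^ (-(2 / (1 - m))))⁻¹) * u t₀ x₀ ≤ u (t₀ + θ) x ∧
        (C₆ * R ^ ((2 - d) / m) *
            ((∫ y in ball x₀ R, u₀ y) * T ^ (-(1 / (1 - m)))) ^ (1 / m) *
            (((∫ y in ball x₀ R, u₀ y ^ p) ^ (1 / p)) ^
                (2 * p / (2 * p - d * (1 - m))) *
              t₀ ^ (-(2 * p / (2 * p - d * (1 - m)) / (1 - m))) +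
              R ^ (-(2 / (1 - m))))⁻¹) * u t₀ x₀ ≤ u (t₀ - θ) x := by
  obtain ⟨hp, hpm⟩ := one_le_and_lt_two_mul_of_critical (by lia) hp₁ hp₂
  obtain ⟨c₀, C, hc₀, hC, hharnack⟩ :=
    harnack_initial_times_general d (by lia) m hm0 hm1 p hp hpm
  refine ⟨c₀, C, hc₀, hC, ?_⟩
  intro Ω hΩ u u₀ T hT hu hu₀ _ hinit hext x₀ R hR hball hM t₀ ht₀ ht₀le θ hθ hθle x hx
  obtain ⟨hθ_forward, hθ_backward⟩ := le_min_iff.1 hθle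
  have hbound := hharnack Ω u u₀ T ⟨hΩ, hT, hu, hu₀, hinit, hext⟩ x₀ R hR hball hM t₀ ht₀ ht₀le
  exact ⟨hbound (t₀ + θ) (by linarith) (by linarith) x hx,
    hbound (t₀ - θ) (by linarith) (by linarith) x hx⟩
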